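/- arXiv:2207.01785 — 2 statements merged into one kernel-verified Lean document; each statement's English description precedes it below -/
import Mathlib

section
/- Let R be a commutative Noetherian ring and 𝔞 an ideal of R such that either dim R/𝔞 = 2, or dim R = 3, or ara(𝔞) = 2. Then an R-module M is 𝔞-cofinite if and only if Supp_R M ⊆ V(𝔞) and the R-module Ext^i_R(R/𝔞, M) is finitely generated for i = 0, 1, 2. -/
open CategoryTheory

universe u

/-- The `R`-module `Ext^i_R(N, M)` for two `R`-modules (objects of `ModuleCat R`). -/
noncomputable def extObj {R : Type u} [CommRing R] (N M : ModuleCat.{u} R) (i : ℕ) :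
    ModuleCat.{u} R :=
  ((Ext R (ModuleCat.{u} R) i).obj (Opposite.op N)).obj M

/-- The `R`-module `Ext^i_R(R/𝔞, M)`. -/
noncomputable def extIdeal {R : Type u} [CommRing R] (𝔞 : Ideal R) (i : ℕ)
    (M : ModuleCat.{u} R) : ModuleCat.{u} R :=
  extObj (ModuleCat.of R (R ⧸ 𝔞)) M i

/-- An `R`-module `M` is `𝔞`-cofinite if `Supp_R M ⊆ V(𝔞)` and `Ext^i_R(R/𝔞, M)` is a finitely
generated `R`-module for every `i ≥ 0`. -/
def IsCofinite {R : Type u} [CommRing R] (𝔞 : Ideal R) (M : ModuleCat.{u} R) : Prop :=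
  Module.support R M ⊆ PrimeSpectrum.zeroLocus (𝔞 : Set R) ∧
    ∀ i : ℕ, Module.Finite R (extIdeal 𝔞 i M)

/-- The Krull dimension `dim_R M` of an `R`-module `M`: the Krull dimension of its support,
i.e. the supremum of `dim R/𝔭` over primes `𝔭` in the support of `M`. -/
noncomputable def moduleDim (R : Type u) [CommRing R] (M : Type u) [AddCommGroup M]
    [Module R M] : WithBot ℕ∞ :=
  Order.krullDim (Module.support R M)

/-- An `R`-module `M` is in `FD_{≤n}` if there is a finitely generated submodule `N ⊆ M`
with `dim_R (M/N) ≤ n`. -/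
def MemFD (R : Type u) [CommRing R] (n : ℕ) (M : Type u) [AddCommGroup M] [Module R M] : Prop :=
  ∃ N : Submodule R M, N.FG ∧ moduleDim R (M ⧸ N) ≤ (n : WithBot ℕ∞)

/-- An `R`-module `M` is `𝔞`-torsion if every element is annihilated by some power of `𝔞`. -/
def IsTorsionIdeal {R : Type u} [CommRing R] (𝔞 : Ideal R) (M : Type u) [AddCommGroup M]
    [Module R M] : Prop :=
  ∀ m : M, ∃ n : ℕ, ∀ a ∈ 𝔞 ^ n, a • m = 0

/-- The arithmetic rank of an ideal `𝔞`: the least `n` such that there exist `a₁, …, aₙ ∈ R`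
with `Rad (a₁, …, aₙ) = Rad 𝔞`. -/
noncomputable def arithRank {R : Type u} [CommRing R] (𝔞 : Ideal R) : ℕ :=
  sInf {n : ℕ | ∃ f : Fin n → R, (Ideal.span (Set.range f)).radical = 𝔞.radical}

/-!
Finite generation modulo torsion by powers of one element of a multiplicative set passes along exact
sequences. The sequences `0 → (0 :_M x) → M → xM → 0` and `0 → xM → M → M/xM → 0` turn finiteness
of the first few `Ext^i(R/𝔞, M)` into finiteness of all of them when `𝔞` is generated by two
elements up to radical, and with Noetherian induction on annihilators also when `M` has dimension
at most one.

If `M` has dimension at most two, then a multiplicative set avoiding the finitely many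
two-dimensional primes of the support reduces `M` to dimension one; repeating this in dimension one
shows that `Ext^i(R/𝔞, M)` has zero-dimensional support modulo a finitely generated submodule.
Over the completion at a maximal ideal, that quotient is Artinian. If it were not finitely
generated, a minimal such submodule `B` of it would have prime annihilator, contained by prime
avoidance in a two-dimensional prime `p` of the support of `M`, and some `s ∉ p` would act
surjectively on `B`. The `s`-adic Tate module of `B` is then finitely generated, and this forces
`p` to have dimension at most one.

If `dim R ≤ 3`, dividing out the part of `M` killed by `⋃ₙ (0 : 𝔞ⁿ)` reduces to dimension two.
-/

namespace Cofinite

open Submodule TensorProduct Abelian Pointwise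

section FiniteUpTo

variable {R : Type*} [CommRing R] {S : Submonoid R} {M N P : Type*} [AddCommGroup M] [Module R M]
  [AddCommGroup N] [Module R N] [AddCommGroup P] [Module R P]

/-- `M` is finite up to `S` if some finitely generated submodule `N` and a single `s ∈ S` are such
that `M ⧸ N` is `s`-power torsion. Taking `S = ⊥` recovers finite modules; larger `S` allow
finiteness to be tested after localization. -/
def FiniteUpTo (S : Submonoid R) (M : Type*) [AddCommGroup M] [Module R M] : Prop :=
  ∃ N : Submodule R M, N.FG ∧ ∃ s ∈ S, ∀ m : M, ∃ k : ℕ, s ^ k • m ∈ N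

namespace FiniteUpTo

theorem of_finite [Module.Finite R M] : FiniteUpTo S M :=
  ⟨⊤, Module.Finite.fg_top, 1, S.one_mem, fun _ ↦ ⟨0, trivial⟩⟩

theorem of_pow_smul_eq_zero {s : R} (hs : s ∈ S) (h : ∀ m : M, ∃ k : ℕ, s ^ k • m = 0) :
    FiniteUpTo S M :=
  ⟨⊥, fg_bot, s, hs, h⟩

theorem bot_iff : FiniteUpTo (⊥ : Submonoid R) M ↔ Module.Finite R M := by
  refine ⟨?_, fun _ ↦ .of_finite⟩
  rintro ⟨N, hN, s, hs, h⟩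
  obtain rfl := Submonoid.mem_bot.mp hs
  have : N = ⊤ := eq_top_iff.mpr fun m _ ↦ by simpa using h m
  exact ⟨this ▸ hN⟩

theorem mono {T : Submonoid R} (hST : S ≤ T) (h : FiniteUpTo S M) : FiniteUpTo T M := by
  obtain ⟨N, hN, s, hs, h⟩ := h
  exact ⟨N, hN, s, hST hs, h⟩

theorem of_surjective (f : M →ₗ[R] N) (hf : Function.Surjective f) (h : FiniteUpTo S M) :
    FiniteUpTo S N := by
  obtain ⟨L, hL, s, hs, h⟩ := h
  refine ⟨L.map f, hL.map f, s, hs, fun n ↦ ?_⟩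
  obtain ⟨m, rfl⟩ := hf n
  obtain ⟨k, hk⟩ := h m
  exact ⟨k, by rw [← map_smul]; exact mem_map_of_mem hk⟩

theorem congr (e : M ≃ₗ[R] N) : FiniteUpTo S M ↔ FiniteUpTo S N :=
  ⟨of_surjective e.toLinearMap e.surjective, of_surjective e.symm.toLinearMap e.symm.surjective⟩

variable [IsNoetherianRing R]

theorem of_exact {f : M →ₗ[R] N} {g : N →ₗ[R] P} (hfg : Function.Exact f g)
    (hM : FiniteUpTo S M) (hP : FiniteUpTo S P) : FiniteUpTo S N := by
  classical
  obtain ⟨L, hL, s, hs, hLs⟩ := hM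
  obtain ⟨K, hK, t, ht, hKt⟩ := hP
  have : Module.Finite R K := .of_fg hK
  obtain ⟨K', hK', hK'map⟩ : ∃ K' : Submodule R N, K'.FG ∧ K'.map g = K ⊓ LinearMap.range g := by
    obtain ⟨T, hT⟩ := FG.of_le hK (inf_le_left : K ⊓ LinearMap.range g ≤ K)
    obtain ⟨T', -, rfl⟩ := Finset.subset_set_image_iff (s := Set.univ) (f := g) (t := T).mp <| by
      rw [Set.image_univ]
      exact fun x hx ↦ (hT.le (subset_span hx)).2
    exact ⟨span R T', ⟨T', rfl⟩, by rw [map_span, ← hT, Finset.coe_image]⟩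
  refine ⟨L.map f ⊔ K', (hL.map f).sup hK', s * t, S.mul_mem hs ht, fun n ↦ ?_⟩
  obtain ⟨k, hk⟩ := hKt (g n)
  obtain ⟨n', hn', hgn'⟩ : t ^ k • g n ∈ K'.map g :=
    hK'map ▸ ⟨hk, t ^ k • n, map_smul g _ _⟩
  obtain ⟨m, hm⟩ := (hfg (t ^ k • n - n')).mp (by rw [map_sub, map_smul, hgn', sub_self])
  obtain ⟨l, hl⟩ := hLs m
  have key : s ^ l • t ^ k • n ∈ L.map f ⊔ K' := by
    have := add_mem (mem_sup_left (mem_map_of_mem hl) : _ ∈ L.map f ⊔ K')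
      (mem_sup_right (K'.smul_mem (s ^ l) hn'))
    rwa [map_smul, hm, ← smul_add, sub_add_cancel] at this
  refine ⟨k + l, ?_⟩
  have : (s * t) ^ (k + l) • n = (s ^ k * t ^ l) • s ^ l • t ^ k • n := by
    rw [smul_smul, smul_smul]
    ring_nf
  exact this ▸ smul_mem _ _ key

theorem of_injective (f : M →ₗ[R] N) (hf : Function.Injective f) (h : FiniteUpTo S N) :
    FiniteUpTo S M :=
  of_exact (f := (0 : PUnit →ₗ[R] M)) ((LinearMap.exact_zero_iff_injective _ f).mpr hf)
    .of_finite h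

theorem of_submodule_quotient (N : Submodule R M) (hN : FiniteUpTo S N)
    (hQ : FiniteUpTo S (M ⧸ N)) : FiniteUpTo S M :=
  of_exact (LinearMap.exact_subtype_mkQ N) hN hQ

theorem pi {n : ℕ} (h : FiniteUpTo S M) : FiniteUpTo S (Fin n → M) := by
  induction n with
  | zero => exact .of_finite
  | succ n ih =>
    refine (congr (Fin.consLinearEquiv R fun _ ↦ M)).mp ?_
    exact of_exact (f := LinearMap.inl R M (Fin n → M)) Function.Exact.inl_snd h ih

theorem ker_comp (f : M →ₗ[R] N) (g : N →ₗ[R] P) (hf : FiniteUpTo S (LinearMap.ker f))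
    (hg : FiniteUpTo S (LinearMap.ker g)) : FiniteUpTo S (LinearMap.ker (g ∘ₗ f)) := by
  refine of_exact (f := inclusion (LinearMap.ker_le_ker_comp f g))
    (g := f.restrict (q := LinearMap.ker g) fun x hx ↦ hx) (fun x ↦ ⟨fun hx ↦ ?_, ?_⟩) hf hg
  · exact ⟨⟨x, congrArg Subtype.val hx⟩, rfl⟩
  · rintro ⟨y, rfl⟩
    exact Subtype.ext y.2

end FiniteUpTo

end FiniteUpTo

section Ext

/-- The module `Ext^i_R(N, M)`, in the model of `Ext` by morphisms in the derived category, which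
provides long exact sequences and functoriality along exact functors. -/
abbrev ExtModule (R : Type u) [CommRing R] (N M : Type u) [AddCommGroup N] [Module R N]
    [AddCommGroup M] [Module R M] (i : ℕ) : Type u :=
  Ext.{u} (ModuleCat.of R N) (ModuleCat.of R M) i

variable {R : Type u} [CommRing R] (N : Type u) [AddCommGroup N] [Module R N]
  {M P Q : Type u} [AddCommGroup M] [Module R M] [AddCommGroup P] [Module R P]
  [AddCommGroup Q] [Module R Q]

/-- The linear map `Ext^i_R(N, M) → Ext^i_R(N, P)` induced by `f : M → P`. -/
noncomputable abbrev extMap (i : ℕ) (f : M →ₗ[R] P) : ExtModule R N M i →ₗ[R] ExtModule R N P i :=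
  (Ext.mk₀ (ModuleCat.ofHom f)).postcompOfLinear R (ModuleCat.of R N) (add_zero i)

theorem extMap_comp (i : ℕ) (f : M →ₗ[R] P) (g : P →ₗ[R] Q) :
    extMap N i (g ∘ₗ f) = extMap N i g ∘ₗ extMap N i f := by
  ext x
  simp [ModuleCat.ofHom_comp, ← Ext.mk₀_comp_mk₀]

theorem extMap_lsmul (i : ℕ) (r : R) :
    extMap N i (LinearMap.lsmul R M r) = LinearMap.lsmul R (ExtModule R N M i) r := by
  ext x
  exact (Ext.smul_eq_comp_mk₀ x r).symm

variable {N} in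
theorem smul_ext_eq_zero {r : R} (hr : r ∈ Module.annihilator R N) {i : ℕ}
    (x : ExtModule R N M i) : r • x = 0 := by
  have smul_id : r • 𝟙 (ModuleCat.of R N) = 0 := by
    ext n
    exact Module.mem_annihilator.mp hr n
  calc r • x = (Ext.mk₀ (r • 𝟙 (ModuleCat.of R N))).comp x (zero_add i) := by simp [Ext.mk₀_smul]
    _ = 0 := by rw [smul_id, Ext.mk₀_zero, Ext.zero_comp]

section Exact

variable {N} {f : M →ₗ[R] P} {g : P →ₗ[R] Q} (i : ℕ)

theorem extMap_zero_injective (hf : Function.Injective f) :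
    Function.Injective (extMap N 0 f) := by
  have : Mono (ModuleCat.ofHom f) := (ModuleCat.mono_iff_injective _).mpr hf
  exact Ext.postcomp_mk₀_injective_of_mono _ (ModuleCat.ofHom f)

variable (N) in
theorem extMap_exact (hf : Function.Injective f) (hfg : Function.Exact f g)
    (hg : Function.Surjective g) : Function.Exact (extMap N i f) (extMap N i g) :=
  (ShortComplex.ab_exact_iff_function_exact _).mp <| Ext.covariant_sequence_exact₂' _
    (ModuleCat.shortComplex_shortExact
      (ModuleCat.shortComplexOfCompEqZero f g hfg.linearMap_comp_eq_zero) hfg hf hg) i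

variable (N) in
theorem exists_ext_connecting (hf : Function.Injective f) (hfg : Function.Exact f g)
    (hg : Function.Surjective g) :
    ∃ δ : ExtModule R N Q i →ₗ[R] ExtModule R N M (i + 1),
      Function.Exact (extMap N i g) δ ∧ Function.Exact δ (extMap N (i + 1) f) := by
  have short_exact := ModuleCat.shortComplex_shortExact
    (ModuleCat.shortComplexOfCompEqZero f g hfg.linearMap_comp_eq_zero) hfg hf hg
  exact ⟨short_exact.extClass.postcompOfLinear R (ModuleCat.of R N) rfl,
    (ShortComplex.ab_exact_iff_function_exact _).mp
      (Ext.covariant_sequence_exact₃' _ short_exact i (i + 1) rfl),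
    (ShortComplex.ab_exact_iff_function_exact _).mp
      (Ext.covariant_sequence_exact₁' _ short_exact i (i + 1) rfl)⟩

end Exact

theorem exact_precomp_extClass {S : ShortComplex (ModuleCat.{u} R)} (hS : S.ShortExact)
    (Y : ModuleCat.{u} R) (i : ℕ) :
    Function.Exact ((Ext.mk₀ S.f).precompOfLinear R Y (zero_add i))
      (hS.extClass.precompOfLinear R Y (add_comm 1 i)) :=
  (ShortComplex.ab_exact_iff_function_exact _).mp
    (Ext.contravariant_sequence_exact₁' hS Y i (i + 1) (add_comm 1 i))

variable {N} in
/-- The isomorphism `Ext^i_R(N, M) ≃ Ext^i_R(N', M')` induced by `N ≃ N'` and `M ≃ M'`. -/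
noncomputable def extCongr {N' M' : Type u} [AddCommGroup N'] [Module R N'] [AddCommGroup M']
    [Module R M'] (eN : N ≃ₗ[R] N') (eM : M ≃ₗ[R] M') (i : ℕ) :
    ExtModule R N M i ≃ₗ[R] ExtModule R N' M' i :=
  LinearEquiv.ofLinearMap
    ((Ext.mk₀ (ModuleCat.ofHom eN.symm.toLinearMap)).precompOfLinear R _ (zero_add i) ∘ₗ
      extMap N i eM.toLinearMap)
    ((Ext.mk₀ (ModuleCat.ofHom eN.toLinearMap)).precompOfLinear R _ (zero_add i) ∘ₗ
      extMap N' i eM.symm.toLinearMap)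
    (by ext x; simp [← ModuleCat.ofHom_comp])
    (by ext x; simp [← ModuleCat.ofHom_comp])

variable (M) in
/-- The isomorphism `Hom_R(R/𝔞, M) ≃ (0 :_M 𝔞)` given by evaluation at `1`. -/
noncomputable def homQuotientEquiv (𝔞 : Ideal R) :
    (R ⧸ 𝔞 →ₗ[R] M) ≃ₗ[R] torsionBySet R M (𝔞 : Set R) :=
  LinearEquiv.ofBijective
    ((LinearMap.applyₗ (1 : R ⧸ 𝔞)).codRestrict (torsionBySet R M (𝔞 : Set R)) fun f ↦ by
      refine (mem_torsionBySet_iff _ _).mpr ?_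
      rintro ⟨a, ha⟩
      have : a • (1 : R ⧸ 𝔞) = 0 := by
        rw [Algebra.smul_def, mul_one]
        exact Ideal.Quotient.eq_zero_iff_mem.mpr ha
      simp [← map_smul, this]) <| by
    refine ⟨fun f g h ↦ ?_, fun ⟨m, hm⟩ ↦ ⟨liftQ 𝔞 (LinearMap.toSpanSingleton R M m) ?_, ?_⟩⟩
    · refine linearMap_qext _ (LinearMap.ext_ring ?_)
      exact congrArg Subtype.val h
    · exact fun a ha ↦ (mem_torsionBySet_iff _ m).mp hm ⟨a, ha⟩
    · exact Subtype.ext (one_smul R m)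

variable (M) in
/-- The isomorphism `Ext^0_R(R/𝔞, M) ≃ (0 :_M 𝔞)`. -/
noncomputable def extZeroEquiv (𝔞 : Ideal R) :
    ExtModule R (R ⧸ 𝔞) M 0 ≃ₗ[R] torsionBySet R M (𝔞 : Set R) :=
  (Ext.linearEquiv₀.trans ModuleCat.homLinearEquiv).trans (homQuotientEquiv M 𝔞)

end Ext

section BaseChange

variable {R : Type u} [CommRing R] (A : Type u) [CommRing A] [Algebra R A]

/-- Extension of scalars `A ⊗[R] -`, phrased with the left `A`-module structure that the
`IsBaseChange` API uses. -/
noncomputable abbrev baseChangeFunctor : ModuleCat.{u} R ⥤ ModuleCat.{u} A where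
  obj M := ModuleCat.of A (A ⊗[R] M)
  map f := ModuleCat.ofHom (f.hom.baseChange A)
  map_id M := by
    ext : 1
    simp
  map_comp f g := by
    ext : 1
    simp [LinearMap.baseChange_comp]

instance : (baseChangeFunctor (R := R) A).Additive where
  map_add {M N f g} := by
    ext : 1
    exact LinearMap.baseChange_add f.hom g.hom

variable [Module.Flat R A]

theorem baseChangeFunctor_map_exact (S : ShortComplex (ModuleCat.{u} R)) (hS : S.Exact) :
    (S.map (baseChangeFunctor A)).Exact := by
  rw [ShortComplex.ShortExact.moduleCat_exact_iff_function_exact] at hS ⊢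
  exact Module.Flat.lTensor_exact A hS

theorem baseChangeFunctor_exact :
    Limits.PreservesFiniteLimits (baseChangeFunctor (R := R) A) ∧
      Limits.PreservesFiniteColimits (baseChangeFunctor (R := R) A) :=
  ((Functor.exact_tfae _).out 1 3).mp (baseChangeFunctor_map_exact A)

instance : Limits.PreservesFiniteLimits (baseChangeFunctor (R := R) A) :=
  (baseChangeFunctor_exact A).1

instance : Limits.PreservesFiniteColimits (baseChangeFunctor (R := R) A) :=
  (baseChangeFunctor_exact A).2

noncomputable local instance (N M : Type u) [AddCommGroup N] [Module A N] [AddCommGroup M]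
    [Module A M] (i : ℕ) : Module R (ExtModule A N M i) := .compHom _ (algebraMap R A)

local instance (N M : Type u) [AddCommGroup N] [Module A N] [AddCommGroup M] [Module A M] (i : ℕ) :
    IsScalarTower R A (ExtModule A N M i) := .of_algebraMap_smul fun _ _ ↦ rfl

variable (N M : Type u) [AddCommGroup N] [Module R N] [AddCommGroup M] [Module R M]

variable (R) in
/-- The comparison map `Ext^i_R(N, M) → Ext^i_A(A ⊗ N, A ⊗ M)` for a flat `R`-algebra `A`. -/
noncomputable def extBaseChange (i : ℕ) :
    ExtModule R N M i →ₗ[R] ExtModule A (A ⊗[R] N) (A ⊗[R] M) i where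
  __ := (baseChangeFunctor A).mapExtAddHom (ModuleCat.of R N) (ModuleCat.of R M) i
  map_smul' r x := by
    have map_smul_id : (baseChangeFunctor A).map (r • 𝟙 (ModuleCat.of R M)) =
        algebraMap R A r • 𝟙 (ModuleCat.of A (A ⊗[R] M)) := by
      ext : 1
      refine TensorProduct.AlgebraTensorModule.curry_injective ?_
      ext m
      simp [Algebra.algebraMap_eq_smul_one]
    change Ext.mapExactFunctor (baseChangeFunctor A) (r • x) =
      algebraMap R A r • Ext.mapExactFunctor (baseChangeFunctor A) x
    rw [Ext.smul_eq_comp_mk₀, Ext.mapExactFunctor_comp, Ext.mapExactFunctor_mk₀,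
      Ext.smul_eq_comp_mk₀, map_smul_id]

theorem isBaseChange_ext_zero [Module.FinitePresentation R N] :
    IsBaseChange A (extBaseChange R A N M 0) := by
  let e : ExtModule R N M 0 ≃ₗ[R] (N →ₗ[R] M) := Ext.linearEquiv₀.trans ModuleCat.homLinearEquiv
  let e' : ExtModule A (A ⊗[R] N) (A ⊗[R] M) 0 ≃ₗ[A] (A ⊗[R] N →ₗ[A] A ⊗[R] M) :=
    Ext.linearEquiv₀.trans ModuleCat.homLinearEquiv
  refine (IsBaseChange.iff_of_equiv_comm e e' (f' := LinearMap.baseChangeHom R A N M) ?_).mpr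
    (Module.FinitePresentation.isBaseChange_map R N M A)
  ext x : 1
  obtain ⟨f, rfl⟩ := e.symm.surjective x
  have : extBaseChange R A N M 0 (e.symm f) = e'.symm (f.baseChange A) :=
    Ext.mapExactFunctor_mk₀ ..
  simp [this]

/-- Dimension shifting along a finite free cover `F → N`, whose kernel `K` has the property by
induction: both rows `Ext^i(F) → Ext^i(K) → Ext^{i+1}(N) → 0` are exact. -/
theorem isBaseChange_ext [IsNoetherianRing R] [Module.Finite R N] (i : ℕ) :
    IsBaseChange A (extBaseChange R A N M i) := by
  induction i generalizing N with
  | zero =>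
    have := Module.finitePresentation_of_finite R N
    exact isBaseChange_ext_zero A N M
  | succ i ih =>
    obtain ⟨F, _, _, _, _, f, surj⟩ := Module.exists_finite_presentation R N
    have exact_ker := LinearMap.shortExact_shortComplexKer surj
    have exact_ker' := exact_ker.map_of_exact (baseChangeFunctor A)
    have : Projective (f.shortComplexKer.map (baseChangeFunctor A)).X₂ :=
      inferInstanceAs (Projective (ModuleCat.of A (A ⊗[R] F)))
    let Y := ModuleCat.of R M
    let Y' := ModuleCat.of A (A ⊗[R] M)
    refine IsBaseChange.of_right_exact A (extBaseChange R A F M i)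
      (extBaseChange R A (LinearMap.ker f) M i) (extBaseChange R A N M (i + 1))
      (f := (Ext.mk₀ f.shortComplexKer.f).precompOfLinear R Y (zero_add i))
      (g := exact_ker.extClass.precompOfLinear R Y (add_comm 1 i))
      (f' := (Ext.mk₀ (f.shortComplexKer.map (baseChangeFunctor A)).f).precompOfLinear A Y'
        (zero_add i))
      (g' := exact_ker'.extClass.precompOfLinear A Y' (add_comm 1 i)) ?_ ?_ (ih F) (ih _)
      (exact_precomp_extClass exact_ker Y i)
      (precomp_extClass_surjective_of_projective_X₂ Y exact_ker i)
      (exact_precomp_extClass exact_ker' Y' i)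
      (precomp_extClass_surjective_of_projective_X₂ Y' exact_ker' i)
    · ext x
      exact (Ext.mapExactFunctor_comp _ _ x (zero_add i)).trans
        (by rw [Ext.mapExactFunctor_mk₀]; rfl)
    · ext x
      exact (Ext.mapExactFunctor_comp _ _ x (add_comm 1 i)).trans
        (by rw [Ext.mapExactFunctor_extClass]; rfl)

variable {N M} [IsNoetherianRing R] [Module.Finite R N]

theorem subsingleton_tensorProduct_ext (i : ℕ) [Subsingleton (A ⊗[R] M)] :
    Subsingleton (A ⊗[R] ExtModule R N M i) := by
  suffices Subsingleton (ExtModule A (A ⊗[R] N) (A ⊗[R] M) i) from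
    (isBaseChange_ext A N M i).equiv.subsingleton
  refine subsingleton_of_forall_eq 0 fun x ↦ ?_
  rw [← Ext.comp_mk₀_id x, (Limits.IsZero.iff_id_eq_zero _).mp (ModuleCat.isZero_of_subsingleton _)]
  simp

variable (M) in
/-- The isomorphism `A ⊗ Ext^i_R(R/𝔞, M) ≃ Ext^i_A(A/𝔞A, A ⊗ M)` for a flat `R`-algebra `A`. -/
noncomputable def extQuotientBaseChangeEquiv (𝔞 : Ideal R) (i : ℕ) :
    A ⊗[R] ExtModule R (R ⧸ 𝔞) M i ≃ₗ[A]
      ExtModule A (A ⧸ 𝔞.map (algebraMap R A)) (A ⊗[R] M) i :=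
  (isBaseChange_ext A (R ⧸ 𝔞) M i).equiv.trans
    (extCongr (Ideal.qoutMapEquivTensorQout A).symm (.refl A _) i)

end BaseChange

section Comparison

variable {R : Type u} [CommRing R] {X : ModuleCat.{u} R} (P : ProjectiveResolution X)
  (Y : ModuleCat.{u} R) (n : ℕ)

theorem extMk_zero_eq_zero_iff {Y : ModuleCat.{u} R} (f : P.complex.X 0 ⟶ Y)
    (hf : P.complex.d 1 0 ≫ f = 0) : P.extMk f 1 rfl hf = 0 ↔ f = 0 := by
  refine ⟨fun h ↦ ?_, fun h ↦ by simp [h]⟩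
  rw [← P.extEquivCohomologyClass.apply_eq_iff_eq, P.extEquivCohomologyClass_extMk,
    P.extEquivCohomologyClass_zero, CochainComplex.HomComplex.CohomologyClass.mk_eq_zero_iff,
    CochainComplex.HomComplex.Cocycle.toSingleMk_mem_coboundaries_iff _ _ _ _ _ 1 (by lia)] at h
  obtain ⟨g, hg⟩ := h
  have : Limits.IsZero (P.cochainComplex.X 1) := P.cochainComplex.isZero_of_isStrictlyLE 0 1
  rw [this.eq_of_src g 0, Limits.comp_zero, eq_comm] at hg
  simpa using hg

theorem extMk_eq_zero_iff_exists_prev {Y : ModuleCat.{u} R} {n m : ℕ} (f : P.complex.X n ⟶ Y)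
    (hm : n + 1 = m) (hf : P.complex.d m n ≫ f = 0) : P.extMk f m hm hf = 0 ↔
      ∃ g : P.complex.X ((ComplexShape.up ℕ).prev n) ⟶ Y, P.complex.d n _ ≫ g = f := by
  subst hm
  cases n with
  | zero =>
    rw [extMk_zero_eq_zero_iff]
    simp [eq_comm]
  | succ n =>
    rw [CochainComplex.prev_nat_succ]
    exact P.extMk_eq_zero_iff f _ rfl hf n rfl

theorem smul_extMk {Y : ModuleCat.{u} R} {n m : ℕ} (r : R) (f : P.complex.X n ⟶ Y)
    (hm : n + 1 = m) (hf : P.complex.d m n ≫ f = 0) :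
    r • P.extMk f m hm hf = P.extMk (r • f) m hm (by simp [hf]) := by
  rw [Ext.smul_eq_comp_mk₀, P.extMk_comp_mk₀]
  simp

/-- The map sending a cocycle of `Hom(P, Y)` to its class in `Ext^n(X, Y)`, for a projective
resolution `P` of `X`. -/
noncomputable def cocycleToExt :
    LinearMap.ker ((P.complex.linearYonedaObj R Y).sc n).g.hom →ₗ[R] Abelian.Ext X Y n where
  toFun f := P.extMk f.1 _ (CochainComplex.next ℕ n).symm f.2
  map_add' _ _ := (P.add_extMk ..).symm
  map_smul' r f := (smul_extMk P r f.1 _ f.2).symm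

theorem cocycleToExt_surjective : Function.Surjective (cocycleToExt P Y n) := fun x ↦ by
  obtain ⟨f, hf, rfl⟩ := P.extMk_surjective x _ (CochainComplex.next ℕ n).symm
  exact ⟨⟨f, hf⟩, rfl⟩

theorem ker_cocycleToExt : LinearMap.ker (cocycleToExt P Y n) =
    LinearMap.range ((P.complex.linearYonedaObj R Y).sc n).moduleCatToCycles := by
  ext ⟨f, hf⟩
  refine (extMk_eq_zero_iff_exists_prev P f (CochainComplex.next ℕ n).symm hf).trans
    (exists_congr fun g ↦ ?_)
  exact ⟨fun h ↦ Subtype.ext h, fun h ↦ congrArg Subtype.val h⟩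

/-- The two models of `Ext` agree: left derived functors of `Hom(-, Y)` on the left, morphisms
in the derived category on the right. -/
noncomputable def extObjEquiv (N M : ModuleCat.{u} R) (i : ℕ) :
    extObj N M i ≃ₗ[R] Abelian.Ext N M i :=
  ((projectiveResolution N).isoExt i M ≪≫ ShortComplex.moduleCatHomologyIso _).toLinearEquiv.trans
    ((quotEquivOfEq _ _ (ker_cocycleToExt ..).symm).trans
      (LinearMap.quotKerEquivOfSurjective _ (cocycleToExt_surjective _ M i)))

end Comparison

section FiniteUpToExt

variable {R : Type u} [CommRing R] [IsNoetherianRing R] {S : Submonoid R}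
  {N : Type u} [AddCommGroup N] [Module R N]
  {M P Q : Type u} [AddCommGroup M] [Module R M] [AddCommGroup P] [Module R P]
  [AddCommGroup Q] [Module R Q]

section

variable [Module.Finite R N]

theorem exists_smul_ext_eq_zero (hM : ∀ m : M, ∃ s ∈ S, s • m = 0) {i : ℕ}
    (x : ExtModule R N M i) : ∃ s ∈ S, s • x = 0 := by
  have : Subsingleton (LocalizedModule S M) := LocalizedModule.subsingleton_iff.mpr hM
  have : Subsingleton (Localization S ⊗[R] M) :=
    (LocalizedModule.equivTensorProduct S M).symm.subsingleton
  have : Subsingleton (Localization S ⊗[R] ExtModule R N M i) :=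
    subsingleton_tensorProduct_ext (Localization S) i
  exact LocalizedModule.subsingleton_iff.mp
    (LocalizedModule.equivTensorProduct S (ExtModule R N M i)).subsingleton x

theorem support_ext_subset (i : ℕ) :
    Module.support R (ExtModule R N M i) ⊆ Module.support R M := by
  intro p hp
  by_contra h
  rw [Module.notMem_support_iff'] at h
  exact Module.notMem_support_iff'.mpr (exists_smul_ext_eq_zero (S := p.asIdeal.primeCompl) h) hp

theorem FiniteUpTo.ext (h : FiniteUpTo S M) (i : ℕ) : FiniteUpTo S (ExtModule R N M i) := by
  obtain ⟨L, hL, s, hs, hsL⟩ := h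
  have : Module.Finite R L := .of_fg hL
  have : Module.Finite R (ExtModule R N L i) := ModuleCat.finite_ext ..
  refine .of_exact (extMap_exact N i L.injective_subtype (LinearMap.exact_subtype_mkQ L)
    L.mkQ_surjective) .of_finite (.of_pow_smul_eq_zero hs fun x ↦ ?_)
  have torsion (z : M ⧸ L) : ∃ t ∈ Submonoid.powers s, t • z = 0 := by
    obtain ⟨m, rfl⟩ := L.mkQ_surjective z
    obtain ⟨k, hk⟩ := hsL m
    exact ⟨s ^ k, ⟨k, rfl⟩, (Quotient.mk_eq_zero L).mpr hk⟩
  obtain ⟨_, ⟨k, rfl⟩, hk⟩ := exists_smul_ext_eq_zero torsion x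
  exact ⟨k, hk⟩

end

variable {f : M →ₗ[R] P} {g : P →ₗ[R] Q} (i : ℕ)

namespace FiniteUpTo

theorem ext_middle (hf : Function.Injective f) (hfg : Function.Exact f g)
    (hg : Function.Surjective g) (hM : FiniteUpTo S (ExtModule R N M i))
    (hQ : FiniteUpTo S (ExtModule R N Q i)) : FiniteUpTo S (ExtModule R N P i) :=
  .of_exact (extMap_exact N i hf hfg hg) hM hQ

theorem ext_right (hf : Function.Injective f) (hfg : Function.Exact f g)
    (hg : Function.Surjective g) (hP : FiniteUpTo S (ExtModule R N P i))
    (hM : FiniteUpTo S (ExtModule R N M (i + 1))) : FiniteUpTo S (ExtModule R N Q i) := by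
  obtain ⟨δ, exact_δ, -⟩ := exists_ext_connecting N i hf hfg hg
  exact .of_exact exact_δ hP hM

theorem ext_left_succ (hf : Function.Injective f) (hfg : Function.Exact f g)
    (hg : Function.Surjective g) (hQ : FiniteUpTo S (ExtModule R N Q i))
    (hP : FiniteUpTo S (ExtModule R N P (i + 1))) : FiniteUpTo S (ExtModule R N M (i + 1)) := by
  obtain ⟨δ, -, δ_exact⟩ := exists_ext_connecting N i hf hfg hg
  exact .of_exact δ_exact hQ hP

theorem ext_left_zero (hf : Function.Injective f) (hP : FiniteUpTo S (ExtModule R N P 0)) :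
    FiniteUpTo S (ExtModule R N M 0) :=
  hP.of_injective _ (extMap_zero_injective hf)

variable {i}

omit [IsNoetherianRing R] in
theorem ext_congr (e : M ≃ₗ[R] P) :
    FiniteUpTo S (ExtModule R N M i) ↔ FiniteUpTo S (ExtModule R N P i) :=
  FiniteUpTo.congr (extCongr (.refl R N) e i)

omit [IsNoetherianRing R] in
theorem ext_zero_iff {𝔞 : Ideal R} : FiniteUpTo S (ExtModule R (R ⧸ 𝔞) M 0) ↔
    FiniteUpTo S (torsionBySet R M (𝔞 : Set R)) :=
  FiniteUpTo.congr (extZeroEquiv M 𝔞)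

theorem ext_of_submodule_quotient (L : Submodule R M) (hL : FiniteUpTo S (ExtModule R N L i))
    (hQ : FiniteUpTo S (ExtModule R N (M ⧸ L) i)) : FiniteUpTo S (ExtModule R N M i) :=
  .ext_middle i L.injective_subtype (LinearMap.exact_subtype_mkQ L) L.mkQ_surjective hL hQ

theorem ext_quotient_of_fg [Module.Finite R N] {L : Submodule R M} (hL : L.FG)
    (h : FiniteUpTo S (ExtModule R N M i)) : FiniteUpTo S (ExtModule R N (M ⧸ L) i) := by
  have : Module.Finite R L := .of_fg hL
  exact .ext_right i L.injective_subtype (LinearMap.exact_subtype_mkQ L) L.mkQ_surjective h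
    (.ext .of_finite _)

end FiniteUpTo

end FiniteUpToExt

section QuotSMulTop

variable {R : Type u} [CommRing R] {M : Type u} [AddCommGroup M] [Module R M] (x : R)

/-- Multiplication by `x` as a linear map `M → xM`. -/
def toSMulTop (M : Type*) [AddCommGroup M] [Module R M] : M →ₗ[R] (x • ⊤ : Submodule R M) :=
  (LinearMap.lsmul R M x).codRestrict _ fun m ↦ smul_mem_pointwise_smul m x ⊤ trivial

theorem toSMulTop_surjective : Function.Surjective (toSMulTop x M) := by
  rintro ⟨_, m, -, rfl⟩
  exact ⟨m, rfl⟩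

theorem exact_torsionBy_toSMulTop :
    Function.Exact (torsionBy R M x).subtype (toSMulTop x M) := fun m ↦ by
  rw [Subtype.ext_iff]
  exact ⟨fun hm ↦ ⟨⟨m, hm⟩, rfl⟩, by rintro ⟨m, rfl⟩; exact m.2⟩

theorem subtype_comp_toSMulTop :
    (x • ⊤ : Submodule R M).subtype ∘ₗ toSMulTop x M = LinearMap.lsmul R M x := rfl

variable [IsNoetherianRing R] {S : Submonoid R} {N : Type u} [AddCommGroup N] [Module R N] {i : ℕ}

namespace FiniteUpTo

variable {x}

theorem ext_quotSMulTop (h : FiniteUpTo S (ExtModule R N M i))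
    (h' : FiniteUpTo S (ExtModule R N M (i + 1)))
    (hx : FiniteUpTo S (ExtModule R N (torsionBy R M x) (i + 2))) :
    FiniteUpTo S (ExtModule R N (QuotSMulTop x M) i) :=
  .ext_right i (injective_subtype _) (LinearMap.exact_subtype_mkQ _) (mkQ_surjective _) h <|
    .ext_right (i + 1) (injective_subtype _) (exact_torsionBy_toSMulTop x)
      (toSMulTop_surjective x) h' hx

theorem ext_torsionBy_zero (h : FiniteUpTo S (ExtModule R N M 0)) :
    FiniteUpTo S (ExtModule R N (torsionBy R M x) 0) :=
  h.ext_left_zero (injective_subtype _)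

theorem ext_torsionBy_one (h : FiniteUpTo S (ExtModule R N M 0))
    (h' : FiniteUpTo S (ExtModule R N M 1)) :
    FiniteUpTo S (ExtModule R N (torsionBy R M x) 1) :=
  .ext_left_succ 0 (injective_subtype _) (exact_torsionBy_toSMulTop x)
    (toSMulTop_surjective x) (h.ext_left_zero (injective_subtype _)) h'

/-- Multiplication by `x` on `Ext^i(N, M)` factors as
`Ext^i(N, M) → Ext^i(N, xM) → Ext^i(N, M)`. -/
theorem torsionBy_ext (hx : FiniteUpTo S (ExtModule R N (torsionBy R M x) i))
    (hQ : ∀ j, i = j + 1 → FiniteUpTo S (ExtModule R N (QuotSMulTop x M) j)) :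
    FiniteUpTo S (torsionBy R (ExtModule R N M i) x) := by
  change FiniteUpTo S (LinearMap.ker (LinearMap.lsmul R (ExtModule R N M i) x))
  rw [← extMap_lsmul, ← subtype_comp_toSMulTop, extMap_comp]
  refine .ker_comp _ _ ?_ ?_
  · rw [LinearMap.exact_iff.mp (extMap_exact N i (injective_subtype _)
      (exact_torsionBy_toSMulTop (M := M) x) (toSMulTop_surjective x))]
    exact hx.of_surjective _ (LinearMap.surjective_rangeRestrict _)
  · cases i with
    | zero =>
      rw [LinearMap.ker_eq_bot.mpr (extMap_zero_injective (injective_subtype _))]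
      exact .of_finite
    | succ j =>
      obtain ⟨δ, -, δ_exact⟩ := exists_ext_connecting N j
        (injective_subtype (x • ⊤ : Submodule R M)) (LinearMap.exact_subtype_mkQ _)
        (mkQ_surjective _)
      rw [LinearMap.exact_iff.mp δ_exact]
      exact (hQ j rfl).of_surjective _ (LinearMap.surjective_rangeRestrict _)

theorem ext_of_torsionBy_of_quotSMulTop (hxN : x ∈ Module.annihilator R N)
    (hx : FiniteUpTo S (ExtModule R N (torsionBy R M x) i))
    (hQ : ∀ j, i = j + 1 → FiniteUpTo S (ExtModule R N (QuotSMulTop x M) j)) :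
    FiniteUpTo S (ExtModule R N M i) :=
  (torsionBy_ext hx hQ).of_surjective (Submodule.subtype _)
    fun y ↦ ⟨⟨y, smul_ext_eq_zero hxN y⟩, rfl⟩

end FiniteUpTo

end QuotSMulTop

section BaseChangeFinite

variable {R A : Type*} [CommRing R] [CommRing A] [Algebra R A] {M : Type*} [AddCommGroup M]
  [Module R M]

theorem baseChange_subtype_surjective_iff {N : Submodule R M} :
    Function.Surjective (N.subtype.baseChange A) ↔ Subsingleton (A ⊗[R] (M ⧸ N)) := by
  have exact := lTensor_exact A (LinearMap.exact_subtype_mkQ N) N.mkQ_surjective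
  have surjective := LinearMap.lTensor_surjective A N.mkQ_surjective
  refine ⟨fun h ↦ subsingleton_of_forall_eq 0 fun z ↦ ?_,
    fun _ z ↦ (exact z).mp (Subsingleton.elim ..)⟩
  obtain ⟨w, rfl⟩ := surjective z
  exact (exact w).mpr (h w)

theorem FiniteUpTo.finite_baseChange {S : Submonoid R} (hS : ∀ s ∈ S, IsUnit (algebraMap R A s))
    (h : FiniteUpTo S M) : Module.Finite A (A ⊗[R] M) := by
  obtain ⟨N, hN, s, hs, h⟩ := h
  have : Module.Finite R N := .of_fg hN
  refine .of_surjective (N.subtype.baseChange A) (baseChange_subtype_surjective_iff.mpr ?_)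
  refine subsingleton_of_forall_eq 0 fun z ↦ ?_
  induction z with
  | zero => rfl
  | add x y hx hy => rw [hx, hy, add_zero]
  | tmul c y =>
    obtain ⟨m, rfl⟩ := N.mkQ_surjective y
    obtain ⟨k, hk⟩ := h m
    have : s ^ k • N.mkQ m = 0 := (Quotient.mk_eq_zero N).mpr hk
    refine ((hS s hs).pow k).smul_left_cancel.mp ?_
    rw [← map_pow, algebraMap_smul, ← tmul_smul, this, tmul_zero, smul_zero]

theorem exists_fg_subsingleton_baseChange_quotient [Module.Finite A (A ⊗[R] M)] :
    ∃ N : Submodule R M, N.FG ∧ Subsingleton (A ⊗[R] (M ⧸ N)) := by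
  obtain ⟨T, hT⟩ := Module.Finite.fg_top (R := A) (M := A ⊗[R] M)
  obtain ⟨N, hN, hTN⟩ := exists_finite_submodule_right_of_setFinite (T : Set (A ⊗[R] M))
    T.finite_toSet
  refine ⟨N, .of_finite, baseChange_subtype_surjective_iff.mp ?_⟩
  rw [← LinearMap.range_eq_top, eq_top_iff, ← hT, span_le]
  exact hTN

end BaseChangeFinite

section Torsion

variable {R : Type u} [CommRing R] {𝔞 : Ideal R} {M N : Type u} [AddCommGroup M] [Module R M]
  [AddCommGroup N] [Module R N]

section IsTorsionIdeal

theorem _root_.IsTorsionIdeal.support_subset (h : IsTorsionIdeal 𝔞 M) :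
    Module.support R M ⊆ PrimeSpectrum.zeroLocus (𝔞 : Set R) := by
  intro p hp a ha
  obtain ⟨m, hm⟩ := Module.mem_support_iff_exists_annihilator.mp hp
  obtain ⟨n, hn⟩ := h m
  exact p.2.mem_of_pow_mem n
    (hm ((mem_annihilator_span_singleton m _).mpr (hn _ (Ideal.pow_mem_pow ha n))))

theorem _root_.IsTorsionIdeal.of_injective (f : M →ₗ[R] N) (hf : Function.Injective f)
    (h : IsTorsionIdeal 𝔞 N) : IsTorsionIdeal 𝔞 M := fun m ↦ by
  obtain ⟨n, hn⟩ := h (f m)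
  exact ⟨n, fun x hx ↦ hf (by rw [map_smul, hn x hx, map_zero])⟩

theorem _root_.IsTorsionIdeal.submodule (h : IsTorsionIdeal 𝔞 M) (L : Submodule R M) :
    IsTorsionIdeal 𝔞 L := h.of_injective L.subtype L.injective_subtype

theorem _root_.IsTorsionIdeal.of_surjective (f : M →ₗ[R] N) (hf : Function.Surjective f)
    (h : IsTorsionIdeal 𝔞 M) : IsTorsionIdeal 𝔞 N := fun m ↦ by
  obtain ⟨m, rfl⟩ := hf m
  obtain ⟨n, hn⟩ := h m
  exact ⟨n, fun x hx ↦ by rw [← map_smul, hn x hx, map_zero]⟩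

theorem _root_.IsTorsionIdeal.quotient (h : IsTorsionIdeal 𝔞 M) (L : Submodule R M) :
    IsTorsionIdeal 𝔞 (M ⧸ L) := h.of_surjective L.mkQ L.mkQ_surjective

end IsTorsionIdeal

variable [IsNoetherianRing R]

theorem isTorsionIdeal_of_support_subset
    (h : Module.support R M ⊆ PrimeSpectrum.zeroLocus (𝔞 : Set R)) : IsTorsionIdeal 𝔞 M := by
  intro m
  have : 𝔞 ≤ (span R {m}).annihilator.radical := by
    rw [Ideal.radical_eq_sInf]
    exact le_sInf fun p hp ↦
      h (Module.mem_support_iff_exists_annihilator (p := ⟨p, hp.2⟩).mpr ⟨m, hp.1⟩)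
  obtain ⟨n, hn⟩ := Ideal.exists_pow_le_of_le_radical_of_fg this (IsNoetherian.noetherian 𝔞)
  exact ⟨n, fun x hx ↦ (mem_annihilator_span_singleton m x).mp (hn hx)⟩

/-- Every associated prime of an `𝔞`-torsion module is already associated to `(0 :_M 𝔞)`. -/
theorem exists_pow_smul_eq_zero_of_torsionBySet {t : R} (hM : IsTorsionIdeal 𝔞 M)
    (h : ∀ m ∈ torsionBySet R M (𝔞 : Set R), ∃ n : ℕ, t ^ n • m = 0) (m : M) :
    ∃ n : ℕ, t ^ n • m = 0 := by
  suffices t ∈ (span R {m}).annihilator.radical from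
    let ⟨n, hn⟩ := this
    ⟨n, (mem_annihilator_span_singleton m _).mp hn⟩
  rw [← Ideal.sInf_minimalPrimes, Ideal.mem_sInf]
  intro p hp
  obtain ⟨prime, y, hy⟩ := isAssociatedPrime_iff.mp <|
    Module.associatedPrimes.minimalPrimes_annihilator_subset_associatedPrimes R (span R {m}) hp
  have mem_iff (r : R) : r ∈ p ↔ r • (y : M) = 0 := by
    rw [hy, mem_colon_singleton, mem_bot, Subtype.ext_iff]
    rfl
  obtain ⟨k, hk⟩ := hM y
  have le : 𝔞 ≤ p := fun a ha ↦
    prime.mem_of_pow_mem k ((mem_iff _).mpr (hk _ (Ideal.pow_mem_pow ha k)))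
  obtain ⟨n, hn⟩ := h y ((mem_torsionBySet_iff _ _).mpr fun a ↦ (mem_iff _).mp (le a.2))
  exact prime.mem_of_pow_mem n ((mem_iff _).mpr hn)

namespace FiniteUpTo

variable {S : Submonoid R}

theorem torsionBySet_submodule {s : Set R} (h : FiniteUpTo S (torsionBySet R M s))
    (L : Submodule R M) : FiniteUpTo S (torsionBySet R L s) := by
  refine h.of_injective (L.subtype.restrict fun m hm ↦ ?_) fun m n hmn ↦ ?_
  · exact (mem_torsionBySet_iff _ _).mpr fun x ↦
      congrArg L.subtype ((mem_torsionBySet_iff _ _).mp hm x)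
  · exact Subtype.ext (Subtype.ext (Subtype.ext_iff.mp hmn :))

/-- If `𝔞 = (a₁, …, aₙ)`, then `m ↦ (a₁ m, …, aₙ m)` embeds `M ⧸ (0 :_M 𝔞)` into `Lⁿ`. -/
theorem quotient_torsionBySet_of_smul_mem {L : Submodule R M} (hL : ∀ a ∈ 𝔞, ∀ m : M, a • m ∈ L)
    (h : FiniteUpTo S L) : FiniteUpTo S (M ⧸ torsionBySet R M (𝔞 : Set R)) := by
  obtain ⟨n, a, rfl⟩ := fg_iff_exists_fin_generating_family.mp (IsNoetherian.noetherian 𝔞)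
  let f : M →ₗ[R] (Fin n → L) := LinearMap.pi fun i ↦
    (LinearMap.lsmul R M (a i)).codRestrict L (hL _ (subset_span ⟨i, rfl⟩))
  have : LinearMap.ker f = torsionBySet R M (span R (Set.range a) : Set R) := by
    ext m
    rw [← torsionBySet_eq_torsionBySet_span, mem_torsionBySet_iff, LinearMap.mem_ker]
    refine ⟨?_, fun h ↦ funext fun i ↦ Subtype.ext (h ⟨a i, i, rfl⟩)⟩
    rintro h ⟨_, i, rfl⟩
    exact congrArg Subtype.val (congrFun h i)
  rw [← this]
  exact h.pi.of_injective _ (LinearMap.ker_eq_bot.mp (ker_liftQ_eq_bot' _ f rfl))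

theorem of_forall_pow_smul_eq_zero {k : ℕ} (hk : ∀ x ∈ 𝔞 ^ k, ∀ m : M, x • m = 0)
    (h : FiniteUpTo S (torsionBySet R M (𝔞 : Set R))) : FiniteUpTo S M := by
  induction k generalizing M with
  | zero =>
    have : Subsingleton M := subsingleton_of_forall_eq 0 fun m ↦ by simpa using hk 1 (by simp) m
    exact .of_finite
  | succ k ih =>
    let L : Submodule R M := torsionBySet R M (𝔞 ^ k : Ideal R)
    have mem_L (a : R) (ha : a ∈ 𝔞) (m : M) : a • m ∈ L :=
      (mem_torsionBySet_iff _ _).mpr fun x ↦ by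
        rw [smul_smul]
        exact hk _ (Ideal.mul_mem_mul x.2 ha) m
    refine .of_submodule_quotient _ h (.quotient_torsionBySet_of_smul_mem mem_L ?_)
    exact ih (fun x hx m ↦ Subtype.ext ((mem_torsionBySet_iff _ _).mp m.2 ⟨x, hx⟩))
      (h.torsionBySet_submodule L)

theorem torsionBy_of_surjective {s : R} (f : M →ₗ[R] N) (hf : Function.Surjective f)
    (hK : FiniteUpTo S (LinearMap.ker f)) (h : FiniteUpTo S (torsionBy R M s)) :
    FiniteUpTo S (torsionBy R N s) := by
  have : FiniteUpTo S (LinearMap.ker (f ∘ₗ LinearMap.lsmul R M s)) := .ker_comp _ f h hK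
  refine this.of_surjective (f.restrict (q := torsionBy R N s) fun m hm ↦ ?_) fun ⟨n, hn⟩ ↦ ?_
  · exact (map_smul f s m).symm.trans hm
  · obtain ⟨m, rfl⟩ := hf n
    exact ⟨⟨m, (map_smul f s m).trans hn⟩, rfl⟩

end FiniteUpTo

end Torsion

section Artinian

theorem exists_forall_eq_of_antitone {α : Type*} [PartialOrder α] [WellFoundedLT α]
    {f : ℕ → ℕ → α} (hf : Antitone f) (hf' : ∀ k, Antitone (f k)) :
    ∃ n, ∀ m, n ≤ m → ∀ k, f k n = f k m := by
  obtain ⟨j, hj⟩ := WellFoundedLT.antitone_chain_condition (f := fun i ↦ f i i)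
    fun _ _ hij ↦ (hf hij _).trans (hf' _ hij)
  choose c hc using fun k ↦ WellFoundedLT.antitone_chain_condition (hf' k)
  refine ⟨j + ∑ k ∈ Finset.range j, c k, fun n hn k ↦ ?_⟩
  rcases lt_or_ge k j with hk | hk
  · have : c k ≤ ∑ k ∈ Finset.range j, c k :=
      Finset.single_le_sum (fun _ _ ↦ Nat.zero_le _) (Finset.mem_range.mpr hk)
    exact (hc k _ (by lia)).symm.trans (hc k n (by lia))
  · refine le_antisymm ?_ (hf' k hn)
    calc f k _ ≤ f j _ := hf hk _
      _ ≤ f j j := hf' j (by lia)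
      _ = f (max k n) (max k n) := hj _ (by lia)
      _ ≤ f k (max k n) := hf (by lia) _
      _ ≤ f k n := hf' k (by lia)

variable {R : Type u} [CommRing R] {M : Type u} [AddCommGroup M] [Module R M]

theorem le_of_forall_pow_smul_comap_torsionBy_le {x : R} (h : ∀ m : M, ∃ n : ℕ, x ^ n • m = 0)
    {L K : Submodule R M} (hLK : L ≤ K)
    (hKL : ∀ k : ℕ, (x ^ k • K).comap (torsionBy R M x).subtype ≤
      (x ^ k • L).comap (torsionBy R M x).subtype) : K ≤ L := by
  suffices ∀ (k : ℕ) (m : M), m ∈ K → x ^ k • m = 0 → m ∈ L from fun m hm ↦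
    (h m).elim fun k ↦ this k m hm
  intro k
  induction k with
  | zero => exact fun m _ hm ↦ by simp_all
  | succ k ih =>
    intro m hm hk
    have torsion : x • x ^ k • m = 0 := by rwa [smul_smul, ← pow_succ']
    obtain ⟨m', hm', eq : x ^ k • m' = x ^ k • m⟩ :=
      hKL k (x := ⟨x ^ k • m, torsion⟩) (smul_mem_pointwise_smul m _ K hm)
    have : m - m' ∈ L := ih _ (sub_mem hm (hLK hm')) (by rw [smul_sub, eq, sub_self])
    exact (sub_mem_iff_left L hm').mp this

theorem isArtinian_of_torsionBy {x : R} (h : ∀ m : M, ∃ n : ℕ, x ^ n • m = 0)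
    [IsArtinian R (torsionBy R M x)] : IsArtinian R M := by
  refine monotone_stabilizes_iff_artinian.mp fun N ↦ ?_
  let L (n : ℕ) : Submodule R M := OrderDual.ofDual (N n)
  have hL : Antitone L := fun i j hij ↦ N.monotone hij
  have antitone_pow : Antitone fun k n ↦ (x ^ k • L n).comap (torsionBy R M x).subtype := by
    refine antitone_nat_of_succ_le fun k n ↦ comap_mono ?_
    rw [pow_succ, mul_smul]
    exact smul_mono_right _ (smul_le_self_of_tower _ _)
  obtain ⟨n, hn⟩ := exists_forall_eq_of_antitone antitone_pow
    fun k _ _ hij ↦ comap_mono (smul_mono_right _ (hL hij))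
  exact ⟨n, fun m hnm ↦ (le_antisymm (le_of_forall_pow_smul_comap_torsionBy_le h (hL hnm)
    fun k ↦ (hn m hnm k).le) (hL hnm) : L n = L m)⟩

theorem isArtinian_of_torsionBySet [IsNoetherianRing R] {𝔞 : Ideal R} (h : IsTorsionIdeal 𝔞 M)
    [IsArtinian R (torsionBySet R M (𝔞 : Set R))] : IsArtinian R M := by
  induction 𝔞, IsNoetherian.noetherian 𝔞 using fg_induction generalizing M with
  | singleton x =>
    have : IsArtinian R (torsionBy R M x) := by
      rwa [← torsionBySet_span_singleton_eq x]
    refine isArtinian_of_torsionBy (x := x) fun m ↦ ?_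
    obtain ⟨n, hn⟩ := h m
    exact ⟨n, hn _ (Ideal.pow_mem_pow (mem_span_singleton_self x) n)⟩
  | sup I J _ _ hI hJ =>
    have torsion {𝔟 : Ideal R} (hle : 𝔟 ≤ I ⊔ J) : IsTorsionIdeal 𝔟 M := fun m ↦
      (h m).imp fun n hn x hx ↦ hn x (Ideal.pow_right_mono hle n hx)
    let L := torsionBySet R M (I : Set R)
    have : IsArtinian R (torsionBySet R L (J : Set R)) := by
      let f : torsionBySet R L (J : Set R) →ₗ[R] torsionBySet R M ((I ⊔ J : Ideal R) : Set R) :=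
        L.subtype.restrict fun m hm ↦ ?_
      · exact isArtinian_of_injective f fun m n hmn ↦
          Subtype.ext (Subtype.ext (Subtype.ext_iff.mp hmn :))
      · rw [mem_torsionBySet_iff] at hm ⊢
        rintro ⟨_, hz⟩
        obtain ⟨y, hy, w, hw, rfl⟩ := mem_sup.mp hz
        have hy0 : y • (m : M) = 0 := (mem_torsionBySet_iff _ _).mp m.2 ⟨y, hy⟩
        have hw0 : w • (m : M) = 0 := congrArg L.subtype (hm ⟨w, hw⟩)
        exact (add_smul y w (m : M)).trans (by rw [hy0, hw0, add_zero])
    have : IsArtinian R L := hJ ((torsion le_sup_right).submodule L)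
    exact hI (torsion le_sup_left)

theorem isArtinian_of_isMaximal_of_mem_support [IsNoetherianRing R] [Module.Finite R M]
    (h : ∀ p ∈ Module.support R M, p.asIdeal.IsMaximal) : IsArtinian R M := by
  induction ‹Module.Finite R M› using
    IsNoetherianRing.induction_on_isQuotientEquivQuotientPrime R with
  | subsingleton N => infer_instance
  | quotient N p e =>
    have : p.asIdeal.IsMaximal := h p <| by
      rw [e.support_eq, Module.mem_support_iff_of_finite, Ideal.annihilator_quotient]
    have : IsSimpleModule R (R ⧸ p.asIdeal) := isSimpleModule_iff_isCoatom.mpr this.out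
    exact isArtinian_of_linearEquiv e.symm
  | exact N₁ N₂ N₃ f g hf hg hfg h₁ h₃ =>
    rw [Module.support_of_exact hfg hf hg] at h
    have := h₁ fun p hp ↦ h p (.inl hp)
    have := h₃ fun p hp ↦ h p (.inr hp)
    exact isArtinian_of_range_eq_ker f g (LinearMap.exact_iff.mp hfg).symm

end Artinian

section SupIrred

variable {R : Type*} [CommRing R] {M : Type*} [AddCommGroup M] [Module R M] [IsArtinian R M]
  {N : Submodule R M}

/-- This is Fitting's lemma for multiplication by `r` on `N`. -/
theorem mem_radical_annihilator_or_smul_eq_of_supIrred (hN : SupIrred N) (r : R) :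
    r ∈ N.annihilator.radical ∨ r • N = N := by
  obtain ⟨n, hn, hn1⟩ := ((LinearMap.eventually_codisjoint_ker_pow_range_pow
    (Algebra.lsmul R R N r)).and (Filter.eventually_ge_atTop 1)).exists
  rw [← map_pow] at hn
  have sup_eq : (LinearMap.ker (Algebra.lsmul R R N (r ^ n))).map N.subtype ⊔
      (LinearMap.range (Algebra.lsmul R R N (r ^ n))).map N.subtype = N := by
    rw [← Submodule.map_sup, codisjoint_iff.mp hn, Submodule.map_top, range_subtype]
  rcases hN.2 sup_eq with h | h
  · refine .inl ⟨n, mem_annihilator.mpr fun m hm ↦ ?_⟩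
    obtain ⟨k, hk, rfl⟩ := h.ge hm
    exact congrArg N.subtype hk
  · refine .inr (le_antisymm (smul_le_self_of_tower r N) fun m hm ↦ ?_)
    obtain ⟨_, ⟨k, rfl⟩, rfl⟩ := h.ge hm
    obtain ⟨l, rfl⟩ := Nat.exists_eq_add_of_le' hn1
    exact ⟨r ^ l • k, smul_mem _ _ k.2, (smul_smul r _ _).trans (by rw [← pow_succ']; rfl)⟩

theorem isPrime_radical_annihilator_of_supIrred (hN : SupIrred N) :
    N.annihilator.radical.IsPrime := by
  have of_smul_eq {r : R} (hr : r • N = N) : r ∉ N.annihilator.radical := by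
    rintro ⟨n, hn⟩
    have pow_smul_eq (k : ℕ) : r ^ k • N = N := by
      induction k with
      | zero => rw [pow_zero, one_smul]
      | succ k ih => rw [pow_succ, mul_smul, hr, ih]
    refine hN.1 (isMin_iff_eq_bot.mpr (N.eq_bot_iff.mpr fun m hm ↦ ?_))
    obtain ⟨m', hm', rfl⟩ := (pow_smul_eq n).ge hm
    exact mem_annihilator.mp hn m' hm'
  refine ⟨(Ideal.ne_top_iff_one _).mpr (of_smul_eq (one_smul R N)), fun {x y} hxy ↦ ?_⟩
  by_contra! h
  have hx := (mem_radical_annihilator_or_smul_eq_of_supIrred hN x).resolve_left h.1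
  have hy := (mem_radical_annihilator_or_smul_eq_of_supIrred hN y).resolve_left h.2
  exact of_smul_eq (by rw [mul_smul, hy, hx]) hxy

end SupIrred

section QuotSMulTopArtinian

variable {R : Type u} [CommRing R] [IsNoetherianRing R] {𝔞 : Ideal R} {M : Type u}
  [AddCommGroup M] [Module R M]

theorem fg_of_le_radical_annihilator (h : Module.Finite R (torsionBySet R M (𝔞 : Set R)))
    {N : Submodule R M} (hN : 𝔞 ≤ N.annihilator.radical) : N.FG := by
  obtain ⟨k, hk⟩ := Ideal.exists_pow_le_of_le_radical_of_fg hN (IsNoetherian.noetherian 𝔞)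
  rw [← Module.Finite.iff_fg, ← FiniteUpTo.bot_iff]
  exact .of_forall_pow_smul_eq_zero
    (fun x hx m ↦ Subtype.ext (mem_annihilator.mp (hk hx) m m.2))
    ((FiniteUpTo.bot_iff.mpr h).torsionBySet_submodule N)

theorem exists_finset_finite_quotSMulTop [IsArtinian R M]
    (h : Module.Finite R (torsionBySet R M (𝔞 : Set R))) :
    ∃ s : Finset (Ideal R), (∀ P ∈ s, P.IsPrime ∧ ¬ 𝔞 ≤ P) ∧
      ∀ x, (∀ P ∈ s, x ∉ P) → Module.Finite R (QuotSMulTop x M) := by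
  classical
  obtain ⟨t, ht, irred⟩ := exists_supIrred_decomposition (⊤ : Submodule R M)
  refine ⟨(t.image fun N ↦ N.annihilator.radical).filter (¬ 𝔞 ≤ ·), fun P hP ↦ ?_,
    fun x hxs ↦ ⟨?_⟩⟩
  · obtain ⟨hP, h𝔞P⟩ := Finset.mem_filter.mp hP
    obtain ⟨N, hN, rfl⟩ := Finset.mem_image.mp hP
    exact ⟨isPrime_radical_annihilator_of_supIrred (irred hN), h𝔞P⟩
  · have map_fg : ∀ N ∈ t, (N.map (x • ⊤ : Submodule R M).mkQ).FG := fun N hN ↦ by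
      by_cases h𝔞N : 𝔞 ≤ N.annihilator.radical
      · exact (fg_of_le_radical_annihilator h h𝔞N).map _
      have : x • N = N := (mem_radical_annihilator_or_smul_eq_of_supIrred (irred hN) x).resolve_left
        (hxs _ (Finset.mem_filter.mpr ⟨Finset.mem_image_of_mem _ hN, h𝔞N⟩))
      have : N.map (x • ⊤ : Submodule R M).mkQ = ⊥ := by
        rw [← LinearMap.le_ker_iff_map, ker_mkQ]
        exact this.ge.trans (smul_mono_right x le_top)
      exact this ▸ fg_bot
    have top_eq : (⊤ : Submodule R M) = ⨆ N ∈ t, N := by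
      rw [← ht, Finset.sup_id_eq_sSup, sSup_eq_iSup]
      rfl
    rw [← range_mkQ, LinearMap.range_eq_map, congrArg (Submodule.map _) top_eq]
    simp only [Submodule.map_iSup]
    exact fg_biSup t _ map_fg

end QuotSMulTopArtinian

section LocalizedQuotSMulTop

variable {R : Type u} [CommRing R] {𝔞 : Ideal R} {M : Type u} [AddCommGroup M] [Module R M]

section BaseChange

variable (A : Type u) [CommRing A] [Algebra R A]

theorem _root_.IsTorsionIdeal.baseChange (h : IsTorsionIdeal 𝔞 M) :
    IsTorsionIdeal (𝔞.map (algebraMap R A)) (A ⊗[R] M) := by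
  intro z
  suffices ∃ n, (𝔞.map (algebraMap R A)) ^ n ≤ (span A {z}).annihilator from
    this.imp fun n hn x hx ↦ (mem_annihilator_span_singleton _ _).mp (hn hx)
  induction z with
  | zero => exact ⟨0, by simp [annihilator_bot]⟩
  | tmul c m =>
    obtain ⟨n, hn⟩ := h m
    refine ⟨n, ?_⟩
    rw [← Ideal.map_pow, Ideal.map_le_iff_le_comap]
    intro y hy
    rw [Ideal.mem_comap, mem_annihilator_span_singleton, algebraMap_smul, ← tmul_smul, hn y hy,
      tmul_zero]
  | add z w hz hw =>
    obtain ⟨n, hn⟩ := hz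
    obtain ⟨k, hk⟩ := hw
    refine ⟨max n k, fun x hx ↦ (mem_annihilator_span_singleton _ _).mpr ?_⟩
    have hzx := (mem_annihilator_span_singleton _ _).mp
      (hn (Ideal.pow_le_pow_right (le_max_left ..) hx))
    have hwx := (mem_annihilator_span_singleton _ _).mp
      (hk (Ideal.pow_le_pow_right (le_max_right ..) hx))
    rw [smul_add, hzx, hwx, add_zero]

variable {A}

theorem comap_mem_support {P : PrimeSpectrum A} (hP : P ∈ Module.support A (A ⊗[R] M)) :
    PrimeSpectrum.comap (algebraMap R A) P ∈ Module.support R M := by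
  have span_eq_top : span A (Set.range fun m : M ↦ (1 : A) ⊗ₜ[R] m) = ⊤ := by
    rw [← baseChange_top (R := R) (M := M) A, baseChange_eq_span, Submodule.map_top]
    rfl
  obtain ⟨_, ⟨m, rfl⟩, hm⟩ := (Module.mem_support_iff_of_span_eq_top span_eq_top).mp hP
  refine Module.mem_support_iff_exists_annihilator.mpr ⟨m, fun r hr ↦ hm ?_⟩
  rw [mem_annihilator_span_singleton] at hr ⊢
  rw [algebraMap_smul, ← tmul_smul, hr, tmul_zero]

theorem finite_torsionBySet_baseChange [IsNoetherianRing R] [Module.Flat R A] {S : Submonoid R}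
    (hS : ∀ s ∈ S, IsUnit (algebraMap R A s))
    (h : FiniteUpTo S (torsionBySet R M (𝔞 : Set R))) :
    Module.Finite A (torsionBySet A (A ⊗[R] M) (𝔞.map (algebraMap R A) : Set A)) :=
  have := (FiniteUpTo.ext_zero_iff.mpr h).finite_baseChange hS
  .equiv ((extQuotientBaseChangeEquiv A M 𝔞 0).trans (extZeroEquiv _ _))

end BaseChange

theorem exists_mem_forall_notMem_of_map {A : Type*} [CommRing A] [Algebra R A]
    {s : Finset (Ideal A)} (hs : ∀ P ∈ s, P.IsPrime ∧ ¬ 𝔞.map (algebraMap R A) ≤ P) :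
    ∃ x ∈ 𝔞, ∀ P ∈ s, algebraMap R A x ∉ P := by
  by_contra! hcon
  have : (𝔞 : Set R) ⊆ ⋃ P ∈ (s : Set (Ideal A)), (P.comap (algebraMap R A) : Ideal R) := by
    intro x hx
    obtain ⟨P, hP, hxP⟩ := hcon x hx
    exact Set.mem_biUnion hP hxP
  obtain ⟨P, hP, hle⟩ := (Ideal.subset_union_prime (⊥ : Ideal A) ⊥ fun P hP _ _ ↦
    have := (hs P hP).1
    inferInstance).mp this
  exact (hs P hP).2 (Ideal.map_le_iff_le_comap.mpr hle)

variable {A : Type u} [CommRing A] [Algebra R A]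

theorem disjoint_comap (S : Submonoid R) [IsLocalization S A] (P : PrimeSpectrum A) :
    Disjoint (S : Set R) (PrimeSpectrum.comap (algebraMap R A) P).asIdeal :=
  ((IsLocalization.isPrime_iff_isPrime_disjoint S A P.asIdeal).mp P.2).2

theorem comap_strictMono (S : Submonoid R) [IsLocalization S A] :
    StrictMono (PrimeSpectrum.comap (algebraMap R A)) :=
  Monotone.strictMono_of_injective (fun _ _ h ↦ Ideal.comap_mono h)
    (PrimeSpectrum.localization_comap_injective A S)

variable {S : Submonoid R} [IsLocalization S A]

theorem isMaximal_of_mem_support_localization {d : ℕ}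
    (hS : ∀ p : PrimeSpectrum R, Disjoint (S : Set R) p.asIdeal → d ≤ Order.coheight p)
    (hd : ∀ p ∈ Module.support R M, Order.coheight p ≤ d)
    {P : PrimeSpectrum A} (hP : P ∈ Module.support A (A ⊗[R] M)) : P.asIdeal.IsMaximal := by
  by_contra not_maximal
  obtain ⟨Q, hQ, hPQ⟩ := Ideal.exists_le_maximal P.asIdeal P.2.ne_top
  have lt : P < ⟨Q, hQ.isPrime⟩ := lt_of_le_of_ne hPQ fun h ↦ not_maximal (h ▸ hQ)
  exact ((hS _ (disjoint_comap S ⟨Q, hQ.isPrime⟩)).trans_lt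
    (Order.coheight_le_coe_iff.mp (hd _ (comap_mem_support hP)) _
      (comap_strictMono S lt))).false

theorem exists_finite_localization_quotSMulTop [IsNoetherianRing R] {d : ℕ}
    (hS : ∀ p : PrimeSpectrum R, Disjoint (S : Set R) p.asIdeal → d ≤ Order.coheight p)
    (hd : ∀ p ∈ Module.support R M, Order.coheight p ≤ d) (hM : IsTorsionIdeal 𝔞 M)
    (h : FiniteUpTo S (torsionBySet R M (𝔞 : Set R))) :
    ∃ x ∈ 𝔞, Module.Finite A (A ⊗[R] QuotSMulTop x M) := by
  have : IsNoetherianRing A := IsLocalization.isNoetherianRing S A inferInstance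
  have : Module.Flat R A := IsLocalization.flat A S
  have finite := finite_torsionBySet_baseChange (A := A)
    (fun s hs ↦ IsLocalization.map_units A (⟨s, hs⟩ : S)) h
  have : IsArtinian A (torsionBySet A (A ⊗[R] M) (𝔞.map (algebraMap R A) : Set A)) :=
    isArtinian_of_isMaximal_of_mem_support fun P hP ↦
      isMaximal_of_mem_support_localization hS hd
        (Module.support_subset_of_injective _ (injective_subtype _) hP)
  have : IsArtinian A (A ⊗[R] M) := isArtinian_of_torsionBySet (hM.baseChange A)
  obtain ⟨s, hs, hs'⟩ := exists_finset_finite_quotSMulTop finite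
  obtain ⟨x, hx, hxs⟩ := exists_mem_forall_notMem_of_map hs
  have := hs' (algebraMap R A x) hxs
  exact ⟨x, hx, .equiv (QuotSMulTop.algebraMapTensorEquivTensorQuotSMulTop x M A)⟩

theorem exists_fg_forall_quotSMulTop_quotient_smul_eq_zero [IsNoetherianRing R] {d : ℕ}
    (hS : ∀ p : PrimeSpectrum R, Disjoint (S : Set R) p.asIdeal → d ≤ Order.coheight p)
    (hd : ∀ p ∈ Module.support R M, Order.coheight p ≤ d) (hM : IsTorsionIdeal 𝔞 M)
    (h : FiniteUpTo S (torsionBySet R M (𝔞 : Set R))) :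
    ∃ x ∈ 𝔞, ∃ N : Submodule R (QuotSMulTop x M), N.FG ∧
      ∀ z : QuotSMulTop x M ⧸ N, ∃ s ∈ S, s • z = 0 := by
  obtain ⟨x, hx, _⟩ := exists_finite_localization_quotSMulTop (A := Localization S) hS hd hM h
  obtain ⟨N, hN, _⟩ := exists_fg_subsingleton_baseChange_quotient (R := R) (A := Localization S)
    (M := QuotSMulTop x M)
  exact ⟨x, hx, N, hN, LocalizedModule.subsingleton_iff.mp
    (LocalizedModule.equivTensorProduct S (QuotSMulTop x M ⧸ N)).subsingleton⟩

end LocalizedQuotSMulTop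

section DimensionInduction

variable {R : Type u} [CommRing R] {S : Submonoid R}

theorem annihilator_lt_annihilator_torsionBy {M : Type*} [AddCommGroup M] [Module R M] {x : R}
    (hx : x ∉ Module.annihilator R M) :
    Module.annihilator R M < Module.annihilator R (torsionBy R M x) :=
  lt_of_le_of_ne (LinearMap.annihilator_le_of_injective _ (injective_subtype _)) fun h ↦
    hx (h ▸ Module.mem_annihilator.mpr fun m ↦ Subtype.ext m.2)

theorem exists_submonoid_of_finite (d : ℕ∞) {T : Set (PrimeSpectrum R)} (hT : T.Finite)
    (hd : ∀ p ∈ T, d ≤ Order.coheight p) :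
    ∃ S : Submonoid R, (∀ s, s ∈ S ↔ ∀ p ∈ T, s ∉ p.asIdeal) ∧
      ∀ p : PrimeSpectrum R, Disjoint (S : Set R) p.asIdeal → d ≤ Order.coheight p := by
  have mem_iff (s : R) : s ∈ (⨅ p ∈ T, p.asIdeal.primeCompl : Submonoid R) ↔
      ∀ p ∈ T, s ∉ p.asIdeal := by
    simp only [Submonoid.mem_iInf, Ideal.mem_primeCompl_iff]
  refine ⟨_, mem_iff, fun p hp ↦ ?_⟩
  have : (p.asIdeal : Set R) ⊆ ⋃ q ∈ (hT.toFinset : Set (PrimeSpectrum R)), q.asIdeal := by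
    intro x hx
    by_contra hcon
    simp only [Set.mem_iUnion, not_exists, Set.Finite.coe_toFinset] at hcon
    exact Set.disjoint_left.mp hp ((mem_iff x).mpr hcon) hx
  obtain ⟨q, hq, hle⟩ := (Ideal.subset_union_prime p p fun q _ _ _ ↦ q.2).mp this
  exact (hd q (by simpa using hq)).trans (Order.coheight_anti hle)

section Support

variable {M : Type*} [AddCommGroup M] [Module R M] {p : PrimeSpectrum R}

theorem exists_mem_of_mem_support (hM : ∀ m : M, ∃ s ∈ S, s • m = 0)
    (hp : p ∈ Module.support R M) : ∃ s ∈ S, s ∈ p.asIdeal := by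
  obtain ⟨m, hm⟩ := Module.mem_support_iff_exists_annihilator.mp hp
  obtain ⟨s, hs, hsm⟩ := hM m
  exact ⟨s, hs, hm ((mem_annihilator_span_singleton _ _).mpr hsm)⟩

theorem mem_of_mem_support {s : R} (hM : ∀ m : M, ∃ n : ℕ, s ^ n • m = 0)
    (hp : p ∈ Module.support R M) : s ∈ p.asIdeal := by
  obtain ⟨_, ⟨n, rfl⟩, h⟩ := exists_mem_of_mem_support (S := .powers s)
    (fun m ↦ let ⟨n, hn⟩ := hM m; ⟨s ^ n, ⟨n, rfl⟩, hn⟩) hp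
  exact p.2.mem_of_pow_mem n h

theorem coheight_le_of_mem {d : ℕ∞} (hd : ∀ p ∈ Module.support R M, Order.coheight p ≤ d + 1)
    {s : R} (hs : ∀ p ∈ {p ∈ Module.support R M | Order.coheight p = d + 1}, s ∉ p.asIdeal)
    (hp : p ∈ Module.support R M) (hsp : s ∈ p.asIdeal) : Order.coheight p ≤ d :=
  Order.le_of_lt_add_one (lt_of_le_of_ne (hd p hp) fun h ↦ hs p ⟨hp, h⟩ hsp)

end Support

theorem FiniteUpTo.exists_forall_pow_smul_eq_zero {M : Type u} [AddCommGroup M]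
    [Module R M] (h : FiniteUpTo S M)
    (hS : ∀ m : M, ∃ s ∈ S, s • m = 0) : ∃ s ∈ S, ∀ m : M, ∃ k : ℕ, s ^ k • m = 0 := by
  obtain ⟨K, hK, s, hs, hsK⟩ := h
  have : Module.Finite R K := .of_fg hK
  have : Subsingleton (LocalizedModule S M) := LocalizedModule.subsingleton_iff.mpr hS
  obtain ⟨t, ht⟩ := Module.Finite.exists_smul_of_comp_eq_of_isLocalizedModule S
    (LocalizedModule.mkLinearMap S M) K.subtype 0 (Subsingleton.elim _ _)
  refine ⟨t * s, mul_mem t.2 hs, fun m ↦ ?_⟩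
  obtain ⟨k, hk⟩ := hsK m
  refine ⟨k + 1, ?_⟩
  have : (t : R) • s ^ k • m = 0 := by
    simpa [Submonoid.smul_def] using LinearMap.congr_fun ht ⟨_, hk⟩
  rw [show ((t : R) * s) ^ (k + 1) = t ^ k * s * (t * s ^ k) by ring, mul_smul, mul_smul _ (s ^ k),
    this, smul_zero]

variable [IsNoetherianRing R] {𝔞 : Ideal R}

/-- Noetherian induction on the annihilator of `M`. -/
theorem FiniteUpTo.ext_of_forall_exists_quotSMulTop {N : Type u} [AddCommGroup N] [Module R N]
    (Q : ∀ (M : Type u) [AddCommGroup M] [Module R M], Prop)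
    (hQ : ∀ (M : Type u) [AddCommGroup M] [Module R M], Q M →
      ∃ x ∈ Module.annihilator R N, Q (torsionBy R M x) ∧ FiniteUpTo S (ExtModule R N M 0) ∧
        (FiniteUpTo S (ExtModule R N (torsionBy R M x) 2) →
          FiniteUpTo S (ExtModule R N (QuotSMulTop x M) 0)) ∧
        (FiniteUpTo S (ExtModule R N (QuotSMulTop x M) 0) →
          ∀ i, FiniteUpTo S (ExtModule R N (QuotSMulTop x M) i)))
    {M : Type u} [AddCommGroup M] [Module R M] (hM : Q M) (i : ℕ) :
    FiniteUpTo S (ExtModule R N M i) := by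
  induction h : Module.annihilator R M using WellFoundedGT.induction generalizing M i with
  | ind I ih =>
  subst h
  obtain ⟨x, hxN, hQx, finite_zero, finite_quot_zero, finite_quot⟩ := hQ M hM
  by_cases hxM : x ∈ Module.annihilator R M
  · have smul_eq_bot : (x • ⊤ : Submodule R M) = ⊥ := by
      rw [eq_bot_iff]
      rintro _ ⟨m, -, rfl⟩
      exact Module.mem_annihilator.mp hxM m
    let e : QuotSMulTop x M ≃ₗ[R] M := quotEquivOfEqBot _ smul_eq_bot
    exact (ext_congr e).mp (finite_quot ((ext_congr e).mpr finite_zero) i)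
  · have finite_torsion (i : ℕ) : FiniteUpTo S (ExtModule R N (torsionBy R M x) i) :=
      ih _ (annihilator_lt_annihilator_torsionBy hxM) hQx i rfl
    exact ext_of_torsionBy_of_quotSMulTop hxN (finite_torsion i) fun j _ ↦
      finite_quot (finite_quot_zero (finite_torsion 2)) j

variable {M : Type u} [AddCommGroup M] [Module R M]

theorem finite_setOf_coheight_eq (hM : IsTorsionIdeal 𝔞 M)
    [Module.Finite R (torsionBySet R M (𝔞 : Set R))] {d : ℕ}
    (hd : ∀ p ∈ Module.support R M, Order.coheight p ≤ d) :
    {p ∈ Module.support R M | Order.coheight p = d}.Finite := by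
  let J := Module.annihilator R (torsionBySet R M (𝔞 : Set R))
  refine .of_finite_image (f := PrimeSpectrum.asIdeal)
    ((Ideal.finite_minimalPrimes_of_isNoetherianRing R J).subset ?_)
    fun p _ q _ ↦ PrimeSpectrum.ext
  rintro _ ⟨p, ⟨hp, hpd⟩, rfl⟩
  refine ⟨⟨p.2, fun t ht ↦ ?_⟩, fun q hq hqp ↦ ?_⟩
  · obtain ⟨m, hm⟩ := Module.mem_support_iff_exists_annihilator.mp hp
    obtain ⟨n, hn⟩ := exists_pow_smul_eq_zero_of_torsionBySet hM (fun m hm ↦ ⟨1, by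
      rw [pow_one]
      exact congrArg Subtype.val (Module.mem_annihilator.mp ht ⟨m, hm⟩)⟩) m
    exact p.2.mem_of_pow_mem n (hm ((mem_annihilator_span_singleton _ _).mpr hn))
  · by_contra not_le
    have lt : (⟨q, hq.1⟩ : PrimeSpectrum R) < p := lt_of_le_not_ge hqp not_le
    have mem_support : (⟨q, hq.1⟩ : PrimeSpectrum R) ∈ Module.support R M :=
      Module.support_subset_of_injective _ (injective_subtype _)
        (Module.mem_support_iff_of_finite.mpr hq.2)
    exact (Order.coheight_le_coe_iff.mp (hd _ mem_support) p lt).ne hpd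

theorem FiniteUpTo.of_torsionBySet_of_forall_exists_smul_eq_zero (hM : IsTorsionIdeal 𝔞 M)
    (hS : ∀ m : M, ∃ s ∈ S, s • m = 0) (h : FiniteUpTo S (torsionBySet R M (𝔞 : Set R))) :
    FiniteUpTo S M := by
  obtain ⟨s, hs, hs'⟩ := h.exists_forall_pow_smul_eq_zero fun m ↦
    (hS m).imp fun _ h ↦ ⟨h.1, Subtype.ext h.2⟩
  exact .of_pow_smul_eq_zero hs <| exists_pow_smul_eq_zero_of_torsionBySet hM fun m hm ↦
    (hs' ⟨m, hm⟩).imp fun _ ↦ congrArg Subtype.val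

theorem FiniteUpTo.ext_of_coheight_le {d : ℕ}
    (hS : ∀ p : PrimeSpectrum R, Disjoint (S : Set R) p.asIdeal → d ≤ Order.coheight p)
    (hM : IsTorsionIdeal 𝔞 M) (hd : ∀ p ∈ Module.support R M, Order.coheight p ≤ d)
    (h₀ : FiniteUpTo S (ExtModule R (R ⧸ 𝔞) M 0)) (h₁ : FiniteUpTo S (ExtModule R (R ⧸ 𝔞) M 1))
    (i : ℕ) : FiniteUpTo S (ExtModule R (R ⧸ 𝔞) M i) := by
  refine ext_of_forall_exists_quotSMulTop (fun M _ _ ↦ IsTorsionIdeal 𝔞 M ∧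
    (∀ p ∈ Module.support R M, Order.coheight p ≤ d) ∧
    FiniteUpTo S (ExtModule R (R ⧸ 𝔞) M 0) ∧ FiniteUpTo S (ExtModule R (R ⧸ 𝔞) M 1))
    ?_ ⟨hM, hd, h₀, h₁⟩ i
  rintro M _ _ ⟨hM, hd, h₀, h₁⟩
  obtain ⟨x, hx, N, hN, hNS⟩ :=
    exists_fg_forall_quotSMulTop_quotient_smul_eq_zero hS hd hM (ext_zero_iff.mp h₀)
  refine ⟨x, by rwa [Ideal.annihilator_quotient], ⟨hM.submodule _, fun p hp ↦ hd p
    (Module.support_subset_of_injective _ (injective_subtype _) hp), h₀.ext_torsionBy_zero,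
    h₀.ext_torsionBy_one h₁⟩, h₀, h₀.ext_quotSMulTop h₁, fun hx₀ i ↦ .ext ?_ i⟩
  have : Module.Finite R N := .of_fg hN
  exact .of_submodule_quotient N .of_finite <| .of_torsionBySet_of_forall_exists_smul_eq_zero
    ((hM.quotient _).quotient N) hNS (ext_zero_iff.mp (hx₀.ext_quotient_of_fg hN))

theorem finite_ext_of_coheight_le_zero (hM : IsTorsionIdeal 𝔞 M)
    (hd : ∀ p ∈ Module.support R M, Order.coheight p ≤ 0)
    (h₀ : Module.Finite R (ExtModule R (R ⧸ 𝔞) M 0)) (i : ℕ) :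
    Module.Finite R (ExtModule R (R ⧸ 𝔞) M i) := by
  rw [← FiniteUpTo.bot_iff] at h₀ ⊢
  refine FiniteUpTo.ext_of_forall_exists_quotSMulTop (fun M _ _ ↦ IsTorsionIdeal 𝔞 M ∧
    (∀ p ∈ Module.support R M, Order.coheight p ≤ 0) ∧
    FiniteUpTo (⊥ : Submonoid R) (ExtModule R (R ⧸ 𝔞) M 0)) ?_ ⟨hM, hd, h₀⟩ i
  rintro M _ _ ⟨hM, hd, h₀⟩
  obtain ⟨x, hx, N, hN, hNS⟩ := exists_fg_forall_quotSMulTop_quotient_smul_eq_zero (d := 0)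
    (fun p _ ↦ by simp) hd hM (FiniteUpTo.ext_zero_iff.mp h₀)
  have finite_quot : FiniteUpTo (⊥ : Submonoid R) (QuotSMulTop x M) := by
    have : Module.Finite R N := .of_fg hN
    exact .of_submodule_quotient N .of_finite (.of_pow_smul_eq_zero (one_mem _)
      fun z ↦ ⟨1, by simpa using hNS z⟩)
  exact ⟨x, by rwa [Ideal.annihilator_quotient], ⟨hM.submodule _, fun p hp ↦ hd p
    (Module.support_subset_of_injective _ (injective_subtype _) hp), h₀.ext_torsionBy_zero⟩, h₀,
    fun _ ↦ finite_quot.ext 0, fun _ ↦ finite_quot.ext⟩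

theorem finite_ext_of_coheight_le_one (hM : IsTorsionIdeal 𝔞 M)
    (hd : ∀ p ∈ Module.support R M, Order.coheight p ≤ 1)
    (h₀ : Module.Finite R (ExtModule R (R ⧸ 𝔞) M 0))
    (h₁ : Module.Finite R (ExtModule R (R ⧸ 𝔞) M 1)) (i : ℕ) :
    Module.Finite R (ExtModule R (R ⧸ 𝔞) M i) := by
  rw [← FiniteUpTo.bot_iff] at h₀ h₁ ⊢
  refine FiniteUpTo.ext_of_forall_exists_quotSMulTop (fun M _ _ ↦ IsTorsionIdeal 𝔞 M ∧
    (∀ p ∈ Module.support R M, Order.coheight p ≤ 1) ∧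
    FiniteUpTo (⊥ : Submonoid R) (ExtModule R (R ⧸ 𝔞) M 0) ∧
    FiniteUpTo (⊥ : Submonoid R) (ExtModule R (R ⧸ 𝔞) M 1)) ?_ ⟨hM, hd, h₀, h₁⟩ i
  rintro M _ _ ⟨hM, hd, h₀, h₁⟩
  have finite_torsion := FiniteUpTo.ext_zero_iff.mp h₀
  have := FiniteUpTo.bot_iff.mp finite_torsion
  obtain ⟨S, mem_S, hS⟩ := exists_submonoid_of_finite 1
    (finite_setOf_coheight_eq hM (d := 1) hd) (fun p hp ↦ hp.2.ge)
  obtain ⟨x, hx, N, hN, hNS⟩ :=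
    exists_fg_forall_quotSMulTop_quotient_smul_eq_zero hS hd hM (finite_torsion.mono bot_le)
  refine ⟨x, by rwa [Ideal.annihilator_quotient], ⟨hM.submodule _, fun p hp ↦ hd p
    (Module.support_subset_of_injective _ (injective_subtype _) hp), h₀.ext_torsionBy_zero,
    h₀.ext_torsionBy_one h₁⟩, h₀, h₀.ext_quotSMulTop h₁, fun hx₀ i ↦ ?_⟩
  have support_subset := Module.support_subset_of_surjective _
    (x • ⊤ : Submodule R M).mkQ_surjective
  have : Module.Finite R N := .of_fg hN
  refine .ext_of_submodule_quotient N (.ext .of_finite i) <| FiniteUpTo.bot_iff.mpr <|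
    finite_ext_of_coheight_le_zero ((hM.quotient _).quotient N) (fun p hp ↦ ?_)
      (FiniteUpTo.bot_iff.mp (hx₀.ext_quotient_of_fg hN)) i
  obtain ⟨s, hs, hsp⟩ := exists_mem_of_mem_support hNS hp
  exact coheight_le_of_mem (d := 0) (by simpa using hd) (by simpa using (mem_S s).mp hs)
    (support_subset (Module.support_subset_of_surjective _ N.mkQ_surjective hp)) hsp

theorem FiniteUpTo.of_smul_eq_zero_of_pow_le_span_pair {x y : R} {k : ℕ}
    (hk : 𝔞 ^ k ≤ Ideal.span {x, y}) (hx : ∀ m : M, x • m = 0) (hy : ∀ m : M, y • m = 0)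
    (h : FiniteUpTo S (ExtModule R (R ⧸ 𝔞) M 0)) : FiniteUpTo S M := by
  refine .of_forall_pow_smul_eq_zero (k := k) (fun z hz m ↦ ?_) (ext_zero_iff.mp h)
  obtain ⟨b, c, rfl⟩ := Ideal.mem_span_pair.mp (hk hz)
  rw [add_smul, mul_smul, mul_smul, hx, hy, smul_zero, smul_zero, add_zero]

theorem smul_quotSMulTop_eq_zero {R M : Type*} [CommRing R] [AddCommGroup M] [Module R M] (x : R)
    (m : QuotSMulTop x M) : x • m = 0 := by
  obtain ⟨m, rfl⟩ := mkQ_surjective _ m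
  rw [← map_smul, mkQ_apply, Quotient.mk_eq_zero]
  exact smul_mem_pointwise_smul m x ⊤ trivial

theorem FiniteUpTo.ext_of_smul_eq_zero_of_pow_le_span_pair {x y : R} {k : ℕ} (hy : y ∈ 𝔞)
    (hk : 𝔞 ^ k ≤ Ideal.span {x, y}) (hx : ∀ m : M, x • m = 0)
    (h₀ : FiniteUpTo S (ExtModule R (R ⧸ 𝔞) M 0)) (h₁ : FiniteUpTo S (ExtModule R (R ⧸ 𝔞) M 1))
    (i : ℕ) : FiniteUpTo S (ExtModule R (R ⧸ 𝔞) M i) := by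
  have finite_torsion : FiniteUpTo S (torsionBy R M y) :=
    .of_smul_eq_zero_of_pow_le_span_pair hk (fun m ↦ Subtype.ext (hx m)) (fun m ↦ Subtype.ext m.2)
      h₀.ext_torsionBy_zero
  have finite_quot : FiniteUpTo S (QuotSMulTop y M) := by
    refine .of_smul_eq_zero_of_pow_le_span_pair hk (fun m ↦ ?_) (smul_quotSMulTop_eq_zero y)
      (h₀.ext_quotSMulTop h₁ (finite_torsion.ext 2))
    obtain ⟨m, rfl⟩ := mkQ_surjective _ m
    rw [← map_smul, hx, map_zero]
  exact .ext_of_torsionBy_of_quotSMulTop (by rwa [Ideal.annihilator_quotient])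
    (finite_torsion.ext i) fun j _ ↦ finite_quot.ext j

theorem FiniteUpTo.ext_of_pow_le_span_pair {x y : R} {k : ℕ} (hx : x ∈ 𝔞) (hy : y ∈ 𝔞)
    (hk : 𝔞 ^ k ≤ Ideal.span {x, y}) (h₀ : FiniteUpTo S (ExtModule R (R ⧸ 𝔞) M 0))
    (h₁ : FiniteUpTo S (ExtModule R (R ⧸ 𝔞) M 1)) (h₂ : FiniteUpTo S (ExtModule R (R ⧸ 𝔞) M 2))
    (i : ℕ) : FiniteUpTo S (ExtModule R (R ⧸ 𝔞) M i) := by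
  have finite_torsion := ext_of_smul_eq_zero_of_pow_le_span_pair hy hk
    (fun m ↦ Subtype.ext m.2) (h₀.ext_torsionBy_zero (x := x)) (h₀.ext_torsionBy_one h₁)
  have finite_quot := ext_of_smul_eq_zero_of_pow_le_span_pair hy hk (smul_quotSMulTop_eq_zero x)
    (h₀.ext_quotSMulTop h₁ (finite_torsion 2)) (h₁.ext_quotSMulTop h₂ (finite_torsion 3))
  exact .ext_of_torsionBy_of_quotSMulTop (by rwa [Ideal.annihilator_quotient])
    (finite_torsion i) fun j _ ↦ finite_quot j

end DimensionInduction

section TwoDimensionalExt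

theorem coheight_le_of_coheight_apply_le {α β : Type*} [Preorder α] [Preorder β] {f : α → β}
    (hf : StrictMono f) (one_le : ∀ a, 1 ≤ Order.coheight (f a)) {n : ℕ} {a : α}
    (h : Order.coheight (f a) ≤ n + 1) : Order.coheight a ≤ n := by
  induction n generalizing a with
  | zero =>
    refine Order.coheight_le_coe_iff.mpr fun b hab ↦ ?_
    have : Order.coheight (f b) < 1 := Order.coheight_le_coe_iff.mp (by simpa using h) _ (hf hab)
    exact absurd this (one_le b).not_gt
  | succ n ih =>
    refine Order.coheight_le_coe_iff.mpr fun b hab ↦ (ih ?_).trans_lt (by norm_cast; lia)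
    exact Order.le_of_lt_add_one (Order.coheight_le_coe_iff.mp (by exact_mod_cast h) _ (hf hab))

variable {R : Type u} [CommRing R] {M : Type u} [AddCommGroup M] [Module R M]

theorem isTorsionIdeal_span_singleton {s : R} (h : ∀ m : M, ∃ n : ℕ, s ^ n • m = 0) :
    IsTorsionIdeal (Ideal.span {s}) M := fun m ↦ by
  obtain ⟨n, hn⟩ := h m
  refine ⟨n, fun x hx ↦ ?_⟩
  rw [Ideal.span_singleton_pow] at hx
  obtain ⟨c, rfl⟩ := Ideal.mem_span_singleton'.mp hx
  rw [mul_smul, hn, smul_zero]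

variable [IsNoetherianRing R] {𝔞 : Ideal R}

theorem finite_torsionBy_ext (hM : IsTorsionIdeal 𝔞 M)
    (h : ∀ i ≤ 2, Module.Finite R (ExtModule R (R ⧸ 𝔞) M i)) {s : R}
    (hs : ∀ p ∈ Module.support R M, s ∈ p.asIdeal → Order.coheight p ≤ 1) (i : ℕ) :
    Module.Finite R (torsionBy R (ExtModule R (R ⧸ 𝔞) M i) s) := by
  simp only [← FiniteUpTo.bot_iff] at h ⊢
  have coheight_le {L : Type u} [AddCommGroup L] [Module R L] (hL : ∀ m : L, s • m = 0)
      (hLM : Module.support R L ⊆ Module.support R M) (p) (hp : p ∈ Module.support R L) :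
      Order.coheight p ≤ 1 :=
    hs p (hLM hp) (mem_of_mem_support (fun m ↦ ⟨1, by rw [pow_one, hL]⟩) hp)
  have h₀ := h 0 (by lia)
  have h₁ := h 1 (by lia)
  have finite_torsion (i : ℕ) := FiniteUpTo.bot_iff.mpr <| finite_ext_of_coheight_le_one
    (hM.submodule (torsionBy R M s)) (coheight_le (fun m ↦ Subtype.ext m.2)
      (Module.support_subset_of_injective _ (injective_subtype _)))
    (FiniteUpTo.bot_iff.mp h₀.ext_torsionBy_zero)
    (FiniteUpTo.bot_iff.mp (h₀.ext_torsionBy_one h₁)) i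
  have finite_quot (i : ℕ) := FiniteUpTo.bot_iff.mpr <| finite_ext_of_coheight_le_one
    (hM.quotient (s • ⊤)) (coheight_le (smul_quotSMulTop_eq_zero s)
      (Module.support_subset_of_surjective _ (mkQ_surjective _)))
    (FiniteUpTo.bot_iff.mp (h₀.ext_quotSMulTop h₁ (finite_torsion 2)))
    (FiniteUpTo.bot_iff.mp (h₁.ext_quotSMulTop (h 2 le_rfl) (finite_torsion 3))) i
  exact FiniteUpTo.torsionBy_ext (finite_torsion i) fun j _ ↦ finite_quot j

theorem finite_localization_ext {T : Submonoid R}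
    (hT : ∀ p : PrimeSpectrum R, Disjoint (T : Set R) p.asIdeal → 1 ≤ Order.coheight p)
    (hM : IsTorsionIdeal 𝔞 M) (hd : ∀ p ∈ Module.support R M, Order.coheight p ≤ 2)
    (h₀ : Module.Finite R (ExtModule R (R ⧸ 𝔞) M 0))
    (h₁ : Module.Finite R (ExtModule R (R ⧸ 𝔞) M 1)) (i : ℕ) :
    Module.Finite (Localization T) (Localization T ⊗[R] ExtModule R (R ⧸ 𝔞) M i) := by
  let A := Localization T
  have : IsNoetherianRing A := IsLocalization.isNoetherianRing T A inferInstance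
  have : Module.Flat R A := IsLocalization.flat A T
  let e (j : ℕ) := extQuotientBaseChangeEquiv A M 𝔞 j
  have := finite_ext_of_coheight_le_one (hM.baseChange A)
    (fun P hP ↦ coheight_le_of_coheight_apply_le (n := 1) (comap_strictMono T)
      (fun Q ↦ hT _ (disjoint_comap T Q)) ((hd _ (comap_mem_support hP)).trans (by norm_num)))
    (.equiv (e 0)) (.equiv (e 1)) i
  exact .equiv (e i).symm

theorem exists_fg_pow_smul_ext_quotient_eq_zero (hM : IsTorsionIdeal 𝔞 M)
    (hd : ∀ p ∈ Module.support R M, Order.coheight p ≤ 2)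
    (h₀ : Module.Finite R (ExtModule R (R ⧸ 𝔞) M 0))
    (h₁ : Module.Finite R (ExtModule R (R ⧸ 𝔞) M 1)) (i : ℕ) :
    ∃ s : R, (∀ p ∈ Module.support R M, s ∈ p.asIdeal → Order.coheight p ≤ 1) ∧
      ∃ N : Submodule R (ExtModule R (R ⧸ 𝔞) M i), N.FG ∧
        ∀ z : ExtModule R (R ⧸ 𝔞) M i ⧸ N, ∃ n : ℕ, s ^ n • z = 0 := by
  have := Module.Finite.equiv (extZeroEquiv M 𝔞)
  obtain ⟨S, mem_S, hS⟩ := exists_submonoid_of_finite 2 (finite_setOf_coheight_eq hM (d := 2) hd)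
    (fun p hp ↦ hp.2.ge)
  obtain ⟨N, hN, s, hs, hsN⟩ := FiniteUpTo.ext_of_coheight_le (S := S) hS hM hd .of_finite
    .of_finite i
  refine ⟨s, fun p ↦ coheight_le_of_mem (d := 1) (by simpa [one_add_one_eq_two] using hd)
    (by simpa [one_add_one_eq_two] using (mem_S s).mp hs), N, hN, fun z ↦ ?_⟩
  obtain ⟨z, rfl⟩ := N.mkQ_surjective z
  exact (hsN z).imp fun n hn ↦ (Quotient.mk_eq_zero N).mpr hn

theorem finite_torsionBy_ext_quotient (hM : IsTorsionIdeal 𝔞 M)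
    (h : ∀ i ≤ 2, Module.Finite R (ExtModule R (R ⧸ 𝔞) M i)) {s : R}
    (hs : ∀ p ∈ Module.support R M, s ∈ p.asIdeal → Order.coheight p ≤ 1) {i : ℕ}
    {E : Type u} [AddCommGroup E] [Module R E] (f : ExtModule R (R ⧸ 𝔞) M i →ₗ[R] E)
    (hf : Function.Surjective f) (hK : (LinearMap.ker f).FG) :
    Module.Finite R (torsionBy R E s) := by
  have := finite_torsionBy_ext hM h hs i
  have : Module.Finite R (LinearMap.ker f) := .of_fg hK
  exact FiniteUpTo.bot_iff.mp (.torsionBy_of_surjective f hf .of_finite .of_finite)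

theorem exists_fg_forall_exists_mem_smul_ext_quotient_eq_zero {T : Submonoid R}
    (hT : ∀ p : PrimeSpectrum R, Disjoint (T : Set R) p.asIdeal → 1 ≤ Order.coheight p)
    (hM : IsTorsionIdeal 𝔞 M) (hd : ∀ p ∈ Module.support R M, Order.coheight p ≤ 2)
    (h₀ : Module.Finite R (ExtModule R (R ⧸ 𝔞) M 0))
    (h₁ : Module.Finite R (ExtModule R (R ⧸ 𝔞) M 1)) (i : ℕ) :
    ∃ N : Submodule R (ExtModule R (R ⧸ 𝔞) M i), N.FG ∧
      ∀ z : ExtModule R (R ⧸ 𝔞) M i ⧸ N, ∃ t ∈ T, t • z = 0 := by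
  have := finite_localization_ext hT hM hd h₀ h₁ i
  obtain ⟨N, hN, _⟩ := exists_fg_subsingleton_baseChange_quotient (R := R) (A := Localization T)
    (M := ExtModule R (R ⧸ 𝔞) M i)
  refine ⟨N, hN, fun z ↦ ?_⟩
  obtain ⟨t, ht⟩ := (IsLocalizedModule.eq_zero_iff T (TensorProduct.mk R (Localization T) _ 1)).mp
    (Subsingleton.elim (1 ⊗ₜ[R] z) 0)
  exact ⟨t, t.2, ht⟩

theorem exists_fg_coheight_support_ext_quotient_le_zero (hM : IsTorsionIdeal 𝔞 M)
    (hd : ∀ p ∈ Module.support R M, Order.coheight p ≤ 2)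
    (h : ∀ i ≤ 2, Module.Finite R (ExtModule R (R ⧸ 𝔞) M i)) (i : ℕ) :
    ∃ s : R, (∀ p ∈ Module.support R M, s ∈ p.asIdeal → Order.coheight p ≤ 1) ∧
      ∃ N : Submodule R (ExtModule R (R ⧸ 𝔞) M i), N.FG ∧
        (∀ z : ExtModule R (R ⧸ 𝔞) M i ⧸ N, ∃ n : ℕ, s ^ n • z = 0) ∧
        ∀ p ∈ Module.support R (ExtModule R (R ⧸ 𝔞) M i ⧸ N), Order.coheight p ≤ 0 := by
  obtain ⟨s, hs, N, hN, hsN⟩ :=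
    exists_fg_pow_smul_ext_quotient_eq_zero hM hd (h 0 (by lia)) (h 1 (by lia)) i
  have coheight_le_one (p) (hp : p ∈ Module.support R (ExtModule R (R ⧸ 𝔞) M i ⧸ N)) :
      Order.coheight p ≤ 1 :=
    hs p (support_ext_subset i (Module.support_subset_of_surjective _ N.mkQ_surjective hp))
      (mem_of_mem_support hsN hp)
  have : Module.Finite R (torsionBySet R (ExtModule R (R ⧸ 𝔞) M i ⧸ N) (Ideal.span {s})) := by
    rw [← Ideal.submodule_span_eq, torsionBySet_span_singleton_eq]
    exact finite_torsionBy_ext_quotient hM h hs N.mkQ N.mkQ_surjective (by rwa [ker_mkQ])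
  obtain ⟨T, mem_T, hT⟩ := exists_submonoid_of_finite 1
    (finite_setOf_coheight_eq (isTorsionIdeal_span_singleton hsN) (d := 1) coheight_le_one)
    (fun p hp ↦ hp.2.ge)
  obtain ⟨K, hK, hKT⟩ := exists_fg_forall_exists_mem_smul_ext_quotient_eq_zero hT hM hd
    (h 0 (by lia)) (h 1 (by lia)) i
  refine ⟨s, hs, N ⊔ K, hN.sup hK, fun z ↦ ?_, fun p hp ↦ ?_⟩
  · obtain ⟨z, rfl⟩ := factor_surjective (le_sup_left : N ≤ N ⊔ K) z
    exact (hsN z).imp fun n hn ↦ by rw [← map_smul, hn, map_zero]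
  · obtain ⟨t, ht, htp⟩ := exists_mem_of_mem_support hKT <|
      Module.support_subset_of_surjective _ (factor_surjective (le_sup_right : K ≤ N ⊔ K)) hp
    exact coheight_le_of_mem (d := 0) (by simpa using coheight_le_one)
      (by simpa using (mem_T t).mp ht)
      (Module.support_subset_of_surjective _ (factor_surjective (le_sup_left : N ≤ N ⊔ K)) hp) htp

end TwoDimensionalExt

section Completion

theorem isPrecomplete_of_finite {R M : Type*} [CommRing R] {I : Ideal R} [IsPrecomplete I R]
    [AddCommGroup M] [Module R M] [Module.Finite R M] : IsPrecomplete I M := by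
  rw [← AdicCompletion.of_surjective_iff]
  intro z
  obtain ⟨t, rfl⟩ := AdicCompletion.ofTensorProduct_surjective_of_finite I M z
  induction t with
  | zero => exact ⟨0, by simp⟩
  | add x y hx hy =>
    obtain ⟨⟨m, hm⟩, n, hn⟩ := hx, hy
    exact ⟨m + n, by simp_all⟩
  | tmul a m =>
    obtain ⟨r, rfl⟩ := AdicCompletion.of_surjective I R a
    exact ⟨r • m, by rw [AdicCompletion.ofTensorProduct_tmul, map_smul]; rfl⟩

theorem finite_of_finite_quotient_smul_top {R M : Type*} [CommRing R] {I : Ideal R}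
    [IsPrecomplete I R] [AddCommGroup M] [Module R M] [IsHausdorff I M]
    [Module.Finite R (M ⧸ (I • ⊤ : Submodule R M))] : Module.Finite R M := by
  obtain ⟨n, g, hg⟩ := Module.Finite.exists_fin' R (M ⧸ (I • ⊤ : Submodule R M))
  choose t ht using fun i : Fin n ↦ (I • ⊤ : Submodule R M).mkQ_surjective (g (Pi.single i 1))
  have mkQ_comp : (I • ⊤ : Submodule R M).mkQ ∘ₗ Fintype.linearCombination R t = g := by
    refine LinearMap.pi_ext' fun i ↦ LinearMap.ext_ring ?_
    simp [← ht, Fintype.linearCombination_apply_single]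
  have : IsPrecomplete I (Fin n → R) := isPrecomplete_of_finite
  exact .of_surjective (Fintype.linearCombination R t)
    (surjective_of_mkQ_comp_surjective (I := I) (mkQ_comp ▸ hg))

theorem exists_ringHom_adicCompletion {A S : Type*} [CommRing A] [CommRing S] {K : Ideal A}
    {J : Ideal S} [IsAdicComplete J S] {φ : A →+* S} (hφ : K ≤ J.comap φ) :
    ∃ f : AdicCompletion K A →+* S, f.comp (algebraMap A (AdicCompletion K A)) = φ := by
  have pow_le (k : ℕ) : K ^ k ≤ (J ^ k).comap φ :=
    (Ideal.pow_right_mono hφ k).trans (Ideal.le_comap_pow φ k)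
  let F (k : ℕ) : AdicCompletion K A →+* S ⧸ J ^ k :=
    (Ideal.quotientMap (J ^ k) φ (pow_le k)).comp (AdicCompletion.evalₐ K k : _ →+* _)
  have factorPow_comp {k l : ℕ} (hkl : k ≤ l) :
      (Ideal.Quotient.factorPow J hkl).comp (F l) = F k := by
    ext x
    obtain ⟨x, rfl⟩ := AdicCompletion.mk_surjective _ _ x
    have : Ideal.Quotient.mk (K ^ k) (x.val l) = Ideal.Quotient.mk (K ^ k) (x.val k) :=
      Ideal.Quotient.eq.mpr (by simpa using SModEq.sub_mem.mp (x.2 hkl).symm)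
    simpa [F] using congrArg (Ideal.quotientMap (J ^ k) φ (pow_le k)) this
  refine ⟨IsAdicComplete.liftRingHom J F factorPow_comp, RingHom.ext fun a ↦ ?_⟩
  refine (IsHausdorff.eq_iff_smodEq (I := J)).mpr fun k ↦ SModEq.sub_mem.mpr ?_
  have := IsAdicComplete.mk_liftRingHom J F factorPow_comp k (algebraMap _ _ a)
  rw [show F k (algebraMap _ _ a) = Ideal.Quotient.mk (J ^ k) (φ a) by simp [F]] at this
  simpa using Ideal.Quotient.eq.mp this

/-- Writing `J = (g₁, …, gₙ)`, the map `R[X₁, …, Xₙ] → S`, `Xᵢ ↦ gᵢ`, extends to a surjection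
`R⟦X₁, …, Xₙ⟧ → S`. -/
theorem isNoetherianRing_of_isAdicComplete {R S : Type*} [CommRing R] [IsNoetherianRing R]
    [CommRing S] [Algebra R S] {J : Ideal S} [IsAdicComplete J S] (hJ : J.FG)
    (h : Function.Surjective ((Ideal.Quotient.mk J).comp (algebraMap R S))) :
    IsNoetherianRing S := by
  obtain ⟨n, g, rfl⟩ := fg_iff_exists_fin_generating_family.mp hJ
  let A := MvPolynomial (Fin n) R
  let K : Ideal A := MvPolynomial.idealOfVars (Fin n) R
  let φ : A →+* S := (MvPolynomial.aeval g : A →ₐ[R] S)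
  have map_K : K.map φ = span S (Set.range g) := by
    rw [Ideal.map_span, ← Set.range_comp]
    congr 2
    ext j
    exact MvPolynomial.aeval_X g j
  obtain ⟨f, hf⟩ := exists_ringHom_adicCompletion (Ideal.map_le_iff_le_comap.mp map_K.le)
  let K' := K.map (algebraMap A (AdicCompletion K A))
  have map_K' : K'.map f = span S (Set.range g) := by rw [Ideal.map_map, hf, map_K]
  have : IsAdicComplete K' (AdicCompletion K A) :=
    AdicCompletion.isAdicComplete_self _ (MvPolynomial.idealOfVars_fg _ _)
  have : IsHausdorff (K'.map f) S := by rw [map_K']; infer_instance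
  have f_surjective : Function.Surjective f := by
    refine surjective_of_mk_map_comp_surjective (I := K') f fun y ↦ ?_
    obtain ⟨y, rfl⟩ := Ideal.Quotient.mk_surjective y
    obtain ⟨r, hr⟩ := h (Ideal.Quotient.mk _ y)
    refine ⟨algebraMap A _ (MvPolynomial.C r), ?_⟩
    rw [RingHom.comp_apply, ← RingHom.comp_apply f, hf, Ideal.Quotient.eq, map_K',
      show φ (MvPolynomial.C r) = algebraMap R S r from MvPolynomial.aeval_C g r]
    exact Ideal.Quotient.eq.mp hr
  have : IsNoetherianRing (AdicCompletion K A) :=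
    isNoetherianRing_of_ringEquiv _ (MvPowerSeries.toAdicCompletionAlgEquiv (Fin n) R).toRingEquiv
  exact isNoetherianRing_of_surjective _ _ f f_surjective

theorem isNoetherianRing_adicCompletion {R : Type*} [CommRing R] [IsNoetherianRing R]
    (I : Ideal R) : IsNoetherianRing (AdicCompletion I R) := by
  have hI := IsNoetherian.noetherian I
  have := AdicCompletion.isAdicComplete_self I hI
  refine isNoetherianRing_of_isAdicComplete (R := R)
    (J := I.map (algebraMap R (AdicCompletion I R))) (Ideal.FG.map hI _) fun y ↦ ?_
  obtain ⟨y, rfl⟩ := Ideal.Quotient.mk_surjective y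
  obtain ⟨r, hr⟩ := Ideal.Quotient.mk_surjective (AdicCompletion.evalOneₐ I y)
  refine ⟨r, Ideal.Quotient.eq.mpr ?_⟩
  rw [← AdicCompletion.ker_evalOneₐ_eq_map I hI, RingHom.mem_ker, map_sub, sub_eq_zero]
  exact hr

end Completion

section Coheight

theorem coheight_eq_ringKrullDim_quotient {R : Type*} [CommRing R] (P : PrimeSpectrum R) :
    (Order.coheight P : WithBot ℕ∞) = ringKrullDim (R ⧸ P.asIdeal) := by
  rw [ringKrullDim_quotient, Order.coheight_eq_krullDim_Ici]
  rfl

variable {R A : Type*} [CommRing R] [IsNoetherianRing R] [CommRing A] [IsNoetherianRing A]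
  [IsLocalRing A]

theorem coheight_le_one_of_forall_mem {P : PrimeSpectrum A} {s : A}
    (hs : s ∈ IsLocalRing.maximalIdeal A)
    (h : ∀ Q : PrimeSpectrum A, P ≤ Q → s ∈ Q.asIdeal → IsMax Q) : Order.coheight P ≤ 1 := by
  have := Module.supportDim_le_supportDim_quotSMulTop_succ (M := A ⧸ P.asIdeal) hs
  rw [Module.supportDim_quotient_eq_ringKrullDim, ← coheight_eq_ringKrullDim_quotient] at this
  have krullDim_le_zero : Module.supportDim A (QuotSMulTop s (A ⧸ P.asIdeal)) ≤ 0 := by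
    have : Subsingleton (Module.support A (QuotSMulTop s (A ⧸ P.asIdeal))) := by
      have eq_closedPoint (Q) (hQ : Q ∈ Module.support A (QuotSMulTop s (A ⧸ P.asIdeal))) :
          Q = IsLocalRing.closedPoint A := by
        rw [Module.support_quotSMulTop, Module.support_eq_zeroLocus,
          Ideal.annihilator_quotient] at hQ
        exact (h Q hQ.1 (hQ.2 rfl)).eq_of_le (IsLocalRing.le_maximalIdeal Q.2.ne_top)
      exact ⟨fun Q Q' ↦ Subtype.ext ((eq_closedPoint Q Q.2).trans (eq_closedPoint Q' Q'.2).symm)⟩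
    exact Order.krullDim_nonpos_of_subsingleton
  exact WithBot.coe_le_coe.mp (this.trans (add_le_add_left krullDim_le_zero 1))

theorem ringKrullDim_le_of_map_eq_maximalIdeal [Algebra R A] {m : Ideal R} [m.IsMaximal]
    (hm : m.map (algebraMap R A) = IsLocalRing.maximalIdeal A) :
    ringKrullDim A ≤ ringKrullDim R := by
  have : (IsLocalRing.maximalIdeal A).LiesOver m :=
    ⟨‹m.IsMaximal›.eq_of_le (Ideal.IsPrime.under R _).ne_top (Ideal.map_le_iff_le_comap.mp hm.le)⟩
  have := Ideal.height_le_height_add_of_liesOver m (IsLocalRing.maximalIdeal A)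
  rw [hm, Ideal.map_quotient_self, Ideal.height_bot, add_zero] at this
  rw [← IsLocalRing.maximalIdeal_height_eq_ringKrullDim]
  exact (WithBot.coe_le_coe.mpr this).trans
    (Ideal.height_le_ringKrullDim_of_ne_top ‹m.IsMaximal›.ne_top)

theorem coheight_le_coheight_comap [Algebra R A] {m : Ideal R} [m.IsMaximal]
    (hm : m.map (algebraMap R A) = IsLocalRing.maximalIdeal A) (P : PrimeSpectrum A) :
    Order.coheight P ≤ Order.coheight (PrimeSpectrum.comap (algebraMap R A) P) := by
  let p := PrimeSpectrum.comap (algebraMap R A) P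
  let := Ideal.Quotient.algebraQuotientOfLEComap (P := P.asIdeal) (p := p.asIdeal) le_rfl
  have : IsLocalRing (A ⧸ P.asIdeal) := .of_surjective' _ Ideal.Quotient.mk_surjective
  have map_m : (m.map (Ideal.Quotient.mk p.asIdeal)).map
      (algebraMap (R ⧸ p.asIdeal) (A ⧸ P.asIdeal)) = IsLocalRing.maximalIdeal (A ⧸ P.asIdeal) := by
    rw [Ideal.map_map]
    change m.map ((Ideal.Quotient.mk P.asIdeal).comp (algebraMap R A)) = _
    rw [← Ideal.map_map, hm]
    exact IsLocalRing.map_maximalIdeal_of_surjective _ Ideal.Quotient.mk_surjective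
  have : (m.map (Ideal.Quotient.mk p.asIdeal)).IsMaximal :=
    (Ideal.map_eq_top_or_isMaximal_of_surjective _ Ideal.Quotient.mk_surjective ‹_›).resolve_left
      fun h ↦ (IsLocalRing.maximalIdeal.isMaximal _).ne_top (by rw [← map_m, h, Ideal.map_top])
  refine WithBot.coe_le_coe.mp ?_
  rw [coheight_eq_ringKrullDim_quotient, coheight_eq_ringKrullDim_quotient]
  exact ringKrullDim_le_of_map_eq_maximalIdeal map_m

end Coheight

section TateModule

variable {R : Type*} [CommRing R] {s : R} {B : Type*} [AddCommGroup B] [Module R B]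

theorem pow_le_annihilator_torsionBy_pow {I : Ideal R}
    (h : I ≤ Module.annihilator R (torsionBy R B s)) (n : ℕ) :
    I ^ n ≤ Module.annihilator R (torsionBy R B (s ^ n)) := by
  induction n with
  | zero =>
    refine fun r _ ↦ Module.mem_annihilator.mpr fun b ↦ Subtype.ext ?_
    have hb : (b : B) = 0 := by simpa using b.2
    simp [hb]
  | succ n ih =>
    rw [pow_succ]
    refine Ideal.mul_le.mpr fun x hx y hy ↦ Module.mem_annihilator.mpr fun b ↦ ?_
    have hb : s • s ^ n • (b : B) = 0 := by rw [← mul_smul, ← pow_succ']; exact b.2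
    have hyb : s ^ n • y • (b : B) = 0 := by
      rw [smul_comm]
      exact congrArg Subtype.val (Module.mem_annihilator.mp (h hy) ⟨_, hb⟩)
    rw [mul_smul]
    exact Subtype.ext (congrArg (Subtype.val : torsionBy R B (s ^ n) → B)
      (Module.mem_annihilator.mp (ih hx) ⟨_, hyb⟩))

variable (s B) in
/-- The `s`-adic Tate module of `B`: the inverse limit of the torsion modules `B[sⁿ]` along
multiplication by `s`, encoded as sequences `b` with `b 0 = 0` and `s • b (n + 1) = b n`. -/
def tateModule : Submodule R (ℕ → B) where
  carrier := {b | b 0 = 0 ∧ ∀ n, s • b (n + 1) = b n}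
  add_mem' ha hb := ⟨by simp [ha.1, hb.1], fun n ↦ by simp [ha.2, hb.2]⟩
  zero_mem' := ⟨rfl, fun n ↦ by simp⟩
  smul_mem' r b hb := ⟨by simp [hb.1], fun n ↦ by simp [smul_comm s r, hb.2]⟩

namespace tateModule

theorem pow_smul_apply (b : tateModule s B) (n : ℕ) : s ^ n • (b : ℕ → B) n = 0 := by
  induction n with
  | zero => simpa using b.2.1
  | succ n ih => rw [pow_succ, mul_smul, b.2.2, ih]

theorem exists_apply_eq (hs : Function.Surjective fun b : B ↦ s • b) {b : B} {n : ℕ}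
    (hb : s ^ n • b = 0) : ∃ x : tateModule s B, (x : ℕ → B) n = b := by
  choose σ hσ using show ∀ b, ∃ c, s • c = b from hs
  have pow_smul_iterate (j : ℕ) : s ^ j • σ^[j] b = b := by
    induction j with
    | zero => simp
    | succ j ih => rw [pow_succ, mul_smul, Function.iterate_succ_apply', hσ, ih]
  refine ⟨⟨fun j ↦ s ^ n • σ^[j] b, hb, fun j ↦ ?_⟩, pow_smul_iterate n⟩
  rw [smul_comm, Function.iterate_succ_apply', hσ]

theorem annihilator_le (hs : Function.Surjective fun b : B ↦ s • b)
    (hB : ∀ b : B, ∃ n : ℕ, s ^ n • b = 0) :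
    Module.annihilator R (tateModule s B) ≤ Module.annihilator R B := by
  refine fun r hr ↦ Module.mem_annihilator.mpr fun b ↦ ?_
  obtain ⟨n, hn⟩ := hB b
  obtain ⟨x, rfl⟩ := exists_apply_eq hs hn
  exact congrFun (congrArg Subtype.val (Module.mem_annihilator.mp hr x)) n

theorem isHausdorff {m : Ideal R} {k : ℕ}
    (hk : m ^ k ≤ Module.annihilator R (torsionBy R B s)) : IsHausdorff m (tateModule s B) := by
  refine ⟨fun x hx ↦ Subtype.ext (funext fun n ↦ ?_)⟩
  refine smul_induction_on (p := fun y : tateModule s B ↦ (y : ℕ → B) n = 0)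
    (SModEq.zero.mp (hx (k * n))) (fun r hr y _ ↦ ?_) fun y z hy hz ↦ ?_
  · rw [pow_mul] at hr
    exact congrArg Subtype.val (Module.mem_annihilator.mp
      (pow_le_annihilator_torsionBy_pow hk n hr) ⟨_, pow_smul_apply y n⟩)
  · change (y : ℕ → B) n + (z : ℕ → B) n = 0
    rw [hy, hz, add_zero]

variable (s B) in
/-- The projection of the Tate module onto its component `B[s]`. -/
def toTorsionBy : tateModule s B →ₗ[R] torsionBy R B s :=
  LinearMap.codRestrict _ (LinearMap.proj 1 ∘ₗ (tateModule s B).subtype) fun b ↦ by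
    rw [mem_torsionBy_iff]
    exact (b.2.2 0).trans b.2.1

variable (s B) in
theorem ker_toTorsionBy_le :
    LinearMap.ker (toTorsionBy s B) ≤ (Ideal.span {s} • ⊤ : Submodule R (tateModule s B)) := by
  intro b hb
  have shift_mem : (fun n ↦ (b : ℕ → B) (n + 1)) ∈ tateModule s B :=
    ⟨congrArg Subtype.val hb, fun n ↦ b.2.2 (n + 1)⟩
  rw [show b = s • ⟨_, shift_mem⟩ from Subtype.ext (funext fun n ↦ (b.2.2 n).symm)]
  exact smul_mem_smul (mem_span_singleton_self s) mem_top

theorem finite [IsNoetherianRing R] [Module.Finite R (torsionBy R B s)] {m : Ideal R}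
    [IsPrecomplete m R] (hsm : s ∈ m) {k : ℕ}
    (hk : m ^ k ≤ Module.annihilator R (torsionBy R B s)) : Module.Finite R (tateModule s B) := by
  have := isHausdorff hk
  have := Module.Finite.equiv (toTorsionBy s B).quotKerEquivRange.symm
  have ker_le : LinearMap.ker (toTorsionBy s B) ≤ m • ⊤ := (ker_toTorsionBy_le s B).trans
    (smul_mono_left ((Ideal.span_singleton_le_iff_mem _).mpr hsm))
  have := Module.Finite.of_surjective _ (factor_surjective ker_le)
  exact finite_of_finite_quotient_smul_top (I := m)

theorem le_of_mem_support [Module.Finite R (tateModule s B)] {I : Ideal R}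
    (hI : I ≤ Module.annihilator R (torsionBy R B s)) {Q : PrimeSpectrum R}
    (hQ : Q ∈ Module.support R (tateModule s B)) (hsQ : s ∈ Q.asIdeal) : I ≤ Q.asIdeal := by
  have hQs : Q ∈ Module.support R
      (tateModule s B ⧸ (Ideal.span {s} • ⊤ : Submodule R (tateModule s B))) := by
    rw [Module.support_quotient]
    exact ⟨hQ, by simpa using hsQ⟩
  refine le_trans (fun r hr ↦ Module.mem_annihilator.mpr fun z ↦ ?_)
    (Module.mem_support_iff_of_finite.mp hQs)
  obtain ⟨z, rfl⟩ := mkQ_surjective _ z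
  rw [← map_smul, mkQ_apply, Quotient.mk_eq_zero]
  refine ker_toTorsionBy_le s B (LinearMap.mem_ker.mpr ?_)
  rw [map_smul]
  exact Module.mem_annihilator.mp (hI hr) _

end tateModule

theorem le_of_annihilator_le_of_surjective_smul [IsNoetherianRing R]
    [Module.Finite R (torsionBy R B s)] {m : Ideal R} [IsPrecomplete m R] (hsm : s ∈ m)
    (hs : Function.Surjective fun b : B ↦ s • b) (hB : ∀ b : B, ∃ n : ℕ, s ^ n • b = 0) {k : ℕ}
    (hk : m ^ k ≤ Module.annihilator R (torsionBy R B s)) {Q : PrimeSpectrum R}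
    (hQ : Module.annihilator R B ≤ Q.asIdeal) (hsQ : s ∈ Q.asIdeal) : m ≤ Q.asIdeal := by
  have := tateModule.finite hsm hk
  have mem_support : Q ∈ Module.support R (tateModule s B) :=
    Module.mem_support_iff_of_finite.mpr ((tateModule.annihilator_le hs hB).trans hQ)
  exact Q.2.le_of_pow_le (tateModule.le_of_mem_support hk mem_support hsQ)

end TateModule

section JustNonFinite

variable {R : Type*} [CommRing R] {B : Type*} [AddCommGroup B] [Module R B]

theorem smul_eq_zero_or_surjective_smul (hB : ∀ C : Submodule R B, C ≠ ⊤ → C.FG)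
    (h : ¬ Module.Finite R B) (r : R) :
    (∀ b : B, r • b = 0) ∨ Function.Surjective fun b : B ↦ r • b := by
  let f := LinearMap.lsmul R B r
  by_cases range_eq : LinearMap.range f = ⊤
  · exact .inr (LinearMap.range_eq_top.mp range_eq)
  by_cases ker_eq : LinearMap.ker f = ⊤
  · exact .inl (LinearMap.congr_fun (LinearMap.ker_eq_top.mp ker_eq))
  refine absurd (Module.finite_def.mpr (fg_of_fg_map_of_fg_inf_ker f ?_ ?_)) h
  · rw [Submodule.map_top]
    exact hB _ range_eq
  · rw [top_inf_eq]
    exact hB _ ker_eq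

theorem isPrime_annihilator_of_forall_fg (hB : ∀ C : Submodule R B, C ≠ ⊤ → C.FG)
    (h : ¬ Module.Finite R B) : (Module.annihilator R B).IsPrime := by
  refine ⟨fun htop ↦ h ?_, fun {x y} hxy ↦ ?_⟩
  · have := Module.annihilator_eq_top_iff.mp htop
    infer_instance
  · refine (smul_eq_zero_or_surjective_smul hB h x).imp Module.mem_annihilator.mpr fun hx ↦ ?_
    refine Module.mem_annihilator.mpr fun b ↦ ?_
    obtain ⟨c, rfl⟩ := hx b
    rw [← mul_smul, mul_comm]
    exact Module.mem_annihilator.mp hxy c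

theorem exists_submodule_forall_fg_of_not_finite [IsArtinian R B] (h : ¬ Module.Finite R B) :
    ∃ C : Submodule R B, ¬ Module.Finite R C ∧ ∀ D : Submodule R C, D ≠ ⊤ → D.FG := by
  obtain ⟨C, hC, hmin⟩ := IsArtinian.set_has_minimal {C : Submodule R B | ¬ C.FG}
    ⟨⊤, fun htop ↦ h (Module.finite_def.mpr htop)⟩
  refine ⟨C, fun hfin ↦ hC (Module.Finite.iff_fg.mp hfin), fun D hD ↦ ?_⟩
  refine fg_of_fg_map_injective _ C.subtype_injective (by_contra fun hfg ↦ hmin _ hfg ?_)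
  exact (map_subtype_le C D).lt_of_ne fun heq ↦ hD (map_injective_of_injective C.subtype_injective
    (heq.trans (map_subtype_top C).symm))

end JustNonFinite

section CompleteLocal

variable {R : Type u} [CommRing R] [IsNoetherianRing R] [IsLocalRing R]
  {M : Type u} [AddCommGroup M] [Module R M]

theorem exists_maximalIdeal_pow_le_annihilator [Module.Finite R M]
    (h : ∀ p ∈ Module.support R M, p.asIdeal.IsMaximal) :
    ∃ k : ℕ, IsLocalRing.maximalIdeal R ^ k ≤ Module.annihilator R M := by
  refine Ideal.exists_pow_le_of_le_radical_of_fg ?_ (IsNoetherian.noetherian _)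
  rw [Ideal.radical_eq_sInf]
  refine le_sInf fun p ⟨hp, hpp⟩ ↦ ?_
  have := h ⟨p, hpp⟩ (Module.mem_support_iff_of_finite.mpr hp)
  exact (IsLocalRing.eq_maximalIdeal this).ge

variable [IsAdicComplete (IsLocalRing.maximalIdeal R) R] {s : R}

theorem coheight_le_one_of_surjective_smul (hM : ∀ p ∈ Module.support R M, p.asIdeal.IsMaximal)
    (hs : Function.Surjective fun m : M ↦ s • m) (h : ∀ m : M, ∃ n : ℕ, s ^ n • m = 0)
    [Module.Finite R (torsionBy R M s)] {P : PrimeSpectrum R}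
    (hP : Module.annihilator R M ≤ P.asIdeal) : Order.coheight P ≤ 1 := by
  obtain ⟨k, hk⟩ := exists_maximalIdeal_pow_le_annihilator (M := torsionBy R M s) fun p hp ↦
    hM p (Module.support_subset_of_injective _ (injective_subtype _) hp)
  have hsm : s ∈ IsLocalRing.maximalIdeal R := by
    by_contra hs
    have : IsUnit s := by simpa using hs
    refine P.2.ne_top (top_unique (le_trans (fun r _ ↦ Module.mem_annihilator.mpr fun m ↦ ?_) hP))
    obtain ⟨n, hn⟩ := h m
    rw [(this.pow n).smul_eq_zero.mp hn, smul_zero]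
  refine coheight_le_one_of_forall_mem hsm fun Q hPQ hsQ ↦ PrimeSpectrum.isMax_iff.mpr ?_
  have := le_of_annihilator_le_of_surjective_smul hsm hs h hk (hP.trans hPQ) hsQ
  rw [← (IsLocalRing.maximalIdeal.isMaximal R).eq_of_le Q.2.ne_top this]
  infer_instance

theorem finite_of_forall_finite_torsionBy (hM : ∀ p ∈ Module.support R M, p.asIdeal.IsMaximal)
    (hs : ∀ m : M, ∃ n : ℕ, s ^ n • m = 0) {T : Set (PrimeSpectrum R)} (hT : T.Finite)
    (hTd : ∀ p ∈ T, ¬ Order.coheight p ≤ 1) (hsT : ∀ p ∈ T, s ∉ p.asIdeal)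
    (h : ∀ r : R, (∀ p ∈ T, r ∉ p.asIdeal) → Module.Finite R (torsionBy R M r)) :
    Module.Finite R M := by
  have := h s hsT
  have : IsArtinian R (torsionBy R M s) := isArtinian_of_isMaximal_of_mem_support fun p hp ↦
    hM p (Module.support_subset_of_injective _ (injective_subtype _) hp)
  have : IsArtinian R M := isArtinian_of_torsionBy hs
  by_contra h_not_finite
  obtain ⟨B, hB, hBfg⟩ := exists_submodule_forall_fg_of_not_finite h_not_finite
  have := isPrime_annihilator_of_forall_fg hBfg hB
  obtain ⟨p, hpT, hp⟩ : ∃ p ∈ T, Module.annihilator R B ≤ p.asIdeal := by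
    let m : PrimeSpectrum R := IsLocalRing.closedPoint R
    rw [← Ideal.subset_union_prime_finite hT m m fun p _ _ _ ↦ p.2]
    intro r hr
    by_contra hrT
    have := h r fun p hp hrp ↦ hrT (Set.mem_biUnion hp hrp)
    have le_torsionBy : B ≤ torsionBy R M r := fun b hb ↦
      congrArg Subtype.val (Module.mem_annihilator.mp hr ⟨b, hb⟩)
    exact hB (.of_injective _ (inclusion_injective le_torsionBy))
  have surjective_smul := (smul_eq_zero_or_surjective_smul hBfg hB s).resolve_left fun h0 ↦
    hsT p hpT (hp (Module.mem_annihilator.mpr h0))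
  have : Module.Finite R (torsionBy R B s) := by
    let f : torsionBy R B s →ₗ[R] torsionBy R M s :=
      B.subtype.restrict fun b hb ↦ congrArg Subtype.val hb
    exact .of_injective f fun x y hxy ↦
      Subtype.ext (Subtype.ext (Subtype.ext_iff.mp hxy :))
  refine hTd p hpT (coheight_le_one_of_surjective_smul (M := B) (fun q hq ↦ hM q
    (Module.support_subset_of_injective _ B.injective_subtype hq)) surjective_smul (fun b ↦ ?_) hp)
  exact (hs b).imp fun n hn ↦ Subtype.ext hn

end CompleteLocal

section MaximalIdeal

variable {R A : Type u} [CommRing R] [CommRing A] [Algebra R A] [Module.Flat R A]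

theorem notMem_support_of_subsingleton_baseChange {X : Type u} [AddCommGroup X] [Module R X]
    [Subsingleton (A ⊗[R] X)] {p : PrimeSpectrum R} (hp : p.asIdeal.map (algebraMap R A) ≠ ⊤) :
    p ∉ Module.support R X := by
  intro hpX
  obtain ⟨x, hx⟩ := Module.mem_support_iff_exists_annihilator.mp hpX
  rw [annihilator_span_singleton] at hx
  let I := LinearMap.ker (LinearMap.toSpanSingleton R X x)
  have injective : Function.Injective (I.liftQ (LinearMap.toSpanSingleton R X x) le_rfl) :=
    LinearMap.ker_eq_bot.mp (ker_liftQ_eq_bot' _ _ rfl)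
  have : Subsingleton (A ⊗[R] (R ⧸ I)) :=
    (Module.Flat.lTensor_preserves_injective_linearMap (M := A) _ injective).subsingleton
  have : Subsingleton (A ⊗[R] (R ⧸ p.asIdeal)) :=
    (LinearMap.lTensor_surjective A (factor_surjective hx)).subsingleton
  have := (tensorQuotEquivQuotSMul A p.asIdeal).symm.subsingleton
  rw [Submodule.Quotient.subsingleton_iff, Ideal.smul_top_eq_map] at this
  exact hp ((restrictScalars_eq_top_iff R A _).mp this)

variable [IsNoetherianRing R] {𝔞 : Ideal R} {M : Type u} [AddCommGroup M] [Module R M]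

theorem finite_torsionBy_baseChange_ext_quotient [IsNoetherianRing A] (hM : IsTorsionIdeal 𝔞 M)
    (h : ∀ i ≤ 2, Module.Finite R (ExtModule R (R ⧸ 𝔞) M i)) {i : ℕ}
    {N : Submodule R (ExtModule R (R ⧸ 𝔞) M i)} (hN : N.FG) {r : A}
    (hr : ∀ P ∈ Module.support A (A ⊗[R] M), r ∈ P.asIdeal → Order.coheight P ≤ 1) :
    Module.Finite A (torsionBy A (A ⊗[R] (ExtModule R (R ⧸ 𝔞) M i ⧸ N)) r) := by
  let e (j : ℕ) := extQuotientBaseChangeEquiv A M 𝔞 j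
  refine finite_torsionBy_ext_quotient (hM.baseChange A)
    (fun j hj ↦ have := h j hj; .equiv (e j)) hr (N.mkQ.baseChange A ∘ₗ (e i).symm.toLinearMap)
    ((LinearMap.lTensor_surjective A N.mkQ_surjective).comp (e i).symm.surjective) ?_
  have ker_eq : LinearMap.ker (N.mkQ.baseChange A) = LinearMap.range (N.subtype.baseChange A) :=
    SetLike.ext (lTensor_exact A (LinearMap.exact_subtype_mkQ N) N.mkQ_surjective)
  have : Module.Finite R N := .of_fg hN
  rw [LinearMap.ker_comp, ker_eq, ← map_equiv_eq_comap_symm]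
  exact (Module.Finite.iff_fg.mp inferInstance).map _

theorem finite_baseChange_ext_quotient [IsNoetherianRing A] [IsLocalRing A]
    [IsAdicComplete (IsLocalRing.maximalIdeal A) A] {m : Ideal R} [m.IsMaximal]
    (hm : m.map (algebraMap R A) = IsLocalRing.maximalIdeal A) (hM : IsTorsionIdeal 𝔞 M)
    (hd : ∀ p ∈ Module.support R M, Order.coheight p ≤ 2)
    (h : ∀ i ≤ 2, Module.Finite R (ExtModule R (R ⧸ 𝔞) M i)) {i : ℕ} {s : R}
    (hs : ∀ p ∈ Module.support R M, s ∈ p.asIdeal → Order.coheight p ≤ 1)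
    {N : Submodule R (ExtModule R (R ⧸ 𝔞) M i)} (hN : N.FG)
    (hsN : ∀ z : ExtModule R (R ⧸ 𝔞) M i ⧸ N, ∃ n : ℕ, s ^ n • z = 0)
    (hE : ∀ p ∈ Module.support R (ExtModule R (R ⧸ 𝔞) M i ⧸ N), Order.coheight p ≤ 0) :
    Module.Finite A (A ⊗[R] (ExtModule R (R ⧸ 𝔞) M i ⧸ N)) := by
  have hMA := hM.baseChange A
  have hdA (P) (hP : P ∈ Module.support A (A ⊗[R] M)) : Order.coheight P ≤ 2 :=
    (coheight_le_coheight_comap hm P).trans (hd _ (comap_mem_support hP))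
  have : Module.Finite A (torsionBySet A (A ⊗[R] M) (𝔞.map (algebraMap R A) : Set A)) := by
    have := h 0 (by lia)
    have := Module.Finite.equiv (extQuotientBaseChangeEquiv A M 𝔞 0)
    exact .equiv (extZeroEquiv _ _)
  have two_not_le_one : ¬ (2 : ℕ∞) ≤ 1 := by decide
  refine finite_of_forall_finite_torsionBy (s := algebraMap R A s) (fun P hP ↦ ?_) (fun z ↦ ?_)
    (finite_setOf_coheight_eq hMA (d := 2) hdA) (fun P hP ↦ hP.2 ▸ two_not_le_one)
    (fun P hP hsP ↦ ?_) fun r hr ↦ finite_torsionBy_baseChange_ext_quotient hM h hN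
      fun P ↦ coheight_le_of_mem (d := 1) (by simpa [one_add_one_eq_two] using hdA)
        (by simpa [one_add_one_eq_two] using hr)
  · exact PrimeSpectrum.isMax_iff.mp <| Order.coheight_eq_zero.mp <| nonpos_iff_eq_zero.mp <|
      (coheight_le_coheight_comap hm P).trans (hE _ (comap_mem_support hP))
  · obtain ⟨n, hn⟩ := (isTorsionIdeal_span_singleton hsN).baseChange A z
    exact ⟨n, hn _ (Ideal.pow_mem_pow
      (Ideal.mem_map_of_mem _ (Ideal.mem_span_singleton_self s)) n)⟩
  · exact two_not_le_one <| hP.2.ge.trans <| (coheight_le_coheight_comap hm P).trans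
      (hs _ (comap_mem_support hP.1) hsP)

theorem exists_fg_notMem_support_ext_quotient_quotient (hM : IsTorsionIdeal 𝔞 M)
    (hd : ∀ p ∈ Module.support R M, Order.coheight p ≤ 2)
    (h : ∀ i ≤ 2, Module.Finite R (ExtModule R (R ⧸ 𝔞) M i)) {i : ℕ} {s : R}
    (hs : ∀ p ∈ Module.support R M, s ∈ p.asIdeal → Order.coheight p ≤ 1)
    {N : Submodule R (ExtModule R (R ⧸ 𝔞) M i)} (hN : N.FG)
    (hsN : ∀ z : ExtModule R (R ⧸ 𝔞) M i ⧸ N, ∃ n : ℕ, s ^ n • z = 0)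
    (hE : ∀ p ∈ Module.support R (ExtModule R (R ⧸ 𝔞) M i ⧸ N), Order.coheight p ≤ 0)
    (p : PrimeSpectrum R) (hp : p.asIdeal.IsMaximal) :
    ∃ K : Submodule R (ExtModule R (R ⧸ 𝔞) M i ⧸ N), K.FG ∧
      p ∉ Module.support R ((ExtModule R (R ⧸ 𝔞) M i ⧸ N) ⧸ K) := by
  let m := p.asIdeal
  let A := AdicCompletion m R
  have hm_fg : m.FG := IsNoetherian.noetherian m
  have isMaximal : (m.map (algebraMap R A)).IsMaximal :=
    AdicCompletion.isMaximal_map_of_le m m le_rfl hm_fg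
  have isAdicComplete : IsAdicComplete (m.map (algebraMap R A)) A :=
    AdicCompletion.isAdicComplete_self m hm_fg
  have : IsNoetherianRing A := isNoetherianRing_adicCompletion m
  have : IsLocalRing A := isLocalRing_of_isAdicComplete_maximal (m.map (algebraMap R A))
  have map_m : m.map (algebraMap R A) = IsLocalRing.maximalIdeal A :=
    IsLocalRing.eq_maximalIdeal isMaximal
  have : IsAdicComplete (IsLocalRing.maximalIdeal A) A := map_m ▸ isAdicComplete
  have := finite_baseChange_ext_quotient map_m hM hd h hs hN hsN hE
  obtain ⟨K, hK, _⟩ := exists_fg_subsingleton_baseChange_quotient (R := R) (A := A)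
    (M := ExtModule R (R ⧸ 𝔞) M i ⧸ N)
  exact ⟨K, hK, notMem_support_of_subsingleton_baseChange isMaximal.ne_top⟩

end MaximalIdeal

section TwoDimensional

variable {R : Type u} [CommRing R]

theorem finite_of_forall_exists_fg_notMem_support {E : Type*} [AddCommGroup E] [Module R E]
    (hE : (Module.support R E).Finite)
    (h : ∀ p ∈ Module.support R E, ∃ K : Submodule R E, K.FG ∧ p ∉ Module.support R (E ⧸ K)) :
    Module.Finite R E := by
  choose K hK hpK using fun p : Module.support R E ↦ h p p.2
  have := hE.to_subtype
  have support_eq_empty : Module.support R (E ⧸ ⨆ p, K p) = ∅ := by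
    refine Set.eq_empty_of_forall_notMem fun p hp ↦ ?_
    have hpE := Module.support_subset_of_surjective _ (mkQ_surjective _) hp
    exact hpK ⟨p, hpE⟩ (Module.support_subset_of_surjective _
      (factor_surjective (le_iSup K ⟨p, hpE⟩)) hp)
  rw [Module.support_eq_empty_iff, Submodule.Quotient.subsingleton_iff] at support_eq_empty
  exact Module.finite_def.mpr (support_eq_empty ▸ fg_iSup K hK)

variable [IsNoetherianRing R] {𝔞 : Ideal R} {M : Type u} [AddCommGroup M] [Module R M]

theorem finite_ext_of_coheight_le_two (hM : IsTorsionIdeal 𝔞 M)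
    (hd : ∀ p ∈ Module.support R M, Order.coheight p ≤ 2)
    (h : ∀ i ≤ 2, Module.Finite R (ExtModule R (R ⧸ 𝔞) M i)) (i : ℕ) :
    Module.Finite R (ExtModule R (R ⧸ 𝔞) M i) := by
  obtain ⟨s, hs, N, hN, hsN, hE⟩ := exists_fg_coheight_support_ext_quotient_le_zero hM hd h i
  have coheight_eq (p) (hp : p ∈ Module.support R (ExtModule R (R ⧸ 𝔞) M i ⧸ N)) :
      Order.coheight p = 0 := nonpos_iff_eq_zero.mp (hE p hp)
  have : Module.Finite R (torsionBySet R (ExtModule R (R ⧸ 𝔞) M i ⧸ N) (Ideal.span {s})) := by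
    rw [← Ideal.submodule_span_eq, torsionBySet_span_singleton_eq]
    exact finite_torsionBy_ext_quotient hM h hs N.mkQ N.mkQ_surjective (by rwa [ker_mkQ])
  have support_finite : (Module.support R (ExtModule R (R ⧸ 𝔞) M i ⧸ N)).Finite :=
    (finite_setOf_coheight_eq (isTorsionIdeal_span_singleton hsN) (d := 0) hE).subset
      fun p hp ↦ ⟨hp, coheight_eq p hp⟩
  have : Module.Finite R (ExtModule R (R ⧸ 𝔞) M i ⧸ N) :=
    finite_of_forall_exists_fg_notMem_support support_finite fun p hp ↦
      exists_fg_notMem_support_ext_quotient_quotient hM hd h hs hN hsN hE p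
        (PrimeSpectrum.isMax_iff.mp (Order.coheight_eq_zero.mp (coheight_eq p hp)))
  have : Module.Finite R N := .of_fg hN
  exact .of_submodule_quotient N

end TwoDimensional

section KrullDimension

theorem coheight_le_of_not_isMin {α : Type*} [Preorder α] {n : ℕ} (h : Order.krullDim α ≤ n + 1)
    {a : α} (ha : ¬ IsMin a) : Order.coheight a ≤ n := by
  obtain ⟨b, hb⟩ := not_isMin_iff.mp ha
  have : Order.coheight b ≤ n + 1 :=
    WithBot.coe_le_coe.mp ((Order.coheight_le_krullDim b).trans h)
  exact (ENat.add_le_add_iff_right ENat.one_ne_top).mp ((Order.coheight_add_one_le hb).trans this)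

variable {R : Type u} [CommRing R] {𝔞 : Ideal R}

theorem coheight_le_of_ringKrullDim_quotient_le {n : ℕ} (h : ringKrullDim (R ⧸ 𝔞) ≤ n)
    {p : PrimeSpectrum R} (hp : p ∈ PrimeSpectrum.zeroLocus (𝔞 : Set R)) :
    Order.coheight p ≤ n := by
  have := ringKrullDim_le_of_surjective (Ideal.Quotient.factor hp)
    (Ideal.Quotient.factor_surjective hp)
  exact_mod_cast (coheight_eq_ringKrullDim_quotient p).trans_le (this.trans h)

variable [IsNoetherianRing R]

theorem exists_not_annihilator_pow_le_of_mem_minimalPrimes {p : Ideal R}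
    (hp : p ∈ minimalPrimes R) (h𝔞 : 𝔞 ≤ p) : ∃ n : ℕ, ¬ (𝔞 ^ n).annihilator ≤ p := by
  have : p.IsPrime := hp.1.1
  let A := Localization.AtPrime p
  have : IsNoetherianRing A := IsLocalization.isNoetherianRing p.primeCompl A inferInstance
  have map_p : p.map (algebraMap R A) = nilradical A := by
    rw [nilradical, ← IsLocalization.AtPrime.radical_map_of_mem_minimalPrimes A p ⊥ hp,
      Ideal.map_bot]
    rfl
  obtain ⟨n, hn⟩ : IsNilpotent (𝔞.map (algebraMap R A)) :=
    (Ideal.FG.isNilpotent_iff_le_nilradical (IsNoetherian.noetherian _)).mpr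
      (map_p ▸ Ideal.map_mono h𝔞)
  refine ⟨n, fun hnp ↦ ?_⟩
  obtain ⟨x, hx⟩ := Module.mem_support_iff_exists_annihilator.mp
    (Module.mem_support_iff_of_finite (M := (𝔞 ^ n : Ideal R)) (p := ⟨p, hp.1.1⟩).mpr hnp)
  have : algebraMap R A x = 0 := by
    rw [← Ideal.mem_bot, ← Ideal.zero_eq_bot, ← hn, ← Ideal.map_pow]
    exact Ideal.mem_map_of_mem _ x.2
  obtain ⟨s, hs⟩ := (IsLocalization.map_eq_zero_iff p.primeCompl A _).mp this
  exact s.2 (hx ((mem_annihilator_span_singleton _ _).mpr (Subtype.ext hs)))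

variable {M : Type u} [AddCommGroup M] [Module R M]

theorem FiniteUpTo.quotient_torsionBySet_annihilator_pow {S : Submonoid R}
    (h : FiniteUpTo S (torsionBySet R M (𝔞 : Set R))) (n : ℕ) :
    FiniteUpTo S (M ⧸ torsionBySet R M ((𝔞 ^ n).annihilator : Set R)) := by
  refine .quotient_torsionBySet_of_smul_mem (L := torsionBySet R M (𝔞 ^ n : Ideal R))
    (fun a ha m ↦ (mem_torsionBySet_iff _ _).mpr fun x ↦ ?_)
    (.of_forall_pow_smul_eq_zero (k := n) (fun x hx m ↦ Subtype.ext ?_)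
      (h.torsionBySet_submodule _))
  · rw [smul_smul, mul_comm, ← smul_eq_mul, mem_annihilator.mp ha x x.2, zero_smul]
  · exact (mem_torsionBySet_iff _ _).mp m.2 ⟨x, hx⟩

theorem exists_forall_annihilator_pow_le (𝔞 : Ideal R) :
    ∃ n : ℕ, ∀ k : ℕ, (𝔞 ^ k).annihilator ≤ (𝔞 ^ n).annihilator := by
  obtain ⟨n, hn⟩ := monotone_stabilizes_iff_noetherian.mpr (inferInstanceAs (IsNoetherian R R))
    ⟨fun n ↦ (𝔞 ^ n).annihilator, fun _ _ hkl ↦ annihilator_mono (Ideal.pow_le_pow_right hkl)⟩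
  exact ⟨n, fun k ↦ (annihilator_mono (Ideal.pow_le_pow_right (le_max_left k n))).trans
    (hn _ (le_max_right k n)).ge⟩

/-- With `I = ⋃ₙ (0 : 𝔞ⁿ)`, the quotient `M ⧸ (0 :_M I)` is finitely generated, and no minimal
prime of `R` lies in the support of `(0 :_M I)`, which therefore has dimension at most two. -/
theorem finite_ext_of_ringKrullDim_le_three (hR : ringKrullDim R ≤ 3) (hM : IsTorsionIdeal 𝔞 M)
    (h : ∀ i ≤ 2, Module.Finite R (ExtModule R (R ⧸ 𝔞) M i)) (i : ℕ) :
    Module.Finite R (ExtModule R (R ⧸ 𝔞) M i) := by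
  obtain ⟨n, hn⟩ := exists_forall_annihilator_pow_le 𝔞
  let L := torsionBySet R M ((𝔞 ^ n).annihilator : Set R)
  simp only [← FiniteUpTo.bot_iff] at h
  have finite_quot (j : ℕ) : FiniteUpTo (⊥ : Submonoid R) (ExtModule R (R ⧸ 𝔞) (M ⧸ L) j) :=
    ((FiniteUpTo.ext_zero_iff.mp (h 0 (by lia))).quotient_torsionBySet_annihilator_pow n).ext j
  have finite_le_two (j : ℕ) (hj : j ≤ 2) :
      FiniteUpTo (⊥ : Submonoid R) (ExtModule R (R ⧸ 𝔞) L j) := by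
    cases j with
    | zero => exact .ext_left_zero L.injective_subtype (h 0 hj)
    | succ j =>
      exact .ext_left_succ j L.injective_subtype (LinearMap.exact_subtype_mkQ L) L.mkQ_surjective
        (finite_quot j) (h _ hj)
  simp only [FiniteUpTo.bot_iff] at finite_le_two
  refine FiniteUpTo.bot_iff.mp <| .ext_of_submodule_quotient L (FiniteUpTo.bot_iff.mpr <|
    finite_ext_of_coheight_le_two (hM.submodule L) (fun p hp ↦ ?_) finite_le_two i) (finite_quot i)
  refine coheight_le_of_not_isMin (n := 2) (hR.trans_eq (by norm_num)) fun hmin ↦ ?_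
  obtain ⟨k, hk⟩ := exists_not_annihilator_pow_le_of_mem_minimalPrimes
    (PrimeSpectrum.isMin_iff.mp hmin) ((hM.submodule L).support_subset hp)
  have le_annihilator : (𝔞 ^ n).annihilator ≤ Module.annihilator R L := fun x hx ↦
    Module.mem_annihilator.mpr fun m ↦ Subtype.ext ((mem_torsionBySet_iff _ _).mp m.2 ⟨x, hx⟩)
  exact hk ((hn k).trans (le_annihilator.trans (Module.annihilator_le_of_mem_support hp)))

end KrullDimension

section ArithmeticRank

variable {R : Type u} [CommRing R] [IsNoetherianRing R] {𝔞 : Ideal R}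

theorem exists_radical_span_range_eq_of_arithRank_le {n : ℕ} (h : arithRank 𝔞 ≤ n) :
    ∃ f : Fin n → R, (Ideal.span (Set.range f)).radical = 𝔞.radical := by
  induction n, h using Nat.le_induction with
  | base =>
    obtain ⟨k, f, hf⟩ := fg_iff_exists_fin_generating_family.mp (IsNoetherian.noetherian 𝔞)
    exact Nat.sInf_mem (s := {n | ∃ f : Fin n → R, _}) ⟨k, f, congrArg Ideal.radical hf⟩
  | succ n _ ih =>
    obtain ⟨f, hf⟩ := ih
    exact ⟨Fin.cons 0 f, by rwa [Fin.range_cons, Ideal.span_insert_zero]⟩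

theorem exists_pow_le_span_pair_of_arithRank_le_two (h : arithRank 𝔞 ≤ 2) :
    ∃ x ∈ 𝔞, ∃ y ∈ 𝔞, ∃ k : ℕ, 𝔞 ^ k ≤ Ideal.span {x, y} := by
  obtain ⟨f, hf⟩ := exists_radical_span_range_eq_of_arithRank_le h
  have mem_radical (i : Fin 2) : f i ∈ 𝔞.radical :=
    hf ▸ Ideal.le_radical (Ideal.subset_span ⟨i, rfl⟩)
  obtain ⟨k, hk⟩ := mem_radical 0
  obtain ⟨l, hl⟩ := mem_radical 1
  refine ⟨_, hk, _, hl, Ideal.exists_pow_le_of_le_radical_of_fg ?_ (IsNoetherian.noetherian 𝔞)⟩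
  refine Ideal.le_radical.trans (hf ▸ Ideal.radical_le_radical_iff.mpr (Ideal.span_le.mpr ?_))
  rintro _ ⟨i, rfl⟩
  fin_cases i
  · exact ⟨k, Ideal.subset_span (Set.mem_insert _ _)⟩
  · exact ⟨l, Ideal.subset_span (Set.mem_insert_of_mem _ rfl)⟩

end ArithmeticRank

end Cofinite

open Cofinite in
theorem isCofinite_iff_of_dim_or_ara_general {R : Type u} [CommRing R] [IsNoetherianRing R]
    (𝔞 : Ideal R) (h : ringKrullDim (R ⧸ 𝔞) ≤ 2 ∨ ringKrullDim R ≤ 3 ∨ arithRank 𝔞 ≤ 2)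
    (M : ModuleCat.{u} R) :
    IsCofinite 𝔞 M ↔
      (Module.support R M ⊆ PrimeSpectrum.zeroLocus (𝔞 : Set R) ∧
        ∀ i : ℕ, i ≤ 2 → Module.Finite R (extIdeal 𝔞 i M)) := by
  refine and_congr_right fun hs ↦ ⟨fun H i _ ↦ H i, fun H ↦ ?_⟩
  have finite_iff (i : ℕ) : Module.Finite R (extIdeal 𝔞 i M) ↔
      Module.Finite R (ExtModule R (R ⧸ 𝔞) M i) :=
    Module.Finite.equiv_iff (extObjEquiv _ M i)
  simp only [finite_iff] at H ⊢
  have hM : IsTorsionIdeal 𝔞 M := isTorsionIdeal_of_support_subset hs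
  obtain h | h | h := h
  · exact finite_ext_of_coheight_le_two hM
      (fun p hp ↦ coheight_le_of_ringKrullDim_quotient_le (n := 2) h (hs hp)) H
  · exact finite_ext_of_ringKrullDim_le_three h hM H
  · obtain ⟨x, hx, y, hy, k, hk⟩ := exists_pow_le_span_pair_of_arithRank_le_two h
    simp only [← FiniteUpTo.bot_iff] at H ⊢
    exact .ext_of_pow_le_span_pair hx hy hk (H 0 (by lia)) (H 1 (by lia)) (H 2 le_rfl)

/-- Yang–Shen, Corollary 2.2: if `dim R/𝔞 = 2`, or `dim R = 3`, or `ara 𝔞 = 2`, then an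
`R`-module `M` is `𝔞`-cofinite if and only if `Supp_R M ⊆ V(𝔞)` and `Ext^i_R(R/𝔞, M)` is
finitely generated for `i = 0, 1, 2`. -/
theorem isCofinite_iff_of_dim_or_ara
    {R : Type u} [CommRing R] [IsNoetherianRing R] (𝔞 : Ideal R)
    (h : ringKrullDim (R ⧸ 𝔞) = 2 ∨ ringKrullDim R = 3 ∨ arithRank 𝔞 = 2)
    (M : ModuleCat.{u} R) :
    IsCofinite 𝔞 M ↔
      (Module.support R M ⊆ PrimeSpectrum.zeroLocus (𝔞 : Set R) ∧
        ∀ i : ℕ, i ≤ 2 → Module.Finite R (extIdeal 𝔞 i M)) :=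
  isCofinite_iff_of_dim_or_ara_general 𝔞 (h.imp Eq.le (Or.imp Eq.le Eq.le)) M
end

section
/- Let (R, 𝔪) be a commutative Noetherian local ring with dim R = d ≥ 1 and let 𝔞 be a proper ideal of R. Then an 𝔞-torsion R-module M is 𝔞-cofinite if and only if the R-module Ext^i_R(R/𝔞, M) is finitely generated for every integer 0 ≤ i ≤ d − 1. -/
open CategoryTheory

universe u

/-!
Write `d = n + 1` and choose, by prime avoidance, elements `x, y₁, …, yₙ` of `𝔞` that generate it
up to radical and such that `y₁, …, yₙ` already do so at every non-maximal prime containing `𝔞`.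

For a bounded below complex whose cohomology is killed by powers of `𝔞`, finite generation of
`Ext^i(R/𝔞, -)` for `i ≤ n` is equivalent to finite generation of the cohomology in degrees `≤ n`.
Applied to the Koszul complex on `x, y₁, …, yₙ` with coefficients in `M`, this shows that the
Koszul cohomology is finitely generated in degrees `≤ n`. In the top degree `n + 1` it is `N/xN`,
where `N` is the top Koszul cohomology on `y₁, …, yₙ`. The kernel of `x` on `N` is finitely
generated, being a quotient of the Koszul cohomology in degree `n`, and away from the maximal ideals
a power of `x` kills `N`. Thus for large `m` the kernel of `x` on `xᵐN` has finite length. A module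
on which every element is killed by a power of `x`, and on which the kernel of `x` has finite
length, has a finitely generated quotient modulo `x`. As the kernel of `N → xᵐN` is finitely
generated too, so is `N/xN`.

So all Koszul cohomology is finitely generated, and therefore so is `Ext(R/𝔞, -)` of the Koszul
complex. As `x, y₁, …, yₙ` kill `R/𝔞`, the latter surjects onto `Ext(R/𝔞, M)`.
-/

section Torsion
open Submodule

variable {R H : Type*} [CommRing R] [IsNoetherianRing R] [AddCommGroup H] [Module R H]
  {𝔞 : Ideal R}

lemma fg_torsionBySet_pow (h : (torsionBySet R H (𝔞 : Set R)).FG) (m : ℕ) :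
    (torsionBySet R H ((𝔞 ^ m : Ideal R) : Set R)).FG := by
  induction m with
  | zero =>
    convert Submodule.fg_bot
    refine (Submodule.eq_bot_iff _).2 fun x hx => ?_
    simpa using (mem_torsionBySet_iff _ _).1 hx ⟨1, by simp⟩
  | succ m ih =>
    obtain ⟨s, hs⟩ := (IsNoetherian.noetherian 𝔞 : 𝔞.FG)
    let f : H →ₗ[R] (s → H) := LinearMap.pi fun a => LinearMap.lsmul R H a.1
    refine Submodule.fg_of_fg_map_of_fg_inf_ker f ?_ ?_
    · refine (Submodule.fg_pi (fun _ : s => ih)).of_le ?_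
      rintro _ ⟨x, hx, rfl⟩ a -
      refine (mem_torsionBySet_iff _ _).2 fun b => ?_
      have hb : b.1 * a.1 ∈ 𝔞 ^ (m + 1) :=
        pow_succ 𝔞 m ▸ Ideal.mul_mem_mul b.2 (hs ▸ Ideal.subset_span a.2)
      simpa [f, mul_smul] using (mem_torsionBySet_iff _ _).1 hx ⟨_, hb⟩
    · refine h.of_le ?_
      rintro x ⟨-, hx⟩
      rw [← hs, ← torsionBySet_eq_torsionBySet_span, mem_torsionBySet_iff]
      exact fun a => congrFun (LinearMap.mem_ker.1 hx) a

lemma finite_of_le_radical_annihilator (hrad : 𝔞 ≤ (Module.annihilator R H).radical)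
    (h : (torsionBySet R H (𝔞 : Set R)).FG) : Module.Finite R H := by
  obtain ⟨m, hm⟩ := Ideal.exists_pow_le_of_le_radical_of_fg hrad (IsNoetherian.noetherian _)
  refine ⟨?_⟩
  convert fg_torsionBySet_pow h m
  exact (eq_top_iff.2 fun x _ => (mem_torsionBySet_iff _ _).2 fun a =>
    Module.mem_annihilator.1 (hm a.2) x).symm

end Torsion

section Exact

variable {R M₁ M₂ M₃ : Type*} [CommRing R] [AddCommGroup M₁] [Module R M₁] [AddCommGroup M₂]
  [Module R M₂] [AddCommGroup M₃] [Module R M₃] {f : M₁ →ₗ[R] M₂} {g : M₂ →ₗ[R] M₃}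

lemma finite_of_exact [IsNoetherianRing R] (h : Function.Exact f g) [Module.Finite R M₁]
    [Module.Finite R M₃] : Module.Finite R M₂ :=
  have := isNoetherian_of_range_eq_ker f g (LinearMap.exact_iff.1 h).symm
  inferInstance

lemma finite_of_fg_ker [IsNoetherianRing R] [Module.Finite R M₂] (h : (LinearMap.ker f).FG) :
    Module.Finite R M₁ :=
  ⟨Submodule.fg_of_fg_map_of_fg_inf_ker f (IsNoetherian.noetherian _) (by simpa using h)⟩

lemma mul_mem_annihilator_of_exact (h : Function.Exact f g) {a b : R}
    (ha : ∀ z, g (a • z) = 0) (hb : ∀ y, f (b • y) = 0) :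
    b * a ∈ Module.annihilator R M₂ := by
  refine Module.mem_annihilator.2 fun z => ?_
  obtain ⟨y, hy⟩ := (h _).1 (ha z)
  rw [mul_smul, ← hy, ← map_smul, hb]

lemma inf_radical_annihilator_le_of_exact (h : Function.Exact f g) :
    (Module.annihilator R M₁).radical ⊓ (Module.annihilator R M₃).radical ≤
      (Module.annihilator R M₂).radical := by
  rintro a ⟨⟨m, hm⟩, ⟨n, hn⟩⟩
  refine ⟨m + n, pow_add a m n ▸ mul_mem_annihilator_of_exact h (fun z => ?_) fun y => ?_⟩
  · rw [map_smul, Module.mem_annihilator.1 hn]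
  · rw [Module.mem_annihilator.1 hm, map_zero]

lemma support_subset_union_of_exact (h : Function.Exact f g) :
    Module.support R M₂ ⊆ Module.support R M₁ ∪ Module.support R M₃ := by
  refine fun p hp => or_iff_not_imp_left.2 fun h₁ => ?_
  by_contra h₃
  rw [Module.notMem_support_iff'] at h₁ h₃
  obtain ⟨z, hz⟩ := Module.mem_support_iff'.1 hp
  obtain ⟨a, ha, haz⟩ := h₃ (g z)
  obtain ⟨y, hy⟩ := (h (a • z)).1 (by rw [map_smul, haz])
  obtain ⟨b, hb, hby⟩ := h₁ y
  refine hz (b * a) (p.1.primeCompl.mul_mem hb ha) ?_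
  rw [mul_smul, ← hy, ← map_smul, hby, map_zero]

end Exact

section LongExactSequence
open Limits Pretriangulated

variable (R : Type*) [CommRing R] {C : Type*} [Category* C] [Preadditive C] [Linear R C]
  [HasShift C ℤ] (A : C)

/-- Postcomposition with a morphism, as an `R`-linear map in each degree. -/
abbrev shiftedHomMap {X Y : C} (f : X ⟶ Y) (n : ℤ) :
    ShiftedHom A X n →ₗ[R] ShiftedHom A Y n :=
  Linear.rightComp R A (f⟦n⟧')

/-- The connecting map of the long exact sequence of `ShiftedHom A -` applied to a triangle. -/
def shiftedHomδ (T : Triangle C) (n₀ n₁ : ℤ) (h : n₀ + 1 = n₁) :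
    ShiftedHom A T.obj₃ n₀ →ₗ[R] ShiftedHom A T.obj₁ n₁ :=
  Linear.rightComp R A (T.mor₃⟦n₀⟧' ≫ (shiftFunctorAdd' C 1 n₀ n₁ (by lia)).inv.app _)

lemma coe_shiftedHomδ (T : Triangle C) (n₀ n₁ : ℤ) (h : n₀ + 1 = n₁) :
    ⇑(shiftedHomδ R A T n₀ n₁ h) =
      (preadditiveCoyoneda.obj (.op A)).homologySequenceδ T n₀ n₁ h :=
  funext fun x => (preadditiveCoyoneda_homologySequenceδ_apply T n₀ n₁ h (A := .op A) x).symm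

lemma shiftedHomMap_smul_id [∀ n : ℤ, (shiftFunctor C n).Linear R] (x : R) (K : C) (n : ℤ) :
    shiftedHomMap R A (x • 𝟙 K) n = LinearMap.lsmul R (ShiftedHom A K n) x := by
  ext f
  simp [Functor.map_smul]

variable [HasZeroObject C] [∀ n : ℤ, (shiftFunctor C n).Additive] [Pretriangulated C]
  {T : Triangle C} (hT : T ∈ distTriang C)

include hT

lemma shiftedHom_exact₁ (n₀ n₁ : ℤ) (h : n₀ + 1 = n₁) :
    Function.Exact (shiftedHomδ R A T n₀ n₁ h) (shiftedHomMap R A T.mor₁ n₁) := by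
  rw [coe_shiftedHomδ]
  exact (ShortComplex.ab_exact_iff_function_exact _).1
    ((preadditiveCoyoneda.obj (.op A)).homologySequence_exact₁ T hT n₀ n₁ h)

lemma shiftedHom_exact₂ (n : ℤ) :
    Function.Exact (shiftedHomMap R A T.mor₁ n) (shiftedHomMap R A T.mor₂ n) :=
  (ShortComplex.ab_exact_iff_function_exact _).1
    ((preadditiveCoyoneda.obj (.op A)).homologySequence_exact₂ T hT n)

lemma shiftedHom_exact₃ (n₀ n₁ : ℤ) (h : n₀ + 1 = n₁) :
    Function.Exact (shiftedHomMap R A T.mor₂ n₀) (shiftedHomδ R A T n₀ n₁ h) := by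
  rw [coe_shiftedHomδ]
  exact (ShortComplex.ab_exact_iff_function_exact _).1
    ((preadditiveCoyoneda.obj (.op A)).homologySequence_exact₃ T hT n₀ n₁ h)

end LongExactSequence

section Koszul
open Limits Pretriangulated

variable {R : Type*} [CommRing R] {C : Type*} [Category* C] [Preadditive C] [Linear R C]
  [HasZeroObject C] [HasShift C ℤ] [∀ n : ℤ, (shiftFunctor C n).Additive] [Pretriangulated C]

/-- The homotopy fiber of multiplication by `x` on `K`, unique only up to non-unique
isomorphism: the first vertex of a chosen distinguished triangle whose second morphism is
`x • 𝟙 K`. -/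
noncomputable def smulFiber (x : R) (K : C) : C :=
  (distinguished_cocone_triangle₁ (x • 𝟙 K)).choose

/-- The Koszul object of a list of scalars with coefficients in `K`, an iterated `smulFiber`. -/
noncomputable def koszul (l : List R) (K : C) : C :=
  l.foldr smulFiber K

lemma exists_smulFiber_triangle (x : R) (K : C) :
    ∃ (ι : smulFiber x K ⟶ K) (δ : K ⟶ (smulFiber x K)⟦(1 : ℤ)⟧),
      Triangle.mk ι (x • 𝟙 K) δ ∈ distTriang C :=
  (distinguished_cocone_triangle₁ (x • 𝟙 K)).choose_spec

variable [∀ n : ℤ, (shiftFunctor C n).Linear R]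

lemma exists_shiftedHom_smulFiber_exact (A : C) (x : R) (K : C) (n₀ n₁ : ℤ) (h : n₀ + 1 = n₁) :
    ∃ (δ : ShiftedHom A K n₀ →ₗ[R] ShiftedHom A (smulFiber x K) n₁)
      (ι : ShiftedHom A (smulFiber x K) n₁ →ₗ[R] ShiftedHom A K n₁),
      Function.Exact (LinearMap.lsmul R _ x) δ ∧ Function.Exact δ ι ∧
        Function.Exact ι (LinearMap.lsmul R _ x) := by
  obtain ⟨ι, δ, hT⟩ := exists_smulFiber_triangle x K
  refine ⟨_, _, ?_, shiftedHom_exact₁ R A hT n₀ n₁ h, ?_⟩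
  · exact shiftedHomMap_smul_id R A x K n₀ ▸ shiftedHom_exact₃ R A hT n₀ n₁ h
  · exact shiftedHomMap_smul_id R A x K n₁ ▸ shiftedHom_exact₂ R A hT n₁

variable {A K : C}

lemma support_shiftedHom_smulFiber_subset {s : Set (PrimeSpectrum R)}
    (hK : ∀ n : ℤ, Module.support R (ShiftedHom A K n) ⊆ s) (x : R) (n : ℤ) :
    Module.support R (ShiftedHom A (smulFiber x K) n) ⊆ s := by
  obtain ⟨δ, ι, -, h, -⟩ := exists_shiftedHom_smulFiber_exact A x K (n - 1) n (by lia)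
  exact (support_subset_union_of_exact h).trans (Set.union_subset (hK _) (hK _))

lemma subsingleton_shiftedHom_smulFiber (x : R) (n : ℤ)
    [Subsingleton (ShiftedHom A K (n - 1))] [Subsingleton (ShiftedHom A K n)] :
    Subsingleton (ShiftedHom A (smulFiber x K) n) := by
  obtain ⟨δ, ι, -, h, -⟩ := exists_shiftedHom_smulFiber_exact A x K (n - 1) n (by lia)
  refine subsingleton_of_forall_eq 0 fun f => ?_
  obtain ⟨g, rfl⟩ := (h f).1 (Subsingleton.elim _ _)
  rw [Subsingleton.elim g 0, map_zero]

lemma mul_self_mem_annihilator_shiftedHom_smulFiber (x : R) (n : ℤ) :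
    x * x ∈ Module.annihilator R (ShiftedHom A (smulFiber x K) n) := by
  obtain ⟨δ, ι, h₁, h₂, h₃⟩ := exists_shiftedHom_smulFiber_exact A x K (n - 1) n (by lia)
  refine mul_mem_annihilator_of_exact h₂ (fun f => ?_) fun f => ?_
  · rw [map_smul]
    exact h₃.apply_apply_eq_zero f
  · exact h₁.apply_apply_eq_zero f

lemma le_radical_annihilator_shiftedHom_smulFiber {I : Ideal R}
    (hK : ∀ n : ℤ, I ≤ (Module.annihilator R (ShiftedHom A K n)).radical) (x : R) (n : ℤ) :
    I ≤ (Module.annihilator R (ShiftedHom A (smulFiber x K) n)).radical := by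
  obtain ⟨δ, ι, -, h, -⟩ := exists_shiftedHom_smulFiber_exact A x K (n - 1) n (by lia)
  exact (le_inf (hK _) (hK _)).trans (inf_radical_annihilator_le_of_exact h)

lemma finite_shiftedHom_smulFiber [IsNoetherianRing R] (x : R) (n : ℤ)
    [Module.Finite R (ShiftedHom A K (n - 1))] [Module.Finite R (ShiftedHom A K n)] :
    Module.Finite R (ShiftedHom A (smulFiber x K) n) := by
  obtain ⟨δ, ι, -, h, -⟩ := exists_shiftedHom_smulFiber_exact A x K (n - 1) n (by lia)
  exact finite_of_exact h

lemma finite_shiftedHom_of_finite_shiftedHom_smulFiber {x : R} {n : ℤ}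
    (hx : x ∈ Module.annihilator R (ShiftedHom A K n))
    [Module.Finite R (ShiftedHom A (smulFiber x K) n)] : Module.Finite R (ShiftedHom A K n) := by
  obtain ⟨δ, ι, -, -, h⟩ := exists_shiftedHom_smulFiber_exact A x K (n - 1) n (by lia)
  exact .of_surjective ι fun f => (h f).1 (Module.mem_annihilator.1 hx f)

lemma fg_torsionBy_shiftedHom [IsNoetherianRing R] (x : R) (n : ℤ)
    [Module.Finite R (ShiftedHom A (smulFiber x K) n)] :
    (Submodule.torsionBy R (ShiftedHom A K n) x).FG := by
  obtain ⟨δ, ι, -, -, h⟩ := exists_shiftedHom_smulFiber_exact A x K (n - 1) n (by lia)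
  exact (Submodule.fg_range ι).of_le fun f hf => (h f).1 hf

open scoped Pointwise in
lemma finite_shiftedHom_smulFiber_of_quotSMulTop (x : R) {n₀ n₁ : ℤ} (h : n₀ + 1 = n₁)
    [Subsingleton (ShiftedHom A K n₁)] [Module.Finite R (QuotSMulTop x (ShiftedHom A K n₀))] :
    Module.Finite R (ShiftedHom A (smulFiber x K) n₁) := by
  obtain ⟨δ, ι, h₁, h₂, -⟩ := exists_shiftedHom_smulFiber_exact A x K n₀ n₁ h
  have hker : x • (⊤ : Submodule R (ShiftedHom A K n₀)) ≤ LinearMap.ker δ := by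
    rintro _ ⟨f, -, rfl⟩
    exact h₁.apply_apply_eq_zero f
  refine .of_surjective (Submodule.liftQ _ δ hker) fun g => ?_
  obtain ⟨f, rfl⟩ := (h₂ g).1 (Subsingleton.elim _ _)
  exact ⟨Submodule.Quotient.mk f, Submodule.liftQ_apply _ _ _⟩

lemma support_shiftedHom_koszul_subset {s : Set (PrimeSpectrum R)}
    (hK : ∀ n : ℤ, Module.support R (ShiftedHom A K n) ⊆ s) :
    ∀ (l : List R) (n : ℤ), Module.support R (ShiftedHom A (koszul l K) n) ⊆ s
  | [] => hK
  | x :: l => support_shiftedHom_smulFiber_subset (support_shiftedHom_koszul_subset hK l) x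

lemma subsingleton_shiftedHom_koszul_of_lt {m : ℤ}
    (hK : ∀ n < m, Subsingleton (ShiftedHom A K n)) :
    ∀ (l : List R), ∀ n < m, Subsingleton (ShiftedHom A (koszul l K) n)
  | [] => hK
  | x :: l => fun n hn =>
    have ih := subsingleton_shiftedHom_koszul_of_lt hK l
    have := ih (n - 1) (by lia)
    have := ih n hn
    subsingleton_shiftedHom_smulFiber (K := koszul l K) x n

lemma subsingleton_shiftedHom_koszul_of_gt {m : ℤ}
    (hK : ∀ n > m, Subsingleton (ShiftedHom A K n)) :
    ∀ (l : List R), ∀ n > m + l.length, Subsingleton (ShiftedHom A (koszul l K) n)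
  | [] => fun n hn => hK n (by simpa using hn)
  | x :: l => fun n hn => by
    rw [List.length_cons] at hn
    have ih := subsingleton_shiftedHom_koszul_of_gt hK l
    have := ih (n - 1) (by lia)
    have := ih n (by lia)
    exact subsingleton_shiftedHom_smulFiber (K := koszul l K) x n

lemma ofList_le_radical_annihilator_shiftedHom_koszul : ∀ (l : List R) (n : ℤ),
    Ideal.ofList l ≤ (Module.annihilator R (ShiftedHom A (koszul l K) n)).radical
  | [] => by simp
  | x :: l => fun n => by
    rw [Ideal.ofList_cons, sup_le_iff, Ideal.span_singleton_le_iff_mem]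
    exact ⟨⟨2, pow_two x ▸ mul_self_mem_annihilator_shiftedHom_smulFiber x n⟩,
      le_radical_annihilator_shiftedHom_smulFiber
        (ofList_le_radical_annihilator_shiftedHom_koszul l) x n⟩

lemma finite_shiftedHom_koszul [IsNoetherianRing R] {m : ℤ}
    (hK : ∀ n ≤ m, Module.Finite R (ShiftedHom A K n)) :
    ∀ (l : List R), ∀ n ≤ m, Module.Finite R (ShiftedHom A (koszul l K) n)
  | [] => hK
  | x :: l => fun n hn =>
    have ih := finite_shiftedHom_koszul hK l
    have := ih (n - 1) (by lia)
    have := ih n hn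
    finite_shiftedHom_smulFiber (K := koszul l K) x n

lemma finite_shiftedHom_of_finite_shiftedHom_koszul {n : ℤ} :
    ∀ {l : List R}, (∀ x ∈ l, x • 𝟙 A = 0) →
      Module.Finite R (ShiftedHom A (koszul l K) n) → Module.Finite R (ShiftedHom A K n)
  | [], _, h => h
  | x :: l, hl, h => by
    rw [List.forall_mem_cons] at hl
    refine finite_shiftedHom_of_finite_shiftedHom_koszul hl.2 ?_
    have : Module.Finite R (ShiftedHom A (smulFiber x (koszul l K)) n) := h
    refine finite_shiftedHom_of_finite_shiftedHom_smulFiber (x := x)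
      (Module.mem_annihilator.2 fun f => ?_)
    rw [← Category.id_comp f, ← Linear.smul_comp, hl.1, zero_comp]

end Koszul

section HyperExt
open Limits Pretriangulated Submodule

lemma leftComp_exact (R : Type*) [CommRing R] {C : Type*} [Category* C] [Preadditive C]
    [Linear R C] [HasZeroObject C] [HasShift C ℤ] [∀ n : ℤ, (shiftFunctor C n).Additive]
    [Pretriangulated C] {T : Triangle C} (hT : T ∈ distTriang C) (W : C) :
    Function.Exact (Linear.leftComp R W T.mor₂) (Linear.leftComp R W T.mor₁) := fun f =>
  ⟨fun hf => (T.yoneda_exact₂ hT f hf).imp fun _ => Eq.symm, by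
    rintro ⟨g, rfl⟩
    simp [← Category.assoc, comp_distTriang_mor_zero₁₂ _ hT]⟩

lemma finite_hom_shift {R : Type*} [CommRing R] {C : Type*} [Category* C] [Preadditive C]
    [Linear R C] [HasShift C ℤ] [∀ n : ℤ, (shiftFunctor C n).Additive]
    [∀ n : ℤ, (shiftFunctor C n).Linear R] {X Y : C} {m n p : ℤ} (h : m + n = p)
    [Module.Finite R (ShiftedHom X Y m)] : Module.Finite R (X⟦n⟧ ⟶ Y⟦p⟧) := by
  let e := (shiftFunctorAdd' C m n p h).app Y
  refine .of_surjective (Linear.rightComp R _ e.inv ∘ₗ (shiftFunctor C n).mapLinearMap R)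
    fun f => ?_
  obtain ⟨g, hg⟩ := (shiftFunctor C n).map_surjective (f ≫ e.hom)
  exact ⟨g, by simp [hg]⟩

universe w

variable {R : Type u} [CommRing R] [HasDerivedCategory.{w} (ModuleCat.{u} R)]

/-- The hyperext module `Ext^k(N, K) = Hom(N, K[k])` of a module and an object of the derived
category. For `N = R` it is the `k`-th cohomology module of `K`. -/
abbrev HyperExt (N : ModuleCat.{u} R) (K : DerivedCategory (ModuleCat.{u} R)) (k : ℤ) :=
  ShiftedHom ((DerivedCategory.singleFunctor _ 0).obj N) K k

/-- Restriction along a homomorphism of modules. -/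
noncomputable abbrev hyperExtPrecomp {N N' : ModuleCat.{u} R} (f : N' ⟶ N)
    (K : DerivedCategory (ModuleCat.{u} R)) (k : ℤ) : HyperExt N K k →ₗ[R] HyperExt N' K k :=
  Linear.leftComp R _ ((DerivedCategory.singleFunctor _ 0).map f)

variable {K : DerivedCategory (ModuleCat.{u} R)}

lemma fg_ker_hyperExtPrecomp_g {S : ShortComplex (ModuleCat.{u} R)} (hS : S.ShortExact)
    {k₀ k₁ : ℤ} (h : k₀ + 1 = k₁) [Module.Finite R (HyperExt S.X₁ K k₀)] :
    (LinearMap.ker (hyperExtPrecomp S.g K k₁)).FG := by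
  have : Module.Finite R (hS.singleTriangle.rotate.obj₃ ⟶ K⟦k₁⟧) :=
    finite_hom_shift (X := (DerivedCategory.singleFunctor _ 0).obj S.X₁) h
  have hex := leftComp_exact R (rot_of_distTriang _ hS.singleTriangle_distinguished) (K⟦k₁⟧)
  exact (LinearMap.exact_iff.1 hex).symm ▸ Submodule.fg_range _

lemma fg_ker_hyperExtPrecomp_f {S : ShortComplex (ModuleCat.{u} R)} (hS : S.ShortExact) (k : ℤ)
    [Module.Finite R (HyperExt S.X₃ K k)] :
    (LinearMap.ker (hyperExtPrecomp S.f K k)).FG := by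
  have : Module.Finite R (hS.singleTriangle.obj₃ ⟶ K⟦k⟧) := ‹Module.Finite R (HyperExt S.X₃ K k)›
  have hex := leftComp_exact R hS.singleTriangle_distinguished (K⟦k⟧)
  exact (LinearMap.exact_iff.1 hex).symm ▸ Submodule.fg_range _

lemma eq_zero_of_forall_hyperExtPrecomp_single_eq_zero {s : ℕ} {k : ℤ}
    {g : HyperExt (ModuleCat.of R (Fin s → R)) K k} (hg : ∀ i,
      hyperExtPrecomp (ModuleCat.ofHom (LinearMap.single R (fun _ : Fin s => R) i)) K k g = 0) :
    g = 0 := by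
  have hid : 𝟙 (ModuleCat.of R (Fin s → R)) = ∑ i, ModuleCat.ofHom (LinearMap.proj i) ≫
      ModuleCat.ofHom (LinearMap.single R (fun _ : Fin s => R) i) := by
    ext : 1
    simp [LinearMap.sum_single_apply, LinearMap.ext_iff]
  rw [← Category.id_comp g, ← (DerivedCategory.singleFunctor _ 0).map_id,
    hid, Functor.map_sum, Preadditive.sum_comp]
  refine Finset.sum_eq_zero fun i _ => ?_
  rw [Functor.map_comp, Category.assoc]
  exact (congrArg _ (hg i)).trans comp_zero

lemma exists_fg_ker_pi_hyperExtPrecomp [IsNoetherianRing R] (N : ModuleCat.{u} R)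
    [Module.Finite R N] {k₀ k₁ : ℤ} (h : k₀ + 1 = k₁)
    (hK : ∀ (Z : ModuleCat.{u} R) [Module.Finite R Z], Module.Finite R (HyperExt Z K k₀)) :
    ∃ (s : ℕ) (r : Fin s → (ModuleCat.of R R ⟶ N)),
      (LinearMap.ker (LinearMap.pi fun i => hyperExtPrecomp (r i) K k₁)).FG := by
  -- Dimension shifting along `0 → ker f → Rˢ → N → 0`.
  obtain ⟨s, f, hf⟩ := Module.Finite.exists_fin' R N
  have := hK (ModuleCat.of R (LinearMap.ker f))
  refine ⟨s, fun i => ModuleCat.ofHom (LinearMap.single R (fun _ : Fin s => R) i) ≫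
    ModuleCat.ofHom f, ?_⟩
  refine (fg_ker_hyperExtPrecomp_g (LinearMap.shortExact_shortComplexKer hf) h (K := K)).of_le
    fun g hg => LinearMap.mem_ker.2 (eq_zero_of_forall_hyperExtPrecomp_single_eq_zero fun i => ?_)
  simpa using congrFun (LinearMap.mem_ker.1 hg) i

lemma finite_hyperExt [IsNoetherianRing R] {b n : ℤ}
    (hb : ∀ k < b, ∀ N : ModuleCat.{u} R, Subsingleton (HyperExt N K k))
    (hK : ∀ k ≤ n, Module.Finite R (HyperExt (ModuleCat.of R R) K k))
    (N : ModuleCat.{u} R) [Module.Finite R N] (k : ℤ) (hk : k ≤ n) :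
    Module.Finite R (HyperExt N K k) := by
  obtain ⟨m, hm⟩ : ∃ m : ℕ, k < b + m := ⟨(k - b + 1).toNat, by lia⟩
  induction m generalizing N k with
  | zero =>
    have := hb k (by simpa using hm) N
    infer_instance
  | succ m ih =>
    obtain ⟨s, r, hr⟩ := exists_fg_ker_pi_hyperExtPrecomp (K := K) N (sub_add_cancel k 1)
      fun Z _ => ih Z (k - 1) (by lia) (by lia)
    have := hK k hk
    exact finite_of_fg_ker hr

lemma fg_torsionBySet_hyperExt [IsNoetherianRing R] {𝔞 : Ideal R} {k₀ k₁ : ℤ} (h : k₀ + 1 = k₁)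
    (hK : ∀ (Z : ModuleCat.{u} R) [Module.Finite R Z], Module.Finite R (HyperExt Z K k₀))
    [Module.Finite R (HyperExt (ModuleCat.of R (R ⧸ 𝔞)) K k₁)] :
    (torsionBySet R (HyperExt (ModuleCat.of R R) K k₁) (𝔞 : Set R)).FG := by
  let incl : ModuleCat.of R 𝔞 ⟶ ModuleCat.of R R := ModuleCat.ofHom 𝔞.subtype
  have hS : (ModuleCat.shortComplexOfCompEqZero 𝔞.subtype 𝔞.mkQ
      (LinearMap.exact_subtype_mkQ 𝔞).linearMap_comp_eq_zero).ShortExact :=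
    ModuleCat.shortComplex_shortExact _ (LinearMap.exact_subtype_mkQ 𝔞) 𝔞.injective_subtype
      𝔞.mkQ_surjective
  obtain ⟨s, r, hr⟩ := exists_fg_ker_pi_hyperExtPrecomp (K := K) (.of R 𝔞) h hK
  -- Pulling a class back along `R → 𝔞`, `1 ↦ a`, and `𝔞 ⊆ R` multiplies it by `a`, so the
  -- `𝔞`-torsion restricts to zero on every generator of `𝔞`.
  refine fg_of_fg_map_of_fg_inf_ker (hyperExtPrecomp incl K k₁) (hr.of_le ?_)
    (.of_le (fg_ker_hyperExtPrecomp_f hS k₁) inf_le_right)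
  rintro _ ⟨g, hg, rfl⟩
  refine LinearMap.mem_ker.2 (funext fun i => ?_)
  have hr : r i ≫ incl = (r i 1 : R) • 𝟙 _ := by
    ext
    simp [incl]
  have hri : hyperExtPrecomp (r i) K k₁ (hyperExtPrecomp incl K k₁ g) = (r i 1 : R) • g := by
    simp [← Functor.map_comp_assoc, hr, Functor.map_smul]
  exact hri.trans ((mem_torsionBySet_iff _ _).1 hg (r i 1))

lemma finite_hyperExt_self_of_finite_hyperExt_quotient [IsNoetherianRing R] {𝔞 : Ideal R}
    {b n : ℤ} (hb : ∀ k < b, ∀ N : ModuleCat.{u} R, Subsingleton (HyperExt N K k))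
    (hrad : ∀ k, 𝔞 ≤ (Module.annihilator R (HyperExt (ModuleCat.of R R) K k)).radical)
    (hK : ∀ k ≤ n, Module.Finite R (HyperExt (ModuleCat.of R (R ⧸ 𝔞)) K k))
    (k : ℤ) (hk : k ≤ n) : Module.Finite R (HyperExt (ModuleCat.of R R) K k) := by
  obtain ⟨m, hm⟩ : ∃ m : ℕ, k < b + m := ⟨(k - b + 1).toNat, by lia⟩
  induction m generalizing k with
  | zero =>
    have := hb k (by simpa using hm) (ModuleCat.of R R)
    infer_instance
  | succ m ih =>
    have := hK k hk
    refine finite_of_le_radical_annihilator (hrad k)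
      (fg_torsionBySet_hyperExt (sub_add_cancel k 1) fun Z _ => ?_)
    exact finite_hyperExt hb (fun j hj => ih j (by lia) (by lia)) Z (k - 1) le_rfl

variable (N M : ModuleCat.{u} R)

lemma subsingleton_hyperExt_single_of_neg {k : ℤ} (hk : k < 0) :
    Subsingleton (HyperExt N ((DerivedCategory.singleFunctor _ 0).obj M) k) := by
  let M₀ := (DerivedCategory.singleFunctor (ModuleCat.{u} R) 0).obj M
  have : (M₀⟦k⟧).IsGE (-k) := DerivedCategory.TStructure.t.isGE_shift M₀ 0 k (-k)
  exact subsingleton_of_forall_eq 0 fun f => DerivedCategory.TStructure.t.zero f 0 (-k)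

lemma subsingleton_hyperExt_self_single_of_pos {k : ℤ} (hk : 0 < k) :
    Subsingleton (HyperExt (ModuleCat.of R R) ((DerivedCategory.singleFunctor _ 0).obj M) k) := by
  obtain ⟨n, rfl⟩ : ∃ n : ℕ, k = (n + 1 : ℕ) := ⟨(k - 1).toNat, by lia⟩
  have : Projective (ModuleCat.of R R) := inferInstance
  have : Subsingleton (Abelian.Ext (ModuleCat.of R R) M (n + 1)) :=
    Abelian.Ext.subsingleton_of_projective _ _ _
  exact (Abelian.Ext.homLinearEquiv (R := R)).symm.toEquiv.subsingleton

lemma support_hyperExt_self_single_subset (k : ℤ) :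
    Module.support R (HyperExt (.of R R) ((DerivedCategory.singleFunctor _ 0).obj M) k) ⊆
      Module.support R M := by
  obtain hk | rfl | hk := lt_trichotomy k 0
  · have := subsingleton_hyperExt_single_of_neg (.of R R) M hk
    simp [Module.support_eq_empty]
  · let e : HyperExt (.of R R) ((DerivedCategory.singleFunctor _ 0).obj M) 0 ≃ₗ[R] M :=
      (Abelian.Ext.homLinearEquiv (n := 0)).symm ≪≫ₗ Abelian.Ext.linearEquiv₀ ≪≫ₗ
        ModuleCat.homLinearEquiv (S := R) ≪≫ₗ LinearMap.ringLmapEquivSelf R R M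
    exact e.support_eq.subset
  · have := subsingleton_hyperExt_self_single_of_pos M hk
    simp [Module.support_eq_empty]

end HyperExt

section QuotSMulTop

variable {R : Type*} [CommRing R]

lemma exists_mul_pow_mem_of_forall_isPrime_le {J p : Ideal R} [p.IsPrime] {x : R}
    (h : ∀ q : Ideal R, q.IsPrime → q ≤ p → J ≤ q → x ∈ q) : ∃ s ∉ p, ∃ j, s * x ^ j ∈ J := by
  have hdisj : ¬ Disjoint (J : Set R) (p.primeCompl ⊔ Submonoid.powers x : Submonoid R) := by
    intro hd
    obtain ⟨q, hq, hJq, hqd⟩ := Ideal.exists_le_prime_disjoint _ _ hd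
    have hqp : q ≤ p := fun s hs => by_contra fun hsp =>
      Set.disjoint_left.1 hqd hs ((le_sup_left : p.primeCompl ≤ _) hsp)
    exact Set.disjoint_left.1 hqd (h q hq hqp hJq)
      ((le_sup_right : Submonoid.powers x ≤ _) (Submonoid.mem_powers x))
  obtain ⟨r, hrJ, hr⟩ := Set.not_disjoint_iff.1 hdisj
  obtain ⟨s, hs, _, ⟨j, rfl⟩, rfl⟩ := Submonoid.mem_sup.1 hr
  exact ⟨s, hs, j, hrJ⟩

variable {N : Type*} [AddCommGroup N] [Module R N]

open Pointwise Submodule in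
lemma torsionBy_pow_le_torsionBy_pow_sup {x : R} {s : ℕ}
    (hs : ∀ j ≥ s, LinearMap.range (LinearMap.lsmul R N (x ^ j)) ⊓ torsionBy R N x ≤
      LinearMap.range (LinearMap.lsmul R N (x ^ (j + 1)))) (j : ℕ) :
    torsionBy R N (x ^ j) ≤ torsionBy R N (x ^ s) ⊔ x • ⊤ := by
  obtain hj | hj := le_total j s
  · exact le_sup_of_le_left (torsionBy_le_torsionBy_of_dvd _ _ (pow_dvd_pow x hj))
  induction j, hj using Nat.le_induction with
  | base => exact le_sup_left
  | succ j hj ih =>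
    intro y (hy : x ^ (j + 1) • y = 0)
    obtain ⟨z, hz : x ^ (j + 1) • z = x ^ j • y⟩ :=
      hs j hj ⟨⟨y, rfl⟩, show x • x ^ j • y = 0 by rwa [smul_smul, ← pow_succ']⟩
    have hyz : y - x • z ∈ torsionBy R N (x ^ j) := by
      rw [mem_torsionBy_iff, smul_sub, smul_smul, ← pow_succ, hz, sub_self]
    rw [← sub_add_cancel y (x • z)]
    exact add_mem (ih hyz) (mem_sup_right (smul_mem_pointwise_smul z x ⊤ trivial))

open Submodule in
lemma exists_forall_range_lsmul_pow_inf_torsionBy_le (x : R) [IsArtinian R (torsionBy R N x)] :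
    ∃ s, ∀ j ≥ s, LinearMap.range (LinearMap.lsmul R N (x ^ j)) ⊓ torsionBy R N x ≤
      LinearMap.range (LinearMap.lsmul R N (x ^ (j + 1))) := by
  let D (j : ℕ) : Submodule R (torsionBy R N x) :=
    (LinearMap.range (LinearMap.lsmul R N (x ^ j))).submoduleOf (torsionBy R N x)
  have hD : Antitone D := antitone_nat_of_succ_le fun j => by
    rintro _ ⟨z, hz⟩
    exact ⟨x • z, by simpa [pow_succ', mul_smul, smul_comm x] using hz⟩
  obtain ⟨s, hs⟩ : ∃ s, ∀ j, s ≤ j → D s = D j :=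
    IsArtinian.monotone_stabilizes ⟨fun j => OrderDual.toDual (D j), hD.dual_right⟩
  refine ⟨s, fun j hj z hz => ?_⟩
  have hle : D j ≤ D (j + 1) := ((hs j hj).symm.trans (hs (j + 1) (by lia))).le
  exact hle (x := ⟨z, hz.2⟩) hz.1

open Pointwise Submodule in
lemma finite_quotSMulTop_of_sup_eq_top {x : R} {F : Submodule R N} (hF : F.FG)
    (h : F ⊔ x • ⊤ = ⊤) : Module.Finite R (QuotSMulTop x N) := by
  refine ⟨?_⟩
  rw [← (map_mkQ_eq_top _ F).2 (sup_comm F _ ▸ h)]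
  exact hF.map _

variable [IsNoetherianRing R]

lemma isArtinian_of_forall_mem_support_isMaximal [Module.Finite R N]
    (h : ∀ p ∈ Module.support R N, p.asIdeal.IsMaximal) :
    IsArtinian R N := by
  revert h
  induction ‹Module.Finite R N› using
    IsNoetherianRing.induction_on_isQuotientEquivQuotientPrime R with
  | subsingleton N => exact fun _ => inferInstance
  | quotient N p e =>
    intro h
    have hp : p.1.IsMaximal := h p <| by
      rw [e.support_eq, Module.mem_support_iff_of_finite, Ideal.annihilator_quotient]
    have : IsSimpleModule R (R ⧸ p.1) := isSimpleModule_iff_isCoatom.2 hp.out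
    exact e.symm.isArtinian_iff.1 inferInstance
  | exact N₁ N₂ N₃ f g hf hg hfg h₁ h₃ =>
    intro h
    have := h₁ fun p hp => h p (Module.support_subset_of_injective f hf hp)
    have := h₃ fun p hp => h p (Module.support_subset_of_surjective g hg hp)
    exact isArtinian_of_range_eq_ker f g (LinearMap.exact_iff.1 hfg).symm

lemma exists_forall_mem_support_range_lsmul_pow_exists_notMem (x : R) :
    ∃ n, ∀ p ∈ Module.support R (LinearMap.range (LinearMap.lsmul R N (x ^ n))),
      ∃ q : Ideal R, q.IsPrime ∧ q ≤ p.asIdeal ∧ Module.annihilator R N ≤ q ∧ x ∉ q := by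
  -- Where no such `q` exists, `x` is locally nilpotent on `N`; noetherianity of `R` bounds the
  -- exponent uniformly in `p`.
  let I (n : ℕ) : Ideal R :=
    Submodule.comap (LinearMap.lsmul R R (x ^ n)) (Module.annihilator R N)
  have hI : Monotone I := monotone_nat_of_le_succ fun n s hs => by
    have h : x * (x ^ n * s) ∈ Module.annihilator R N := Ideal.mul_mem_left _ x hs
    rwa [← mul_assoc, ← pow_succ'] at h
  obtain ⟨n, hn⟩ := monotone_stabilizes_iff_noetherian.2 ‹_› ⟨I, hI⟩
  refine ⟨n, fun p hp => ?_⟩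
  by_contra! h
  obtain ⟨s, hs, j, hsj⟩ := exists_mul_pow_mem_of_forall_isPrime_le h
  have hsn : s ∈ I n := by
    have hj : s ∈ I j := show x ^ j * s ∈ _ by rwa [mul_comm]
    exact (hn _ (le_max_left n j)).ge (hI (le_max_right n j) hj)
  refine hs (Module.annihilator_le_of_mem_support hp (Module.mem_annihilator.2 ?_))
  rintro ⟨_, y, rfl⟩
  refine Subtype.ext ?_
  simpa [mul_smul, smul_comm s] using Module.mem_annihilator.1 hsn y

lemma fg_torsionBy_submodule {x : R} (h : (Submodule.torsionBy R N x).FG) (P : Submodule R N) :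
    (Submodule.torsionBy R P x).FG := by
  refine Submodule.fg_of_fg_map_injective P.subtype P.injective_subtype (h.of_le ?_)
  rintro _ ⟨y, hy, rfl⟩
  exact congrArg P.subtype hy

lemma fg_torsionBy_pow {x : R} (h : (Submodule.torsionBy R N x).FG) (n : ℕ) :
    (Submodule.torsionBy R N (x ^ n)).FG := by
  rw [← Submodule.torsionBySet_span_singleton_eq] at h ⊢
  rw [Ideal.submodule_span_eq, ← Ideal.span_singleton_pow]
  exact fg_torsionBySet_pow h n

open Function in
lemma finite_quotSMulTop_of_exact {N₁ N₂ : Type*} [AddCommGroup N₁] [Module R N₁]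
    [AddCommGroup N₂] [Module R N₂] {f : N₁ →ₗ[R] N} {g : N →ₗ[R] N₂} (h : Exact f g)
    (hg : Surjective g) (x : R) [Module.Finite R N₁] [Module.Finite R (QuotSMulTop x N₂)] :
    Module.Finite R (QuotSMulTop x N) :=
  finite_of_exact (QuotSMulTop.map_exact x h hg)

open Pointwise Submodule in
lemma finite_quotSMulTop_of_isArtinian_torsionBy {x : R}
    (hN : Module.support R N ⊆ PrimeSpectrum.zeroLocus {x})
    (h : (torsionBy R N x).FG) [IsArtinian R (torsionBy R N x)] :
    Module.Finite R (QuotSMulTop x N) := by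
  obtain ⟨s, hs⟩ := exists_forall_range_lsmul_pow_inf_torsionBy_le (N := N) x
  refine finite_quotSMulTop_of_sup_eq_top (fg_torsionBy_pow h s) (eq_top_iff.2 fun y _ => ?_)
  obtain ⟨_, ⟨j, rfl⟩, hj⟩ := LocalizedModule.subsingleton_iff.1
    (LocalizedModule.subsingleton_iff_support_subset.2 hN) y
  exact torsionBy_pow_le_torsionBy_pow_sup hs j hj

lemma finite_quotSMulTop_of_fg_torsionBy {x : R}
    (hN : Module.support R N ⊆ PrimeSpectrum.zeroLocus {x})
    (hx : ∀ p ∈ Module.support R N, ¬ p.asIdeal.IsMaximal → ∀ q : Ideal R, q.IsPrime →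
      q ≤ p.asIdeal → Module.annihilator R N ≤ q → x ∈ q)
    (h : (Submodule.torsionBy R N x).FG) : Module.Finite R (QuotSMulTop x N) := by
  obtain ⟨n, hn⟩ := exists_forall_mem_support_range_lsmul_pow_exists_notMem (N := N) x
  let N' := LinearMap.range (LinearMap.lsmul R N (x ^ n))
  have hN' : Module.support R N' ⊆ Module.support R N :=
    Module.support_subset_of_injective _ N'.injective_subtype
  have hfg : (Submodule.torsionBy R N' x).FG := fg_torsionBy_submodule h N'
  have : Module.Finite R (Submodule.torsionBy R N' x) := Module.Finite.iff_fg.2 hfg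
  have : IsArtinian R (Submodule.torsionBy R N' x) := by
    refine isArtinian_of_forall_mem_support_isMaximal fun p hp => by_contra fun hmax => ?_
    have hp' := Module.support_subset_of_injective _ (Submodule.injective_subtype _) hp
    obtain ⟨q, hq, hqp, hNq, hxq⟩ := hn p hp'
    exact hxq (hx p (hN' hp') hmax q hq hqp hNq)
  have : Module.Finite R (QuotSMulTop x N') :=
    finite_quotSMulTop_of_isArtinian_torsionBy (hN'.trans hN) hfg
  let i := (Submodule.torsionBy R N (x ^ n)).subtype
  let p := (LinearMap.lsmul R N (x ^ n)).rangeRestrict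
  have hip : Function.Exact i p := fun y => by simp [i, p, Subtype.ext_iff]
  have := Module.Finite.iff_fg.2 (fg_torsionBy_pow h n)
  exact finite_quotSMulTop_of_exact hip (LinearMap.surjective_rangeRestrict _) x

end QuotSMulTop

section Height

variable {R : Type*} [CommRing R]

lemma height_le_of_not_isMaximal {n : ℕ} (hdim : ringKrullDim R ≤ (n + 1 : ℕ)) {p : Ideal R}
    [hp : p.IsPrime] (hpm : ¬ p.IsMaximal) : p.height ≤ n := by
  obtain ⟨m, hm, hpm'⟩ := p.exists_le_maximal hp.ne_top
  have hlt : p < m := hpm'.lt_of_ne fun h => hpm (h ▸ hm)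
  have hle : p.height + 1 ≤ (n + 1 : ℕ) := WithBot.coe_le_coe.1 <|
    (WithBot.coe_le_coe.2 (Ideal.height_add_one_le_of_lt_of_isPrime hlt)).trans
      ((Ideal.height_le_ringKrullDim_of_ne_top hm.ne_top).trans hdim)
  exact (ENat.add_le_add_iff_right ENat.one_ne_top).1 hle

variable [IsNoetherianRing R] (𝔞 : Ideal R)

lemma exists_cons_le_height {n : ℕ} {l : List R}
    (hl : ∀ p : Ideal R, p.IsPrime → Ideal.ofList l ≤ p → ¬ 𝔞 ≤ p → n ≤ p.height) :
    ∃ x ∈ 𝔞, ∀ p : Ideal R, p.IsPrime → Ideal.ofList (x :: l) ≤ p → ¬ 𝔞 ≤ p →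
      (n + 1 : ℕ) ≤ p.height := by
  -- The element `x` avoids the minimal primes of `l` that do not contain `𝔞`.
  have hfin : {q | q ∈ (Ideal.ofList l).minimalPrimes ∧ ¬ 𝔞 ≤ q}.Finite :=
    (Ideal.finite_minimalPrimes_of_isNoetherianRing R _).subset fun q hq => hq.1
  have hnot : ¬ (𝔞 : Set R) ⊆ ⋃ q ∈ (hfin.toFinset : Set (Ideal R)), q := by
    rw [Ideal.subset_union_prime (f := fun q : Ideal R => q) ⊤ ⊤ fun q hq _ _ =>
      (hfin.mem_toFinset.1 hq).1.isPrime]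
    rintro ⟨q, hq, h⟩
    exact (hfin.mem_toFinset.1 hq).2 h
  obtain ⟨x, hxa, hx⟩ := Set.not_subset.1 hnot
  refine ⟨x, hxa, fun p hp hlp hap => ?_⟩
  rw [Ideal.ofList_cons, sup_le_iff, Ideal.span_singleton_le_iff_mem] at hlp
  obtain ⟨q, hq, hqp⟩ := Ideal.exists_minimalPrimes_le hlp.2
  have haq : ¬ 𝔞 ≤ q := fun h => hap (h.trans hqp)
  have hxq : x ∉ q := fun h => hx (Set.mem_biUnion (hfin.mem_toFinset.2 ⟨hq, haq⟩) h)
  have := hq.isPrime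
  have hlt : q < p := hqp.lt_of_ne fun h => hxq (h ▸ hlp.1)
  rw [Nat.cast_add_one]
  exact (add_le_add_left (hl q hq.isPrime hq.1.2 haq) 1).trans
    (Ideal.height_add_one_le_of_lt_of_isPrime hlt)

lemma exists_list_le_height (n : ℕ) :
    ∃ l : List R, l.length = n ∧ (∀ x ∈ l, x ∈ 𝔞) ∧
      ∀ p : Ideal R, p.IsPrime → Ideal.ofList l ≤ p → ¬ 𝔞 ≤ p → n ≤ p.height := by
  induction n with
  | zero => exact ⟨[], rfl, by simp, by simp⟩
  | succ n ih =>
    obtain ⟨l, rfl, hla, hl⟩ := ih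
    obtain ⟨x, hx, h⟩ := exists_cons_le_height 𝔞 hl
    exact ⟨x :: l, rfl, by simpa [hx] using hla, h⟩

variable {𝔞}

lemma exists_list_le_radical {n : ℕ} (hdim : ringKrullDim R ≤ (n + 1 : ℕ))
    (ha : 𝔞 ≤ Ring.jacobson R) :
    ∃ (x : R) (l : List R), l.length = n ∧ (∀ y ∈ x :: l, y ∈ 𝔞) ∧
      𝔞 ≤ (Ideal.ofList (x :: l)).radical ∧
      ∀ p : Ideal R, p.IsPrime → 𝔞 ≤ p → ¬ p.IsMaximal →
        ∀ q : Ideal R, q.IsPrime → q ≤ p → Ideal.ofList l ≤ q → 𝔞 ≤ q := by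
  obtain ⟨l, hln, hla, hl⟩ := exists_list_le_height 𝔞 n
  obtain ⟨x, hx, hxl⟩ := exists_cons_le_height 𝔞 hl
  refine ⟨x, l, hln, by simpa [hx] using hla, ?_, fun p hp hap hpm q hq hqp hlq => ?_⟩
  · rw [Ideal.radical_eq_sInf]
    refine le_sInf fun p ⟨hlp, hp⟩ => by_contra fun hap => ?_
    have hpm : ¬ p.IsMaximal := fun _ => hap (ha.trans (Ring.jacobson_le_of_isMaximal p))
    have := (hxl p hp hlp hap).trans (height_le_of_not_isMaximal hdim hpm)
    exact absurd (Nat.cast_le.1 this) (by lia)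
  · by_contra haq
    have hqp' : q < p := hqp.lt_of_ne fun h => haq (h ▸ hap)
    have : (n + 1 : ℕ∞) ≤ n := (add_le_add_left (hl q hq hlq haq) 1).trans
      ((Ideal.height_add_one_le_of_lt_of_isPrime hqp').trans (height_le_of_not_isMaximal hdim hpm))
    exact absurd (Nat.cast_le.1 (by exact_mod_cast this : ((n + 1 : ℕ) : ℕ∞) ≤ n)) (by lia)

end Height

section KoszulOfModule

lemma IsTorsionIdeal.support_subset_s6 {R : Type u} [CommRing R] {𝔞 : Ideal R} {M : Type u}
    [AddCommGroup M] [Module R M] (h : IsTorsionIdeal 𝔞 M) :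
    Module.support R M ⊆ PrimeSpectrum.zeroLocus 𝔞 := by
  intro p hp
  obtain ⟨m, hm⟩ := Module.mem_support_iff'.1 hp
  obtain ⟨t, ht⟩ := h m
  exact p.2.le_of_pow_le (n := t) fun a ha => by_contra fun hap => hm a hap (ht a ha)

universe w

variable {R : Type u} [CommRing R] [HasDerivedCategory.{w} (ModuleCat.{u} R)] {M : ModuleCat.{u} R}

lemma finite_hyperExt_single_of_finite_ext {N : ModuleCat.{u} R} {n : ℕ}
    (hM : ∀ i ≤ n, Module.Finite R (Abelian.Ext N M i)) (k : ℤ) (hk : k ≤ n) :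
    Module.Finite R (HyperExt N ((DerivedCategory.singleFunctor _ 0).obj M) k) := by
  obtain hneg | hpos := lt_or_ge k 0
  · have := subsingleton_hyperExt_single_of_neg N M hneg
    infer_instance
  · obtain ⟨i, rfl⟩ := Int.eq_ofNat_of_zero_le hpos
    have := hM i (by lia)
    exact .equiv (Abelian.Ext.homLinearEquiv (R := R))

variable {𝔞 : Ideal R}

lemma smul_id_single_quotient_eq_zero {x : R} (hx : x ∈ 𝔞) :
    x • 𝟙 ((DerivedCategory.singleFunctor (ModuleCat.{u} R) 0).obj (.of R (R ⧸ 𝔞))) = 0 := by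
  have h : x • 𝟙 (ModuleCat.of R (R ⧸ 𝔞)) = 0 := by
    ext : 1
    refine LinearMap.ext fun y => ?_
    have hx' : x ∈ Module.annihilator R (R ⧸ 𝔞) := by rwa [Ideal.annihilator_quotient]
    exact Module.mem_annihilator.1 hx' y
  rw [← (DerivedCategory.singleFunctor (ModuleCat.{u} R) 0).map_id, ← Functor.map_smul, h,
    Functor.map_zero]

variable [IsNoetherianRing R]

lemma finite_hyperExt_self_koszul_single_of_le {n : ℕ} {l : List R}
    (hrad : 𝔞 ≤ (Ideal.ofList l).radical)
    (hM : ∀ i ≤ n, Module.Finite R (Abelian.Ext (ModuleCat.of R (R ⧸ 𝔞)) M i)) (k : ℤ)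
    (hk : k ≤ n) :
    Module.Finite R (HyperExt (ModuleCat.of R R)
      (koszul l ((DerivedCategory.singleFunctor _ 0).obj M)) k) :=
  finite_hyperExt_self_of_finite_hyperExt_quotient
    (fun k hk N => subsingleton_shiftedHom_koszul_of_lt
      (fun _ => subsingleton_hyperExt_single_of_neg N M) l k hk)
    (fun k => hrad.trans
      (Ideal.radical_le_radical_iff.2 (ofList_le_radical_annihilator_shiftedHom_koszul l k)))
    (finite_shiftedHom_koszul (finite_hyperExt_single_of_finite_ext hM) l) k hk

lemma finite_hyperExt_self_koszul_single_succ
    (hM : Module.support R M ⊆ PrimeSpectrum.zeroLocus 𝔞) {x : R} {l : List R} (hx : x ∈ 𝔞)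
    (hl : ∀ p : Ideal R, p.IsPrime → 𝔞 ≤ p → ¬ p.IsMaximal →
      ∀ q : Ideal R, q.IsPrime → q ≤ p → Ideal.ofList l ≤ q → 𝔞 ≤ q)
    [Module.Finite R (HyperExt (ModuleCat.of R R)
      (koszul (x :: l) ((DerivedCategory.singleFunctor _ 0).obj M)) l.length)] :
    Module.Finite R (HyperExt (ModuleCat.of R R)
      (koszul (x :: l) ((DerivedCategory.singleFunctor _ 0).obj M)) (l.length + 1 : ℕ)) := by
  let K := koszul l ((DerivedCategory.singleFunctor _ 0).obj M)
  let N := HyperExt (ModuleCat.of R R) K l.length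
  have hN : Module.support R N ⊆ PrimeSpectrum.zeroLocus 𝔞 :=
    support_shiftedHom_koszul_subset
      (fun k => (support_hyperExt_self_single_subset M k).trans hM) l l.length
  have hfg : (Submodule.torsionBy R N x).FG :=
    have : Module.Finite R (HyperExt (ModuleCat.of R R) (smulFiber x K) l.length) := ‹_›
    fg_torsionBy_shiftedHom x _
  have : Module.Finite R (QuotSMulTop x N) := by
    refine finite_quotSMulTop_of_fg_torsionBy
      (hN.trans (PrimeSpectrum.zeroLocus_anti_mono (Set.singleton_subset_iff.2 hx)))
      (fun p hp hpm q hq hqp hNq => ?_) hfg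
    exact hl p.asIdeal p.2 (hN hp) hpm q hq hqp
      ((ofList_le_radical_annihilator_shiftedHom_koszul l _).trans (hq.radical_le_iff.2 hNq)) hx
  have : Subsingleton (HyperExt (ModuleCat.of R R) K (l.length + 1 : ℕ)) :=
    subsingleton_shiftedHom_koszul_of_gt (m := 0)
      (fun _ => subsingleton_hyperExt_self_single_of_pos M) l _ (by lia)
  exact finite_shiftedHom_smulFiber_of_quotSMulTop (K := K) x (n₀ := l.length) (by lia)

end KoszulOfModule

lemma finite_ext_of_finite_ext_of_le_jacobson {R : Type u} [CommRing R] [IsNoetherianRing R]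
    {𝔞 : Ideal R} {M : ModuleCat.{u} R} {n : ℕ} (hdim : ringKrullDim R ≤ (n + 1 : ℕ))
    (ha : 𝔞 ≤ Ring.jacobson R) (hsupp : Module.support R M ⊆ PrimeSpectrum.zeroLocus 𝔞)
    (hM : ∀ i ≤ n, Module.Finite R (Abelian.Ext (ModuleCat.of R (R ⧸ 𝔞)) M i)) (k : ℕ) :
    Module.Finite R (Abelian.Ext (ModuleCat.of R (R ⧸ 𝔞)) M k) := by
  let _ := HasDerivedCategory.standard (ModuleCat.{u} R)
  obtain ⟨x, l, rfl, hla, hrad, hl⟩ := exists_list_le_radical hdim ha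
  have hlow := finite_hyperExt_self_koszul_single_of_le hrad hM
  have hK (j : ℤ) : Module.Finite R (HyperExt (ModuleCat.of R R)
      (koszul (x :: l) ((DerivedCategory.singleFunctor _ 0).obj M)) j) := by
    obtain hj | rfl | hj : j ≤ l.length ∨ j = (l.length + 1 : ℕ) ∨ 0 + (x :: l).length < j := by
      simp only [List.length_cons]
      lia
    · exact hlow j hj
    · have := hlow l.length le_rfl
      exact finite_hyperExt_self_koszul_single_succ hsupp (hla x List.mem_cons_self) hl
    · have := subsingleton_shiftedHom_koszul_of_gt
        (fun _ => subsingleton_hyperExt_self_single_of_pos M) (x :: l) j hj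
      infer_instance
  have := finite_shiftedHom_of_finite_shiftedHom_koszul
    (fun y hy => smul_id_single_quotient_eq_zero (hla y hy))
    (finite_hyperExt (fun k hk N => subsingleton_shiftedHom_koszul_of_lt
      (fun _ => subsingleton_hyperExt_single_of_neg N M) (x :: l) k hk)
      (fun j _ => hK j) (.of R (R ⧸ 𝔞)) k le_rfl)
  exact .equiv (Abelian.Ext.homLinearEquiv (R := R)).symm

section Comparison
open Abelian

lemma finite_homology_iff_of_surjective_cycles {R : Type u} [CommRing R]
    (S : ShortComplex (ModuleCat.{u} R)) {E : Type u} [AddCommGroup E] [Module R E]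
    (q : LinearMap.ker S.g.hom →ₗ[R] E) (hq : Function.Surjective q)
    (hk : ∀ z, q z = 0 ↔ ∃ y, S.f.hom y = z.1) :
    Module.Finite R S.homology ↔ Module.Finite R E := by
  have hker : LinearMap.range S.moduleCatToCycles = LinearMap.ker q := by
    ext z
    rw [LinearMap.mem_ker, hk, LinearMap.mem_range]
    exact exists_congr fun y => Subtype.ext_iff
  let e : S.homology ≃ₗ[R] E := S.moduleCatHomologyIso.toLinearEquiv ≪≫ₗ
    Submodule.quotEquivOfEq _ _ hker ≪≫ₗ q.quotKerEquivOfSurjective hq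
  exact Module.Finite.equiv_iff e

variable {R : Type u} [CommRing R] {N : ModuleCat.{u} R} (P : ProjectiveResolution N)
  (M : ModuleCat.{u} R) (i : ℕ)

lemma extMk_zero_eq_zero {M : ModuleCat.{u} R} (f : P.complex.X 0 ⟶ M)
    (hf : P.complex.d 1 0 ≫ f = 0) (h : P.extMk f 1 rfl hf = 0) : f = 0 := by
  rw [← P.extEquivCohomologyClass.apply_eq_iff_eq,
    P.extEquivCohomologyClass_extMk, P.extEquivCohomologyClass_zero,
    CochainComplex.HomComplex.CohomologyClass.mk_eq_zero_iff,
    CochainComplex.HomComplex.Cocycle.toSingleMk_mem_coboundaries_iff _ _ _ _ _ 1 (by simp)] at h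
  obtain ⟨g, hg⟩ := h
  have hz : P.cochainComplex.d (-(0 : ℕ) : ℤ) 1 = 0 :=
    (P.cochainComplex.isZero_of_isStrictlyLE 0 1 (by simp)).eq_of_tgt _ _
  rw [hz, Limits.zero_comp] at hg
  exact (cancel_epi (P.cochainComplexXIso (-(0 : ℕ) : ℤ) 0 rfl).hom).1 (by rw [← hg]; simp)

/-- The linear map sending a cocycle in `Hom(P_i, M)` to its class in `Ext`. -/
noncomputable def cocycleToExt :
    LinearMap.ker (Linear.leftComp R M (P.complex.d (i + 1) i)) →ₗ[R] Abelian.Ext N M i where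
  toFun f := P.extMk f.1 (i + 1) rfl f.2
  map_add' f g := (P.add_extMk _ _ _ _ _ _).symm
  map_smul' r f := by
    refine Eq.trans ?_ ((P.extMk_comp_mk₀ f.1 (i + 1) rfl f.2 (r • 𝟙 M)).symm.trans
      (Ext.smul_eq_comp_mk₀ _ r).symm)
    congr 1

lemma cocycleToExt_surjective : Function.Surjective (cocycleToExt P M i) := by
  intro α
  obtain ⟨f, hf, rfl⟩ := P.extMk_surjective α (i + 1) rfl
  exact ⟨⟨f, hf⟩, rfl⟩

lemma cocycleToExt_eq_zero_iff (j : ℕ) (hj : (ComplexShape.up ℕ).prev i = j)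
    (f : LinearMap.ker (Linear.leftComp R M (P.complex.d (i + 1) i))) :
    cocycleToExt P M i f = 0 ↔ ∃ g, Linear.leftComp R M (P.complex.d i j) g = f.1 := by
  subst hj
  obtain _ | i := i
  · have hd : P.complex.d 0 ((ComplexShape.up ℕ).prev 0) = 0 :=
      HomologicalComplex.shape _ _ _ (by simp)
    simp only [hd, Linear.leftComp_apply, Limits.zero_comp, exists_const]
    refine ⟨fun h => (extMk_zero_eq_zero P f.1 f.2 h).symm, fun h => ?_⟩
    rw [show f = 0 from Subtype.ext h.symm, map_zero]
  · exact P.extMk_eq_zero_iff f.1 _ rfl f.2 _ (by simp)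

lemma finite_homology_linearYonedaObj_iff :
    Module.Finite R ((P.complex.linearYonedaObj R M).homology i) ↔
      Module.Finite R (Abelian.Ext N M i) := by
  let e := (P.complex.linearYonedaObj R M).isoSc' _ i (i + 1) rfl (by simp)
  refine (Module.Finite.equiv_iff (ShortComplex.homologyMapIso e).toLinearEquiv).trans ?_
  exact finite_homology_iff_of_surjective_cycles _ (cocycleToExt P M i)
    (cocycleToExt_surjective P M i) (cocycleToExt_eq_zero_iff P M i _ rfl)

lemma finite_extObj_iff {R : Type u} [CommRing R] (N M : ModuleCat.{u} R) (i : ℕ) :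
    Module.Finite R (extObj N M i) ↔ Module.Finite R (Abelian.Ext N M i) :=
  (Module.Finite.equiv_iff ((projectiveResolution N).isoExt i M).toLinearEquiv).trans
    (finite_homology_linearYonedaObj_iff (projectiveResolution N) M i)

end Comparison

theorem isCofinite_iff_of_local_dim_general {R : Type u} [CommRing R] [IsNoetherianRing R]
    (n : ℕ) (hdim : ringKrullDim R ≤ (n + 1 : ℕ)) (𝔞 : Ideal R) (ha : 𝔞 ≤ Ring.jacobson R)
    (M : ModuleCat.{u} R) (htor : IsTorsionIdeal 𝔞 M) :
    IsCofinite 𝔞 M ↔ ∀ i ≤ n, Module.Finite R (extIdeal 𝔞 i M) := by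
  refine ⟨fun h i _ => h.2 i, fun h => ⟨htor.support_subset_s6, fun i => ?_⟩⟩
  refine (finite_extObj_iff _ M i).2 (finite_ext_of_finite_ext_of_le_jacobson hdim ha
    htor.support_subset_s6 (fun j hj => ?_) i)
  exact (finite_extObj_iff _ M j).1 (h j hj)

/-- Yang–Shen, Lemma 3.5: let `(R, 𝔪)` be a noetherian local ring with `dim R = d ≥ 1` and `𝔞`
a proper ideal of `R`. An `𝔞`-torsion `R`-module `M` is `𝔞`-cofinite if and only if
`Ext^i_R(R/𝔞, M)` is finitely generated for all `i ≤ d - 1`. -/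
theorem isCofinite_iff_of_local_dim
    {R : Type u} [CommRing R] [IsNoetherianRing R] [IsLocalRing R]
    (d : ℕ) (hd : 1 ≤ d) (hdim : ringKrullDim R = d)
    (𝔞 : Ideal R) (ha : 𝔞 ≠ ⊤) (M : ModuleCat.{u} R) (htor : IsTorsionIdeal 𝔞 M) :
    IsCofinite 𝔞 M ↔ ∀ i : ℕ, i ≤ d - 1 → Module.Finite R (extIdeal 𝔞 i M) := by
  obtain ⟨n, rfl⟩ := Nat.exists_eq_add_of_le' hd
  exact isCofinite_iff_of_local_dim_general n hdim.le 𝔞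
    ((IsLocalRing.le_maximalIdeal ha).trans (IsLocalRing.ringJacobson_eq_maximalIdeal R).ge)
    M htor
end
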